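/- arXiv:1310.1042 — 3 statements merged into one kernel-verified Lean document; each statement's English description precedes it below -/
import Mathlib

section
/- For each integer m ≥ 2, there exists a cyclically 4-edge-connected cubic graph of order 8m whose circumference is exactly 7m + 2. -/
open SimpleGraph

/-- A cubic (3-regular) graph. -/
def IsCubic {V : Type*} (G : SimpleGraph V) : Prop := ∀ v, (G.neighborSet v).ncard = 3

/-- A graph contains a cycle. -/
def HasCycle {V : Type*} (G : SimpleGraph V) : Prop := ∃ (u : V) (w : G.Walk u u), w.IsCycle

/-- The circumference of a graph: the length of a longest cycle. -/
noncomputable def circumference {V : Type*} (G : SimpleGraph V) : ℕ :=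
  sSup {n | ∃ (u : V) (w : G.Walk u u), w.IsCycle ∧ w.length = n}

/-- A graph is cyclically k-edge-connected if every edge cut separating two
cycle-containing parts has at least k edges. -/
def CyclicallyEdgeConnected {V : Type*} (G : SimpleGraph V) (k : ℕ) : Prop :=
  ∀ S : Set V, HasCycle (G.induce S) → HasCycle (G.induce Sᶜ) →
    k ≤ {e ∈ G.edgeSet | ∃ a ∈ S, ∃ b ∈ Sᶜ, e = s(a, b)}.ncard


/-! ### The graph -/

/-- index of first inner neighbour -/
def nbA : Fin 8 → Fin 8 := ![4, 5, 4, 6, 0, 1, 1, 0]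
/-- index of second inner neighbour -/
def nbB : Fin 8 → Fin 8 := ![7, 6, 5, 7, 2, 2, 3, 3]
/-- index of third neighbour -/
def nbC : Fin 8 → Fin 8 := ![2, 3, 0, 1, 6, 7, 4, 5]
/-- block shift of third neighbour -/
def sh {m : ℕ} : Fin 8 → ZMod m := ![-1, -1, 1, 1, 0, 0, 0, 0]

/-- The circular chain of `m` copies of the Petersen graph minus two adjacent vertices. -/
def chainG (m : ℕ) : SimpleGraph (ZMod m × Fin 8) where
  Adj u v := v = (u.1, nbA u.2) ∨ v = (u.1, nbB u.2) ∨ v = (u.1 + sh u.2, nbC u.2)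
  symm := ⟨by
    rintro ⟨i, x⟩ v (rfl | rfl | rfl) <;> fin_cases x <;> simp [nbA, nbB, nbC, sh]⟩
  loopless := ⟨by
    rintro ⟨i, x⟩ h
    have key : ∀ x, x ≠ nbA x ∧ x ≠ nbB x ∧ x ≠ nbC x := by decide
    obtain ⟨k1, k2, k3⟩ := key x
    rcases h with h | h | h
    · exact k1 (congrArg Prod.snd h)
    · exact k2 (congrArg Prod.snd h)
    · exact k3 (congrArg Prod.snd h)⟩

theorem chain_adj {m : ℕ} (i : ZMod m) (x : Fin 8) (v : ZMod m × Fin 8) :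
    (chainG m).Adj (i, x) v ↔
      v = (i, nbA x) ∨ v = (i, nbB x) ∨ v = (i + sh x, nbC x) := Iff.rfl

theorem nb_distinct : ∀ x, nbA x ≠ nbB x ∧ nbA x ≠ nbC x ∧ nbB x ≠ nbC x := by decide

theorem chain_cubic (m : ℕ) : IsCubic (chainG m) := by
  rintro ⟨i, x⟩
  have : (chainG m).neighborSet (i, x) = {(i, nbA x), (i, nbB x), (i + sh x, nbC x)} := by
    ext v
    simp [chain_adj]
  rw [this, Set.ncard_eq_three]
  obtain ⟨h1, h2, h3⟩ := nb_distinct x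
  exact ⟨_, _, _, by simp [h1], by simp [h2], by simp [h3], rfl⟩

/-! ### Finite facts -/

def ex2 (a b c : Bool) : Bool := (a.toNat + b.toNat + c.toNat) == 2
def ge2 (a b c : Bool) : Bool := decide (2 ≤ a.toNat + b.toNat + c.toNat)

def okcol (t l0 l1 r2 r3 e04 e07 e15 e16 e24 e25 e36 e37 e46 e57 : Bool)
    (c : Fin 8 → Bool) : Bool :=
  (!l0 || !c 0) && (!l1 || !c 1) && (!r2 || c 2 == t) && (!r3 || c 3 == t) &&
  (!e04 || c 0 == c 4) && (!e07 || c 0 == c 7) && (!e15 || c 1 == c 5) && (!e16 || c 1 == c 6) &&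
  (!e24 || c 2 == c 4) && (!e25 || c 2 == c 5) && (!e36 || c 3 == c 6) && (!e37 || c 3 == c 7) &&
  (!e46 || c 4 == c 6) && (!e57 || c 5 == c 7) &&
  (t || (decide (∃ k, c k = true) && decide (∃ k, c k = false)))

set_option synthInstance.maxSize 100000 in
set_option synthInstance.maxHeartbeats 1000000 in
theorem full_split : ∀ e04 e07 l0 : Bool, ex2 e04 e07 l0 = true →
    ∀ e24 e46 : Bool, ex2 e04 e24 e46 = true →
    ∀ e25 r2 : Bool, ex2 e24 e25 r2 = true →
    ∀ e15 e57 : Bool, ex2 e15 e25 e57 = true →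
    ∀ e37 : Bool, ex2 e07 e37 e57 = true →
    ∀ e36 r3 : Bool, ex2 e36 e37 r3 = true →
    ∀ e16 : Bool, ex2 e16 e36 e46 = true →
    ∀ l1 : Bool, ex2 e15 e16 l1 = true →
    ∃ t : Bool, ∃ c : Fin 8 → Bool,
      okcol t l0 l1 r2 r3 e04 e07 e15 e16 e24 e25 e36 e37 e46 e57 c = true := by
  decide +kernel

def cutN (x : Fin 8 → Bool) (y0 y1 : Bool) : ℕ :=
  (x 0 ^^ x 4).toNat + (x 0 ^^ x 7).toNat + (x 1 ^^ x 5).toNat + (x 1 ^^ x 6).toNat +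
  (x 2 ^^ x 4).toNat + (x 2 ^^ x 5).toNat + (x 3 ^^ x 6).toNat + (x 3 ^^ x 7).toNat +
  (x 4 ^^ x 6).toNat + (x 5 ^^ x 7).toNat + (x 2 ^^ y0).toNat + (x 3 ^^ y1).toNat

theorem cut_two : ∀ x : Fin 8 → Bool, ∀ y0 y1, cutN x y0 y1 < 2 →
    (∀ k, x k = x 0) ∧ (y0 = y1 → x 0 = y0) := by decide +kernel

def deg2 (y : Fin 8 → Bool) : Bool :=
  (!y 0 || ge2 (y 4) (y 7) false) && (!y 1 || ge2 (y 5) (y 6) false) &&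
  (!y 2 || ge2 (y 4) (y 5) false) && (!y 3 || ge2 (y 6) (y 7) false) &&
  (!y 4 || ge2 (y 0) (y 2) (y 6)) && (!y 5 || ge2 (y 1) (y 2) (y 7)) &&
  (!y 6 || ge2 (y 1) (y 3) (y 4)) && (!y 7 || ge2 (y 0) (y 3) (y 5))

theorem cut_four : ∀ y : Fin 8 → Bool, (∃ k, y k = true) → deg2 y = true →
    ∀ x : Fin 8 → Bool, (∀ k, y k = true → x k = true) →
    4 ≤ cutN x false false + ((x 0).toNat + (x 1).toNat) := by decide +kernel

theorem card_ex2 {V : Type*} {A : Set V} {a b c : V} (hab : a ≠ b) (hac : a ≠ c) (hbc : b ≠ c)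
    (hA : ∀ v ∈ A, v = a ∨ v = b ∨ v = c) (h : A.ncard = 2)
    [Decidable (a ∈ A)] [Decidable (b ∈ A)] [Decidable (c ∈ A)] :
    ex2 (decide (a ∈ A)) (decide (b ∈ A)) (decide (c ∈ A)) = true := by
  classical
  have e : A = ((({a, b, c} : Finset V).filter (· ∈ A) : Finset V) : Set V) := by
    ext v; simp; exact fun h => hA v h
  rw [e, Set.ncard_coe_finset] at h
  simp only [Finset.card_filter] at h
  rw [Finset.sum_insert (by simp [hab, hac]), Finset.sum_insert (by simp [hbc]),
    Finset.sum_singleton] at h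
  by_cases h1 : a ∈ A <;> by_cases h2 : b ∈ A <;> by_cases h3 : c ∈ A <;>
    simp [h1, h2, h3, ex2] at h ⊢

/-! ### Existence of the long cycle -/

theorem long_path (m : ℕ) (k : ℕ) (hk : k < m) :
    ∃ p : (chainG m).Walk ((k : ZMod m), 2) ((k : ZMod m), 3),
      p.IsPath ∧ p.length = 7 * k + 7 ∧ ∀ v ∈ p.support, ∃ j : ℕ, j ≤ k ∧ v.1 = (j : ZMod m) := by
  induction k with
  | zero =>
    have h1 : (chainG m).Adj ((0 : ℕ), 2) ((0 : ℕ), 4) := by simp [chain_adj, nbA, nbB, nbC]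
    have h2 : (chainG m).Adj ((0 : ℕ), 4) ((0 : ℕ), 0) := by simp [chain_adj, nbA, nbB, nbC]
    have h3 : (chainG m).Adj ((0 : ℕ), 0) ((0 : ℕ), 7) := by simp [chain_adj, nbA, nbB, nbC]
    have h4 : (chainG m).Adj ((0 : ℕ), 7) ((0 : ℕ), 5) := by simp [chain_adj, nbA, nbB, nbC, sh]
    have h5 : (chainG m).Adj ((0 : ℕ), 5) ((0 : ℕ), 1) := by simp [chain_adj, nbA, nbB, nbC]
    have h6 : (chainG m).Adj ((0 : ℕ), 1) ((0 : ℕ), 6) := by simp [chain_adj, nbA, nbB, nbC]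
    have h7 : (chainG m).Adj ((0 : ℕ), 6) ((0 : ℕ), 3) := by simp [chain_adj, nbA, nbB, nbC]
    refine ⟨.cons h1 (.cons h2 (.cons h3 (.cons h4 (.cons h5 (.cons h6 (.cons h7 .nil)))))),
      ?_, ?_, ?_⟩
    · rw [Walk.isPath_def]
      simp
    · simp
    · intro v hv
      refine ⟨0, le_rfl, ?_⟩
      simp at hv
      rcases hv with h | h | h | h | h | h | h | h <;> simp [h]
  | succ k ih =>
    obtain ⟨p, hp, hl, hs⟩ := ih (by omega)
    have hn : ∀ x, (((k + 1 : ℕ) : ZMod m), x) ∉ p.support := by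
      intro x hx
      obtain ⟨j, hj, e⟩ := hs _ hx
      simp only at e
      rw [ZMod.natCast_eq_natCast_iff', Nat.mod_eq_of_lt hk, Nat.mod_eq_of_lt (by omega)] at e
      omega
    have h1 : (chainG m).Adj ((k + 1 : ℕ), 2) ((k + 1 : ℕ), 5) := by simp [chain_adj, nbA, nbB, nbC]
    have h2 : (chainG m).Adj ((k + 1 : ℕ), 5) ((k + 1 : ℕ), 7) := by
      simp [chain_adj, nbA, nbB, nbC, sh]
    have h3 : (chainG m).Adj ((k + 1 : ℕ), 7) ((k + 1 : ℕ), 0) := by simp [chain_adj, nbA, nbB, nbC]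
    have h4 : (chainG m).Adj ((k + 1 : ℕ), 0) ((k : ℕ), 2) := by
      simp [chain_adj, nbA, nbB, nbC, sh]
    have h5 : (chainG m).Adj ((k : ℕ), 3) ((k + 1 : ℕ), 1) := by
      simp [chain_adj, nbA, nbB, nbC, sh]
    have h6 : (chainG m).Adj ((k + 1 : ℕ), 1) ((k + 1 : ℕ), 6) := by simp [chain_adj, nbA, nbB, nbC]
    have h7 : (chainG m).Adj ((k + 1 : ℕ), 6) ((k + 1 : ℕ), 3) := by simp [chain_adj, nbA, nbB, nbC]
    refine ⟨.cons h1 (.cons h2 (.cons h3 (.cons h4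
      (p.append (.cons h5 (.cons h6 (.cons h7 .nil))))))), ?_, ?_, ?_⟩
    · have hnd := hp.support_nodup
      rw [Walk.isPath_def]
      simp only [Walk.support_cons, Walk.support_append, Walk.support_nil, List.tail_cons,
        List.nodup_cons, List.nodup_append, List.mem_cons, List.mem_append]
      refine ⟨?_, ?_, ?_, ?_, hnd, ?_, ?_⟩
      · simp [-Nat.cast_add, hn]
      · simp [-Nat.cast_add, hn]
      · simp [-Nat.cast_add, hn]
      · simp [-Nat.cast_add, hn]
      · simp
      · rintro a ha b (rfl | rfl | rfl | hb) rfl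
        · exact hn _ ha
        · exact hn _ ha
        · exact hn _ ha
        · simp at hb
    · simp [hl]; omega
    · intro v hv
      simp only [Walk.support_cons, Walk.support_append, Walk.support_nil, List.tail_cons,
        List.mem_cons, List.mem_append] at hv
      rcases hv with h | h | h | h | h | h | h | h | h
      on_goal 5 => 
        obtain ⟨j, hj, e⟩ := hs v h
        exact ⟨j, by omega, e⟩
      on_goal 8 => simp at h
      all_goals exact ⟨k + 1, le_rfl, by rw [h]⟩

theorem long_cycle (m : ℕ) (hm : 2 ≤ m) :
    ∃ (u : _) (w : (chainG m).Walk u u), w.IsCycle ∧ w.length = 7 * m + 2 := by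
  obtain ⟨k, rfl⟩ := Nat.exists_eq_add_of_le' hm
  obtain ⟨p, hp, hl, hs⟩ := long_path (k + 2) k (by omega)
  have hn : ∀ x, (((k + 1 : ℕ) : ZMod (k + 2)), x) ∉ p.support := by
    intro x hx
    obtain ⟨j, hj, e⟩ := hs _ hx
    simp only at e
    rw [ZMod.natCast_eq_natCast_iff', Nat.mod_eq_of_lt (by omega), Nat.mod_eq_of_lt (by omega)] at e
    omega
  have h0 : (chainG (k + 2)).Adj ((k + 1 : ℕ), 0) ((k : ℕ), 2) := by
    simp [chain_adj, nbA, nbB, nbC, sh]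
  have h1 : (chainG (k + 2)).Adj ((k : ℕ), 3) ((k + 1 : ℕ), 1) := by
    simp [chain_adj, nbA, nbB, nbC, sh]
  have h2 : (chainG (k + 2)).Adj ((k + 1 : ℕ), 1) ((k + 1 : ℕ), 5) := by
    simp [chain_adj, nbA, nbB, nbC, sh]
  have h3 : (chainG (k + 2)).Adj ((k + 1 : ℕ), 5) ((k + 1 : ℕ), 2) := by
    simp [chain_adj, nbA, nbB, nbC, sh]
  have h4 : (chainG (k + 2)).Adj ((k + 1 : ℕ), 2) ((k + 1 : ℕ), 4) := by
    simp [chain_adj, nbA, nbB, nbC, sh]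
  have h5 : (chainG (k + 2)).Adj ((k + 1 : ℕ), 4) ((k + 1 : ℕ), 6) := by
    simp [chain_adj, nbA, nbB, nbC, sh]
  have h6 : (chainG (k + 2)).Adj ((k + 1 : ℕ), 6) ((k + 1 : ℕ), 3) := by
    simp [chain_adj, nbA, nbB, nbC, sh]
  have h7 : (chainG (k + 2)).Adj ((k + 1 : ℕ), 3) ((k + 1 : ℕ), 7) := by
    simp [chain_adj, nbA, nbB, nbC, sh]
  have h8 : (chainG (k + 2)).Adj ((k + 1 : ℕ), 7) ((k + 1 : ℕ), 0) := by
    simp [chain_adj, nbA, nbB, nbC, sh]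
  set q := p.append (.cons h1 (.cons h2 (.cons h3 (.cons h4 (.cons h5 (.cons h6 (.cons h7
    (.cons h8 .nil)))))))) with hq
  have hql : q.length = 7 * k + 15 := by simp [hq, hl]
  have hqp : q.IsPath := by
    have hnd := hp.support_nodup
    rw [Walk.isPath_def, hq]
    simp only [Walk.support_cons, Walk.support_append, Walk.support_nil, List.tail_cons,
      List.nodup_append]
    refine ⟨hnd, ?_, ?_⟩
    · simp
    · rintro a ha b hb rfl
      simp only [List.mem_cons, List.not_mem_nil, or_false] at hb
      rcases hb with rfl | rfl | rfl | rfl | rfl | rfl | rfl | rfl <;> exact hn _ ha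
  refine ⟨_, .cons h0 q, ?_, by simp [hql]; omega⟩
  rw [Walk.cons_isCycle_iff]
  refine ⟨hqp, fun h => ?_⟩
  rw [Sym2.eq_swap] at h
  have := hqp.length_eq_one_of_mem_edges h
  omega

/-! ### Upper bound on cycle lengths -/

theorem walk_const {V α : Type*} {G : SimpleGraph V} (f : V → α) {u v : V} (p : G.Walk u v)
    (h : ∀ x y, s(x, y) ∈ p.edges → f x = f y) : ∀ x ∈ p.support, f x = f u := by
  induction p with
  | nil => intro x hx; simp at hx; rw [hx]
  | cons hadj p ih =>
    intro x hx
    rw [Walk.support_cons, List.mem_cons] at hx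
    rcases hx with rfl | hx
    · rfl
    · rw [ih (fun a b hab => h a b (by simp [hab])) x hx]
      exact (h _ _ (by simp)).symm

theorem cycle_const {V α : Type*} {G : SimpleGraph V} (f : V → α) {u : V} (w : G.Walk u u)
    (h : ∀ x y, w.toSubgraph.Adj x y → f x = f y) : ∀ x ∈ w.support, f x = f u :=
  walk_const f w fun x y hxy => h x y (Walk.adj_toSubgraph_iff_mem_edges.2 hxy)

theorem dor {p q : Prop} [Decidable p] (h : decide p = false ∨ q) (hp : p) : q := by
  simpa [hp] using h

section upper

variable {m : ℕ} {u : ZMod m × Fin 8} (w : (chainG m).Walk u u)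

theorem vertex_ex2 (hw : w.IsCycle) (i : ZMod m) (x : Fin 8) (hx : (i, x) ∈ w.support)
    [DecidableRel w.toSubgraph.Adj] :
    ex2 (decide (w.toSubgraph.Adj (i, x) (i, nbA x))) (decide (w.toSubgraph.Adj (i, x) (i, nbB x)))
      (decide (w.toSubgraph.Adj (i, x) (i + sh x, nbC x))) = true := by
  obtain ⟨h1, h2, h3⟩ := nb_distinct x
  classical
  have := card_ex2 (A := w.toSubgraph.neighborSet (i, x)) (a := (i, nbA x)) (b := (i, nbB x))
    (c := (i + sh x, nbC x)) (by simp [h1]) (by simp [h2]) (by simp [h3])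
    (fun v hv => (chain_adj i x v).1 (w.toSubgraph.adj_sub hv))
    (hw.ncard_neighborSet_toSubgraph_eq_two hx)
  simpa using this

theorem inner_of_list {f : Fin 8 → Bool} {C : ZMod m × Fin 8 → ZMod m × Fin 8 → Prop}
    (hC : ∀ a b, C a b → C b a)
    (i : ZMod m)
    (h04 : C (i, 0) (i, 4) → f 0 = f 4) (h07 : C (i, 0) (i, 7) → f 0 = f 7)
    (h15 : C (i, 1) (i, 5) → f 1 = f 5) (h16 : C (i, 1) (i, 6) → f 1 = f 6)
    (h24 : C (i, 2) (i, 4) → f 2 = f 4) (h25 : C (i, 2) (i, 5) → f 2 = f 5)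
    (h36 : C (i, 3) (i, 6) → f 3 = f 6) (h37 : C (i, 3) (i, 7) → f 3 = f 7)
    (h46 : C (i, 4) (i, 6) → f 4 = f 6) (h57 : C (i, 5) (i, 7) → f 5 = f 7) (x : Fin 8) :
    (C (i, x) (i, nbA x) → f x = f (nbA x)) ∧ (C (i, x) (i, nbB x) → f x = f (nbB x)) ∧
    (4 ≤ x → C (i, x) (i, nbC x) → f x = f (nbC x)) := by
  refine ⟨?_, ?_, ?_⟩
  · fin_cases x
    · exact h04
    · exact h15
    · exact h24
    · exact h36
    · exact fun h => (h04 (hC _ _ h)).symm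
    · exact fun h => (h15 (hC _ _ h)).symm
    · exact fun h => (h16 (hC _ _ h)).symm
    · exact fun h => (h07 (hC _ _ h)).symm
  · fin_cases x
    · exact h07
    · exact h16
    · exact h25
    · exact h37
    · exact fun h => (h24 (hC _ _ h)).symm
    · exact fun h => (h25 (hC _ _ h)).symm
    · exact fun h => (h36 (hC _ _ h)).symm
    · exact fun h => (h37 (hC _ _ h)).symm
  · fin_cases x
    · exact fun h => absurd h (by decide)
    · exact fun h => absurd h (by decide)
    · exact fun h => absurd h (by decide)
    · exact fun h => absurd h (by decide)
    · exact fun _ => h46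
    · exact fun _ => h57
    · exact fun _ h => (h46 (hC _ _ h)).symm
    · exact fun _ h => (h57 (hC _ _ h)).symm

/-- The colouring of a fragment which is fully covered by the cycle. -/
theorem full_color_aux (hw : w.IsCycle) (i : ZMod m) (hi : ∀ x, (i, x) ∈ w.support) :
    ∃ (t : Bool) (c : Fin 8 → Bool),
      (∀ x, (w.toSubgraph.Adj (i, x) (i, nbA x) → c x = c (nbA x)) ∧
        (w.toSubgraph.Adj (i, x) (i, nbB x) → c x = c (nbB x)) ∧
        (4 ≤ x → w.toSubgraph.Adj (i, x) (i, nbC x) → c x = c (nbC x))) ∧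
      (w.toSubgraph.Adj (i, 0) (i - 1, 2) → c 0 = false) ∧
      (w.toSubgraph.Adj (i, 1) (i - 1, 3) → c 1 = false) ∧
      (w.toSubgraph.Adj (i, 2) (i + 1, 0) → c 2 = t) ∧
      (w.toSubgraph.Adj (i, 3) (i + 1, 1) → c 3 = t) ∧
      (t = false → (∃ k, c k = true) ∧ (∃ k, c k = false)) := by
  classical
  have v := fun x => vertex_ex2 w hw i x (hi x)
  have v0 := v 0
  have v1 := v 1
  have v2 := v 2
  have v3 := v 3
  have v4 := v 4
  have v5 := v 5
  have v6 := v 6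
  have v7 := v 7
  have sy : ∀ a b, w.toSubgraph.Adj (i, a) (i, b) ↔ w.toSubgraph.Adj (i, b) (i, a) :=
    fun a b => w.toSubgraph.adj_comm _ _
  simp only [nbA, nbB, nbC, sh, Matrix.cons_val, add_zero] at v0 v1 v2 v3 v4 v5 v6 v7
  simp only [sy 4 0, sy 4 2, sy 5 1, sy 5 2, sy 6 1, sy 6 3, sy 6 4, sy 7 0, sy 7 3, sy 7 5]
    at v0 v1 v2 v3 v4 v5 v6 v7
  obtain ⟨t, c, h⟩ := full_split _ _ _ v0 _ _ v4 _ _ v2 _ _ v5 _ v7 _ _ v3 _ v6 _ v1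
  simp only [okcol, Bool.and_eq_true, Bool.or_eq_true, Bool.not_eq_true',
    beq_iff_eq, decide_eq_true_eq] at h
  obtain ⟨⟨⟨⟨⟨⟨⟨⟨⟨⟨⟨⟨⟨⟨l0, l1⟩, r2⟩, r3⟩, e04⟩, e07⟩, e15⟩, e16⟩, e24⟩, e25⟩, e36⟩, e37⟩, e46⟩, e57⟩, ht⟩ := h
  refine ⟨t, c, inner_of_list (C := w.toSubgraph.Adj) (fun a b h => h.symm) i
    (dor e04) (dor e07) (dor e15) (dor e16) (dor e24) (dor e25) (dor e36) (dor e37) (dor e46)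
    (dor e57), ?_, ?_, dor r2, dor r3, ?_⟩
  · rw [sub_eq_add_neg]; exact dor l0
  · rw [sub_eq_add_neg]; exact dor l1
  · intro h0
    rcases ht with h | h
    · simp [h0] at h
    · exact h

/-- To check that a function is invariant along the cycle it suffices to check
inner edges and links to the right. -/
theorem invariant_of {α : Type*} (f : ZMod m × Fin 8 → α)
    (h : ∀ i x, (w.toSubgraph.Adj (i, x) (i, nbA x) → f (i, x) = f (i, nbA x)) ∧
        (w.toSubgraph.Adj (i, x) (i, nbB x) → f (i, x) = f (i, nbB x)) ∧
        (4 ≤ x → w.toSubgraph.Adj (i, x) (i, nbC x) → f (i, x) = f (i, nbC x)))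
    (h2 : ∀ i, w.toSubgraph.Adj (i, 2) (i + 1, 0) → f (i, 2) = f (i + 1, 0))
    (h3 : ∀ i, w.toSubgraph.Adj (i, 3) (i + 1, 1) → f (i, 3) = f (i + 1, 1)) :
    ∀ x ∈ w.support, f x = f u := by
  apply cycle_const
  rintro ⟨i, x⟩ v hv
  rcases (chain_adj i x v).1 (w.toSubgraph.adj_sub hv) with rfl | rfl | rfl
  · exact (h i x).1 hv
  · exact (h i x).2.1 hv
  · by_cases hx : 4 ≤ x
    · have e : (sh x : ZMod m) = 0 := by
        revert hx; fin_cases x <;> simp [sh]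
      rw [e, add_zero] at hv ⊢
      exact (h i x).2.2 hx hv
    · have hx' : x = 0 ∨ x = 1 ∨ x = 2 ∨ x = 3 := by
        clear hv; revert hx; revert x; decide
      rcases hx' with rfl | rfl | rfl | rfl
      · have := h2 (i + -1)
        simp only [neg_add_cancel_right] at this
        exact (this hv.symm).symm
      · have := h3 (i + -1)
        simp only [neg_add_cancel_right] at this
        exact (this hv.symm).symm
      · exact h2 i hv
      · exact h3 i hv

theorem full_color (hm : 2 ≤ m) (hw : w.IsCycle) (i : ZMod m) (hi : ∀ x, (i, x) ∈ w.support) :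
    ∃ (c : Fin 8 → Bool),
      (∀ x, (w.toSubgraph.Adj (i, x) (i, nbA x) → c x = c (nbA x)) ∧
        (w.toSubgraph.Adj (i, x) (i, nbB x) → c x = c (nbB x)) ∧
        (4 ≤ x → w.toSubgraph.Adj (i, x) (i, nbC x) → c x = c (nbC x))) ∧
      (w.toSubgraph.Adj (i, 0) (i - 1, 2) → c 0 = false) ∧
      (w.toSubgraph.Adj (i, 1) (i - 1, 3) → c 1 = false) ∧
      (w.toSubgraph.Adj (i, 2) (i + 1, 0) → c 2 = true) ∧
      (w.toSubgraph.Adj (i, 3) (i + 1, 1) → c 3 = true) := by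
  classical
  obtain ⟨t, c, hin, l0, l1, r2, r3, ht⟩ := full_color_aux w hw i hi
  cases t with
  | true => exact ⟨c, hin, l0, l1, r2, r3⟩
  | false =>
    exfalso
    have : Fact (1 < m) := ⟨hm⟩
    have key := invariant_of w (fun v => decide (v.1 = i) && c v.2) (by
      intro j x
      by_cases hj : j = i
      · subst hj
        simpa using hin x
      · simp [hj]) (by
      intro j hj
      by_cases h : j = i
      · subst h
        simp [r2 hj]
      · by_cases h' : j + 1 = i
        · subst h'
          have := l0 (by simpa using hj.symm)
          simp [this, h]
        · simp [h, h']) (by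
      intro j hj
      by_cases h : j = i
      · subst h
        simp [r3 hj]
      · by_cases h' : j + 1 = i
        · subst h'
          have := l1 (by simpa using hj.symm)
          simp [this, h]
        · simp [h, h'])
    obtain ⟨⟨a, ha⟩, ⟨b, hb⟩⟩ := ht rfl
    have h1 := key _ (hi a)
    have h2 := key _ (hi b)
    rw [← h2] at h1
    simp [ha, hb] at h1

theorem full_le_two (hm : 2 ≤ m) (hw : w.IsCycle) (F : Finset (ZMod m))
    (hF : ∀ i ∈ F, ∀ x, (i, x) ∈ w.support) : F.card ≤ 2 := by
  classical
  have : NeZero m := ⟨by omega⟩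
  have hc : ∀ i, ∃ c : Fin 8 → Bool, i ∈ F →
      ((∀ x, (w.toSubgraph.Adj (i, x) (i, nbA x) → c x = c (nbA x)) ∧
        (w.toSubgraph.Adj (i, x) (i, nbB x) → c x = c (nbB x)) ∧
        (4 ≤ x → w.toSubgraph.Adj (i, x) (i, nbC x) → c x = c (nbC x))) ∧
      (w.toSubgraph.Adj (i, 0) (i - 1, 2) → c 0 = false) ∧
      (w.toSubgraph.Adj (i, 1) (i - 1, 3) → c 1 = false) ∧
      (w.toSubgraph.Adj (i, 2) (i + 1, 0) → c 2 = true) ∧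
      (w.toSubgraph.Adj (i, 3) (i + 1, 1) → c 3 = true)) := by
    intro i
    by_cases hi : i ∈ F
    · obtain ⟨c, h⟩ := full_color w hm hw i (hF i hi)
      exact ⟨c, fun _ => h⟩
    · exact ⟨fun _ => false, fun h => absurd h hi⟩
  choose col hcol using hc
  set M : ℕ → ℕ := fun v => (F.filter (fun j => j.val < v)).card with hM
  have M0 : M 0 = 0 := by simp [hM]
  have Mm : M m = F.card := by
    simp only [hM]
    rw [Finset.filter_true_of_mem]
    intro j _
    exact ZMod.val_lt j
  have Ms : ∀ i : ZMod m, M (i.val + 1) = M i.val + if i ∈ F then 1 else 0 := by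
    intro i
    simp only [hM]
    by_cases hi : i ∈ F
    · have : F.filter (fun j => j.val < i.val + 1) =
          insert i (F.filter (fun j => j.val < i.val)) := by
        ext j
        simp only [Finset.mem_filter, Finset.mem_insert]
        constructor
        · rintro ⟨h1, h2⟩
          by_cases h : j.val = i.val
          · left; exact ZMod.val_injective m h
          · right; exact ⟨h1, by omega⟩
        · rintro (rfl | ⟨h1, h2⟩)
          · exact ⟨hi, by omega⟩
          · exact ⟨h1, by omega⟩
      rw [this, Finset.card_insert_of_notMem (by simp)]
      simp [hi]
    · simp only [hi, if_false, add_zero]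
      congr 1
      ext j
      simp only [Finset.mem_filter]
      constructor
      · rintro ⟨h1, h2⟩
        refine ⟨h1, ?_⟩
        by_contra h
        exact hi (by rwa [← ZMod.val_injective m (show j.val = i.val by omega)])
      · rintro ⟨h1, h2⟩
        exact ⟨h1, by omega⟩
  have Mmono : Monotone M := by
    intro a b hab
    apply Finset.card_le_card
    intro j
    simp only [Finset.mem_filter]
    rintro ⟨h1, h2⟩
    exact ⟨h1, by omega⟩
  have Mstep : ∀ i : ZMod m, (M (i + 1).val : ZMod F.card) =
      M i.val + if i ∈ F then 1 else 0 := by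
    intro i
    have h1 : ((M (i.val + 1) : ℕ) : ZMod F.card) = M i.val + if i ∈ F then 1 else 0 := by
      rw [Ms i]; push_cast; rfl
    rw [← h1]
    have hlt := ZMod.val_lt i
    by_cases h : i.val + 1 < m
    · have : (i + 1).val = i.val + 1 := by
        have : Fact (1 < m) := ⟨hm⟩
        rw [ZMod.val_add_of_lt] <;> rw [ZMod.val_one]
        exact h
      rw [this]
    · have e : i.val + 1 = m := by omega
      have : i + 1 = 0 := by
        have := congrArg (Nat.cast : ℕ → ZMod m) e
        simpa using this
      rw [this, e, Mm]
      simp [M0]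
  set f : ZMod m × Fin 8 → ZMod F.card := fun v =>
    M v.1.val + if v.1 ∈ F ∧ col v.1 v.2 = true then 1 else 0 with hf
  have hconst : ∀ x ∈ w.support, f x = f u := by
    apply invariant_of
    · intro i x
      by_cases hi : i ∈ F
      · obtain ⟨a, b, c⟩ := (hcol i hi).1 x
        refine ⟨fun h => ?_, fun h => ?_, fun h' h => ?_⟩
        · simp only [hf, a h]
        · simp only [hf, b h]
        · simp only [hf, c h' h]
      · simp [hf, hi]
    · intro i h
      have e1 : i ∈ F → col i 2 = true := fun hi => (hcol i hi).2.2.2.1 h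
      have e2 : i + 1 ∈ F → col (i + 1) 0 = false := fun hi =>
        (hcol _ hi).2.1 (by simpa using h.symm)
      have e3 : (i ∈ F ∧ col i 2 = true) ↔ i ∈ F := ⟨fun h => h.1, fun h => ⟨h, e1 h⟩⟩
      have e4 : ¬ (i + 1 ∈ F ∧ col (i + 1) 0 = true) := by
        rintro ⟨a, b⟩; rw [e2 a] at b; exact absurd b (by decide)
      simp only [hf, Mstep, e3, e4, if_false, add_zero]
    · intro i h
      have e1 : i ∈ F → col i 3 = true := fun hi => (hcol i hi).2.2.2.2 h
      have e2 : i + 1 ∈ F → col (i + 1) 1 = false := fun hi =>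
        (hcol _ hi).2.2.1 (by simpa using h.symm)
      have e3 : (i ∈ F ∧ col i 3 = true) ↔ i ∈ F := ⟨fun h => h.1, fun h => ⟨h, e1 h⟩⟩
      have e4 : ¬ (i + 1 ∈ F ∧ col (i + 1) 1 = true) := by
        rintro ⟨a, b⟩; rw [e2 a] at b; exact absurd b (by decide)
      simp only [hf, Mstep, e3, e4, if_false, add_zero]
  have Mlt : ∀ i ∈ F, ∀ b, i.val < b → M i.val < M b := by
    intro i hi b hb
    have h1 := Ms i
    have h2 : M (i.val + 1) ≤ M b := Mmono hb
    simp [hi] at h1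
    omega
  have Mlt' : ∀ i ∈ F, M i.val < F.card := by
    intro i hi
    rw [← Mm]
    exact Mlt i hi m (ZMod.val_lt i)
  have hinj : Set.InjOn (fun i : ZMod m => (M i.val : ZMod F.card)) F := by
    intro i hi j hj hij
    simp only at hij
    rw [ZMod.natCast_eq_natCast_iff', Nat.mod_eq_of_lt (Mlt' i hi),
      Nat.mod_eq_of_lt (Mlt' j hj)] at hij
    apply ZMod.val_injective m
    rcases lt_trichotomy i.val j.val with h | h | h
    · have := Mlt i hi _ h; omega
    · exact h
    · have := Mlt j hj _ h; omega
  have hcard := Finset.card_image_of_injOn hinj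
  rw [← hcard]
  refine le_trans (Finset.card_le_card (t := {f u, f u - 1}) ?_) Finset.card_le_two
  intro y hy
  rw [Finset.mem_image] at hy
  obtain ⟨i, hi, rfl⟩ := hy
  have := hconst _ (hF i hi 0)
  rw [← this]
  simp only [hf, hi, true_and, Finset.mem_insert, Finset.mem_singleton]
  by_cases h : col i 0 = true
  · right; simp [h]
  · left; simp [h]

theorem cycle_length_le (hm : 2 ≤ m) (hw : w.IsCycle) : w.length ≤ 7 * m + 2 := by
  classical
  have : NeZero m := ⟨by omega⟩
  set P : Finset (ZMod m × Fin 8) := w.support.tail.toFinset with hP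
  have hlen : w.length = P.card := by
    rw [hP, List.toFinset_card_of_nodup hw.support_nodup, List.length_tail, Walk.length_support]
    simp
  set F : Finset (ZMod m) := Finset.univ.filter (fun i => ∀ x, (i, x) ∈ P) with hFd
  have hF := full_le_two w hm hw F (by
    intro i hi x
    simp only [hFd, Finset.mem_filter] at hi
    have := hi.2 x
    rw [hP, List.mem_toFinset] at this
    exact List.mem_of_mem_tail this)
  have h1 : P.card = ∑ i : ZMod m, (Finset.univ.filter (fun x : Fin 8 => (i, x) ∈ P)).card := by
    have : P = Finset.univ.filter (· ∈ P) := by ext; simp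
    conv_lhs => rw [this]
    simp only [Finset.card_filter]
    exact Fintype.sum_prod_type _
  have h2 : ∀ i : ZMod m, (Finset.univ.filter (fun x : Fin 8 => (i, x) ∈ P)).card ≤
      7 + if i ∈ F then 1 else 0 := by
    intro i
    by_cases hi : i ∈ F
    · simp only [hi, if_true]
      exact (Finset.card_le_univ _).trans (by simp)
    · simp only [hi, if_false, add_zero]
      simp only [hFd, Finset.mem_filter, Finset.mem_univ, true_and, not_forall] at hi
      obtain ⟨x, hx⟩ := hi
      have : Finset.univ.filter (fun x : Fin 8 => (i, x) ∈ P) ⊂ Finset.univ := by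
        rw [Finset.filter_ssubset]
        exact ⟨x, Finset.mem_univ _, hx⟩
      have := Finset.card_lt_card this
      simp at this ⊢
      omega
  have h3 := Finset.sum_le_sum (fun i (_ : i ∈ Finset.univ) => h2 i)
  rw [← h1, Finset.sum_add_distrib] at h3
  simp [ZMod.card] at h3
  omega

end upper

theorem chain_circ (m : ℕ) (hm : 2 ≤ m) : circumference (chainG m) = 7 * m + 2 := by
  apply IsGreatest.csSup_eq
  refine ⟨long_cycle m hm, ?_⟩
  rintro n ⟨u, w, hw, rfl⟩
  exact cycle_length_le w hm hw

/-! ### Cyclic edge-connectivity -/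

/-- The edge cut of a vertex set. -/
def cutSet {V : Type*} (G : SimpleGraph V) (S : Set V) : Set (Sym2 V) :=
  {e ∈ G.edgeSet | ∃ a ∈ S, ∃ b ∈ Sᶜ, e = s(a, b)}

theorem cutSet_compl {V : Type*} (G : SimpleGraph V) (S : Set V) : cutSet G Sᶜ = cutSet G S := by
  ext e
  simp only [cutSet, Set.mem_ofPred_eq, compl_compl]
  constructor
  · rintro ⟨h, a, ha, b, hb, rfl⟩
    exact ⟨h, b, hb, a, ha, Sym2.eq_swap⟩
  · rintro ⟨h, a, ha, b, hb, rfl⟩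
    exact ⟨h, b, hb, a, ha, Sym2.eq_swap⟩

/-- first index of an edge -/
def ep : Fin 12 → Fin 8 := ![0, 0, 1, 1, 2, 2, 3, 3, 4, 5, 2, 3]
/-- second index of an edge -/
def eq' : Fin 12 → Fin 8 := ![4, 7, 5, 6, 4, 5, 6, 7, 6, 7, 0, 1]
/-- block shift of an edge -/
def eo {m : ℕ} : Fin 12 → ZMod m := ![0, 0, 0, 0, 0, 0, 0, 0, 0, 0, 1, 1]

/-- Enumeration of the edges. -/
def edgeMap (m : ℕ) (a : ZMod m × Fin 12) : Sym2 (ZMod m × Fin 8) :=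
  s((a.1, ep a.2), (a.1 + eo a.2, eq' a.2))

theorem edgeMap_mem (m : ℕ) (a : ZMod m × Fin 12) : edgeMap m a ∈ (chainG m).edgeSet := by
  obtain ⟨i, k⟩ := a
  rw [edgeMap, SimpleGraph.mem_edgeSet, chain_adj]
  fin_cases k <;> simp [ep, eq', eo, nbA, nbB, nbC, sh]

theorem edgeMap_inj (m : ℕ) : Function.Injective (edgeMap m) := by
  rintro ⟨i, k⟩ ⟨j, l⟩ h
  have h1 : ∀ k l : Fin 12, ep k = ep l → eq' k = eq' l → k = l := by decide
  have h2 : ∀ k l : Fin 12, ep k = eq' l → eq' k = ep l → False := by decide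
  simp only [edgeMap, Sym2.eq_iff, Prod.mk.injEq] at h
  rcases h with ⟨⟨a, b⟩, c, d⟩ | ⟨⟨a, b⟩, c, d⟩
  · rw [a, h1 _ _ b d]
  · exact (h2 _ _ b d).elim

open Classical in
/-- Indicator of a vertex set on a block. -/
noncomputable def ind {m : ℕ} (S : Set (ZMod m × Fin 8)) (i : ZMod m) (x : Fin 8) : Bool :=
  decide ((i, x) ∈ S)

/-- Number of cut edges in block `i`. -/
noncomputable def cutB {m : ℕ} (S : Set (ZMod m × Fin 8)) (i : ZMod m) : ℕ :=
  cutN (ind S i) (ind S (i + 1) 0) (ind S (i + 1) 1)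

theorem edgeMap_cut {m : ℕ} (S : Set (ZMod m × Fin 8)) (i : ZMod m) (k : Fin 12)
    (h : ind S i (ep k) ≠ ind S (i + eo k) (eq' k)) : edgeMap m (i, k) ∈ cutSet (chainG m) S := by
  refine ⟨edgeMap_mem m _, ?_⟩
  by_cases h1 : (i, ep k) ∈ S <;> by_cases h2 : (i + eo k, eq' k) ∈ S
  · simp [ind, h1, h2] at h
  · exact ⟨_, h1, _, h2, rfl⟩
  · exact ⟨_, h2, _, h1, Sym2.eq_swap⟩
  · simp [ind, h1, h2] at h

theorem cutB_eq {m : ℕ} (S : Set (ZMod m × Fin 8)) (i : ZMod m) :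
    cutB S i = (Finset.univ.filter (fun k : Fin 12 =>
      ind S i (ep k) ≠ ind S (i + eo k) (eq' k))).card := by
  have hx : ∀ a b : Bool, (a ^^ b).toNat = if a ≠ b then 1 else 0 := by decide
  simp only [Finset.card_filter, cutB, cutN, ← hx]
  simp only [Fin.sum_univ_succ, Fin.sum_univ_zero, ep, eq', eo]
  simp [add_assoc]

theorem cutB_add_le {m : ℕ} [NeZero m] (S : Set (ZMod m × Fin 8)) (i j : ZMod m) (hij : i ≠ j) :
    cutB S i + cutB S j ≤ (cutSet (chainG m) S).ncard := by
  classical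
  rw [cutB_eq, cutB_eq]
  set A := Finset.univ.filter (fun k : Fin 12 => ind S i (ep k) ≠ ind S (i + eo k) (eq' k)) with hA
  set B := Finset.univ.filter (fun k : Fin 12 => ind S j (ep k) ≠ ind S (j + eo k) (eq' k)) with hB
  have h1 : ((A.image (fun k => edgeMap m (i, k))) ∪ (B.image (fun k => edgeMap m (j, k)))).card =
      A.card + B.card := by
    rw [Finset.card_union_of_disjoint, Finset.card_image_of_injective,
      Finset.card_image_of_injective]
    · intro a b h; simpa using edgeMap_inj m h
    · intro a b h; simpa using edgeMap_inj m h
    · rw [Finset.disjoint_left]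
      intro e he he'
      simp only [Finset.mem_image] at he he'
      obtain ⟨k, _, rfl⟩ := he
      obtain ⟨l, _, hl⟩ := he'
      have := edgeMap_inj m hl
      exact hij (by simpa using (congrArg Prod.fst this).symm)
  rw [← h1, ← Set.ncard_coe_finset]
  apply Set.ncard_le_ncard _ (Set.toFinite _)
  intro e he
  simp only [Finset.coe_union, Finset.coe_image, Set.mem_union, Set.mem_image, Finset.mem_coe] at he
  rcases he with ⟨k, hk, rfl⟩ | ⟨k, hk, rfl⟩
  · rw [hA, Finset.mem_filter] at hk
    exact edgeMap_cut S i k hk.2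
  · rw [hB, Finset.mem_filter] at hk
    exact edgeMap_cut S j k hk.2

theorem cycle_two {V : Type*} {G : SimpleGraph V} {S : Set V} (h : HasCycle (G.induce S)) :
    ∃ Y : Set V, Y.Nonempty ∧ Y ⊆ S ∧ ∀ y ∈ Y, ∃ a ∈ Y, ∃ b ∈ Y, a ≠ b ∧ G.Adj y a ∧ G.Adj y b := by
  obtain ⟨u, w, hw⟩ := h
  refine ⟨Subtype.val '' {v | v ∈ w.support}, ⟨u, u, by simp, rfl⟩, ?_, ?_⟩
  · rintro _ ⟨v, _, rfl⟩; exact v.2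
  · rintro _ ⟨v, hv, rfl⟩
    have := hw.ncard_neighborSet_toSubgraph_eq_two hv
    rw [Set.ncard_eq_two] at this
    obtain ⟨a, b, hab, e⟩ := this
    have ha : w.toSubgraph.Adj v a := by
      have : a ∈ w.toSubgraph.neighborSet v := by rw [e]; simp
      exact this
    have hb : w.toSubgraph.Adj v b := by
      have : b ∈ w.toSubgraph.neighborSet v := by rw [e]; simp
      exact this
    refine ⟨a, ⟨a, Walk.mem_support_of_adj_toSubgraph ha.symm, rfl⟩,
      b, ⟨b, Walk.mem_support_of_adj_toSubgraph hb.symm, rfl⟩, ?_, ?_, ?_⟩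
    · exact fun h => hab (Subtype.ext h)
    · exact ha.adj_sub
    · exact hb.adj_sub

theorem cut_core {m : ℕ} (hm : 2 ≤ m) (S : Set (ZMod m × Fin 8)) (i : ZMod m)
    (hS : ∀ j, j ≠ i → ∀ x, (j, x) ∉ S) (hcyc : HasCycle ((chainG m).induce S)) :
    4 ≤ (cutSet (chainG m) S).ncard := by
  classical
  have : NeZero m := ⟨by omega⟩
  have : Fact (1 < m) := ⟨hm⟩
  obtain ⟨Y, ⟨y0, hy0⟩, hYS, hY⟩ := cycle_two hcyc
  have hYi : ∀ v ∈ Y, v.1 = i := by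
    intro v hv
    by_contra h
    exact hS _ h _ (hYS hv)
  have hne : i - 1 ≠ i := by simp
  have hne' : i + 1 ≠ i := by simp
  refine le_trans ?_ (cutB_add_le S i (i - 1) hne.symm)
  have e1 : cutB S i = cutN (ind S i) false false := by
    simp only [cutB]
    have : ∀ x, ind S (i + 1) x = false := fun x => by simp [ind, hS _ hne' x]
    simp only [this]
  have e2 : cutB S (i - 1) = (ind S i 0).toNat + (ind S i 1).toNat := by
    simp only [cutB, cutN]
    have : ∀ x, ind S (i - 1) x = false := fun x => by simp [ind, hS _ hne x]
    simp [this]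
  rw [e1, e2]
  have hnb : ∀ x, (i, x) ∈ Y → ge2 (ind Y i (nbA x)) (ind Y i (nbB x))
      (decide ((i + sh x, nbC x) ∈ Y)) = true := by
    intro x hx
    obtain ⟨a, ha, b, hb, hab, h1, h2⟩ := hY _ hx
    rw [chain_adj] at h1 h2
    rcases h1 with rfl | rfl | rfl <;> rcases h2 with rfl | rfl | rfl <;>
      first
      | exact absurd rfl hab
      | (simp only [ind, ha, hb, ge2, decide_true]
         simp)
  refine cut_four (ind Y i) ⟨y0.2, ?_⟩ ?_ (ind S i) ?_
  · have : y0 = (i, y0.2) := by rw [← hYi _ hy0]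
    simp only [ind, decide_eq_true_eq]
    rw [← this]; exact hy0
  · have out : ∀ x, (i + 1, x) ∉ Y := fun x h => hne' (hYi _ h)
    have out' : ∀ x, (i + -1, x) ∉ Y := fun x h => hne (by
      rw [sub_eq_add_neg]; exact hYi _ h)
    have hnb' : ∀ x, (!(ind Y i x) || ge2 (ind Y i (nbA x)) (ind Y i (nbB x))
      (decide ((i + sh x, nbC x) ∈ Y))) = true := by
      intro x
      by_cases hx : (i, x) ∈ Y
      · rw [hnb x hx]; simp
      · simp [ind, hx]
    have v0 := hnb' 0
    have v1 := hnb' 1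
    have v2 := hnb' 2
    have v3 := hnb' 3
    have v4 := hnb' 4
    have v5 := hnb' 5
    have v6 := hnb' 6
    have v7 := hnb' 7
    simp only [nbA, nbB, nbC, sh, Matrix.cons_val, add_zero, out, out', decide_false]
      at v0 v1 v2 v3 v4 v5 v6 v7
    simp only [deg2, Bool.and_eq_true]
    exact ⟨⟨⟨⟨⟨⟨⟨v0, v1⟩, v2⟩, v3⟩, v4⟩, v5⟩, v6⟩, v7⟩
  · intro k hk
    simp only [ind, decide_eq_true_eq] at hk ⊢
    exact hYS hk

theorem zmod_const {m : ℕ} (hm : 2 ≤ m) (i : ZMod m) (g : ZMod m → Bool)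
    (h : ∀ j, j ≠ i → j + 1 ≠ i → g j = g (j + 1)) : ∀ j, j ≠ i → g j = g (i + 1) := by
  have : NeZero m := ⟨by omega⟩
  have hne : ∀ n : ℕ, n + 1 < m → i + 1 + (n : ZMod m) ≠ i := by
    intro n hn e
    have e1 : ((n + 1 : ℕ) : ZMod m) = 0 := by
      push_cast
      have : i + 1 + (n : ZMod m) = i + ((n : ZMod m) + 1) := by ring
      rw [this] at e
      simpa using e
    rw [ZMod.natCast_eq_zero_iff] at e1
    have := Nat.le_of_dvd (by omega) e1
    omega
  have key : ∀ n : ℕ, n + 1 < m → g (i + 1 + (n : ZMod m)) = g (i + 1) := by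
    intro n
    induction n with
    | zero => intro _; simp
    | succ n ih =>
      intro hn
      rw [← ih (by omega)]
      have h1 := hne n (by omega)
      have h2 := hne (n + 1) hn
      have e : i + 1 + ((n + 1 : ℕ) : ZMod m) = i + 1 + (n : ZMod m) + 1 := by push_cast; ring
      rw [e] at h2 ⊢
      exact (h _ h1 h2).symm
  intro j hj
  have hlt := ZMod.val_lt (j - (i + 1))
  have e : i + 1 + (((j - (i + 1)).val : ℕ) : ZMod m) = j := by
    rw [ZMod.natCast_val, ZMod.cast_id]; ring
  by_cases hl : (j - (i + 1)).val + 1 < m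
  · have := key _ hl
    rwa [e] at this
  · exfalso
    apply hj
    have e' : (j - (i + 1)).val + 1 = m := by omega
    have := congrArg (Nat.cast : ℕ → ZMod m) e'
    rw [Nat.cast_add, ZMod.natCast_val, ZMod.cast_id, ZMod.natCast_self] at this
    have h2 : j - i = 0 := by rw [← this]; push_cast; ring
    exact sub_eq_zero.1 h2

theorem chain_conn (m : ℕ) (hm : 2 ≤ m) : CyclicallyEdgeConnected (chainG m) 4 := by
  classical
  have : NeZero m := ⟨by omega⟩
  intro S h1 h2
  change 4 ≤ (cutSet (chainG m) S).ncard
  by_contra hlt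
  push Not at hlt
  have hsum : ∀ i j, i ≠ j → cutB S i + cutB S j < 4 := fun i j hij =>
    lt_of_le_of_lt (cutB_add_le S i j hij) hlt
  have hi : ∃ i, ∀ j, j ≠ i → cutB S j < 2 := by
    by_cases h : ∃ i, 2 ≤ cutB S i
    · obtain ⟨i, hi⟩ := h
      refine ⟨i, fun j hj => ?_⟩
      have := hsum j i hj
      omega
    · push Not at h
      exact ⟨0, fun j _ => h j⟩
  obtain ⟨i, hi⟩ := hi
  have hc : ∀ j, j ≠ i → ∀ x, ind S j x = ind S j 0 := fun j hj =>
    (cut_two _ _ _ (hi j hj)).1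
  have hs : ∀ j, j ≠ i → j + 1 ≠ i → ind S j 0 = ind S (j + 1) 0 := fun j hj hj' =>
    (cut_two _ _ _ (hi j hj)).2 (hc _ hj' 1).symm
  have hall := zmod_const hm i (fun j => ind S j 0) hs
  cases hb : ind S (i + 1) 0 with
  | false =>
    have := cut_core hm S i (by
      intro j hj x hx
      have e := hc j hj x
      rw [hall j hj, hb] at e
      simp [ind, hx] at e) h1
    omega
  | true =>
    have := cut_core hm Sᶜ i (by
      intro j hj x hx
      have e := hc j hj x
      rw [hall j hj, hb] at e
      simp only [ind, decide_eq_true_eq] at e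
      exact hx e) h2
    rw [cutSet_compl] at this
    omega

/-- For each m ≥ 2 there is a cyclically 4-edge-connected cubic graph of order 8m
with circumference exactly 7m + 2. -/
theorem stmt_8 (m : ℕ) (hm : 2 ≤ m) :
    ∃ (V : Type) (_ : Fintype V) (G : SimpleGraph V),
      IsCubic G ∧ CyclicallyEdgeConnected G 4 ∧
      Fintype.card V = 8 * m ∧ circumference G = 7 * m + 2 := by
  have : NeZero m := ⟨by omega⟩
  refine ⟨ZMod m × Fin 8, inferInstance, chainG m, chain_cubic m, chain_conn m hm, ?_,
    chain_circ m hm⟩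
  rw [Fintype.card_prod, ZMod.card, Fintype.card_fin, mul_comm]
end

section
/- For every integer g ≥ 5, there exists a snark (a cyclically 4-edge-connected cubic graph of girth at least 5 that is not 3-edge-colourable) with girth at least g and circumference deficit at least g. -/
open SimpleGraph

def EdgesShare {V : Type*} (e₁ e₂ : Sym2 V) : Prop := ∃ v, v ∈ e₁ ∧ v ∈ e₂

def IsProper3EdgeColoring {V : Type*} (G : SimpleGraph V) (c : Sym2 V → Fin 3) : Prop :=
  ∀ e₁ ∈ G.edgeSet, ∀ e₂ ∈ G.edgeSet, e₁ ≠ e₂ → EdgesShare e₁ e₂ → c e₁ ≠ c e₂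

def Is3EdgeColorable {V : Type*} (G : SimpleGraph V) : Prop :=
  ∃ c, IsProper3EdgeColoring G c


/-! ### Part 1: finite groups generated by three involutions without short relations -/

section words

/-- Reduced words of bounded length. -/
def RWord (L : ℕ) : Type := {l : List (Fin 3) // l.IsChain (· ≠ ·) ∧ l.length ≤ L}

theorem RWord.finite (L : ℕ) : Finite (RWord L) := by
  have h : Set.Finite {l : List (Fin 3) | l.length ≤ L} := List.finite_length_le (Fin 3) L
  exact (h.subset (fun l (hl : l.IsChain (· ≠ ·) ∧ l.length ≤ L) => hl.2)).to_subtype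

/-- Partial left multiplication by a letter. -/
def lmul (L : ℕ) (i : Fin 3) (l : List (Fin 3)) : List (Fin 3) :=
  if l.head? = some i then l.tail else if l.length < L then i :: l else l

theorem lmul_ok (L : ℕ) (i : Fin 3) (l : List (Fin 3))
    (h : l.IsChain (· ≠ ·) ∧ l.length ≤ L) :
    (lmul L i l).IsChain (· ≠ ·) ∧ (lmul L i l).length ≤ L := by
  unfold lmul
  split_ifs with h1 h2
  · exact ⟨h.1.tail, by simp; omega⟩
  · refine ⟨?_, by simpa using h2⟩
    cases l with
    | nil => simp
    | cons a t =>
      simp only [List.isChain_cons_cons]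
      refine ⟨?_, h.1⟩
      intro e
      simp [e] at h1
  · exact h

theorem lmul_lmul (L : ℕ) (i : Fin 3) (l : List (Fin 3))
    (h : l.IsChain (· ≠ ·) ∧ l.length ≤ L) : lmul L i (lmul L i l) = l := by
  cases l with
  | nil =>
    unfold lmul
    by_cases hL : 0 < L <;> simp [hL]
  | cons a t =>
    by_cases ha : a = i
    · subst ha
      have h1 : lmul L a (a :: t) = t := by simp [lmul]
      rw [h1]
      have h2 : t.length < L := by have := h.2; simp at this; omega
      have h3 : t.head? ≠ some a := by
        cases t with
        | nil => simp
        | cons b t =>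
          have := h.1
          simp only [List.isChain_cons_cons] at this
          simp
          exact fun e => this.1 e.symm
      simp [lmul, h2, h3]
    · by_cases hl : (a :: t).length < L
      · have h1 : lmul L i (a :: t) = i :: a :: t := by
          unfold lmul
          rw [if_neg (by simpa using ha), if_pos hl]
        rw [h1]; simp [lmul]
      · have h1 : lmul L i (a :: t) = a :: t := by
          unfold lmul
          rw [if_neg (by simpa using ha), if_neg hl]
        rw [h1, h1]

/-- The permutation of reduced words given by a letter. -/
def lperm (L : ℕ) (i : Fin 3) : Equiv.Perm (RWord L) where
  toFun l := ⟨lmul L i l.1, lmul_ok L i l.1 l.2⟩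
  invFun l := ⟨lmul L i l.1, lmul_ok L i l.1 l.2⟩
  left_inv l := Subtype.ext (lmul_lmul L i l.1 l.2)
  right_inv l := Subtype.ext (lmul_lmul L i l.1 l.2)

theorem lperm_prod (L : ℕ) (l : List (Fin 3)) (h : l.IsChain (· ≠ ·)) (hL : l.length ≤ L) :
    (((l.map (lperm L)).prod : Equiv.Perm (RWord L)) ⟨[], by simp, by simp⟩).1 = l := by
  induction l with
  | nil => rfl
  | cons a t ih =>
    have h2 : t.length < L := by simp at hL; omega
    have ih' := ih h.tail (by omega)
    simp only [List.map_cons, List.prod_cons]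
    change lmul L a _ = _
    rw [ih']
    have h3 : t.head? ≠ some a := by
      cases t with
      | nil => simp
      | cons b t =>
        simp only [List.isChain_cons_cons] at h
        simp
        exact fun e => h.1 e.symm
    simp [lmul, h2, h3]

/-- A finite group generated by three involutions such that reduced words of length at most `L`
are pairwise different. -/
structure Host (L : ℕ) (Γ : Type) [Group Γ] where
  s : Fin 3 → Γ
  inv : ∀ i, s i * s i = 1
  gen : Subgroup.closure (Set.range s) = ⊤
  inj : ∀ l l' : List (Fin 3), l.IsChain (· ≠ ·) → l'.IsChain (· ≠ ·) → l.length ≤ L →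
    l'.length ≤ L → (l.map s).prod = (l'.map s).prod → l = l'

theorem exists_host (L : ℕ) : ∃ (Γ : Type) (_ : Group Γ) (_ : Finite Γ), Nonempty (Host L Γ) := by
  have := RWord.finite L
  let H := Subgroup.closure (Set.range (lperm L))
  let s : Fin 3 → H := fun i => ⟨lperm L i, Subgroup.subset_closure ⟨i, rfl⟩⟩
  refine ⟨H, inferInstance, inferInstance, ⟨⟨s, ?_, ?_, ?_⟩⟩⟩
  · intro i
    apply Subtype.ext
    apply Equiv.ext
    intro l
    exact Subtype.ext (lmul_lmul L i l.1 l.2)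
  · have := Subgroup.closure_closure_coe_preimage (k := Set.range (lperm L))
    rw [← this]
    congr 1
    ext x
    constructor
    · rintro ⟨i, rfl⟩
      exact ⟨i, rfl⟩
    · rintro ⟨i, hi⟩
      exact ⟨i, Subtype.ext hi⟩
  · intro l l' h h' hL hL' e
    have key : ∀ l : List (Fin 3), (((l.map s).prod : H) : Equiv.Perm (RWord L)) =
        (l.map (lperm L)).prod := by
      intro l
      induction l with
      | nil => simp
      | cons a t ih =>
        rw [List.map_cons, List.map_cons, List.prod_cons, List.prod_cons, ← ih]
        rfl
    have e2 : (l.map (lperm L)).prod = (l'.map (lperm L)).prod := by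
      rw [← key, ← key, e]
    rw [← lperm_prod L l h hL, ← lperm_prod L l' h' hL', e2]

namespace Host

variable {L : ℕ} {Γ : Type} [Group Γ] (H : Host L Γ)

theorem mul_cancel' (x : Γ) (i : Fin 3) : x * H.s i * H.s i = x := by
  rw [mul_assoc, H.inv, mul_one]

theorem eq_mul_iff (x y : Γ) (i : Fin 3) : x = y * H.s i ↔ x * H.s i = y := by
  constructor
  · rintro rfl; exact H.mul_cancel' _ _
  · rintro rfl; exact (H.mul_cancel' _ _).symm

theorem s_ne_one (hL : 1 ≤ L) (i : Fin 3) : H.s i ≠ 1 := by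
  intro h
  have := H.inj [i] [] (by simp) (by simp) (by simpa) (by simp) (by simpa using h)
  simp at this

theorem s_inj (hL : 1 ≤ L) : Function.Injective H.s := by
  intro i j h
  have := H.inj [i] [j] (by simp) (by simp) (by simpa) (by simpa) (by simpa using h)
  simpa using this

theorem mul_s_ne (hL : 1 ≤ L) (x : Γ) (i : Fin 3) : x * H.s i ≠ x := by
  intro h
  exact H.s_ne_one hL i (by simpa using h)

/-- every word is equivalent to a reduced word which is not longer -/
theorem exists_reduced (l : List (Fin 3)) : ∃ l' : List (Fin 3), l'.IsChain (· ≠ ·) ∧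
    l'.length ≤ l.length ∧ (l'.map H.s).prod = (l.map H.s).prod := by
  induction l with
  | nil => exact ⟨[], by simp, by simp, rfl⟩
  | cons a t ih =>
    obtain ⟨l', h1, h2, h3⟩ := ih
    cases l' with
    | nil => exact ⟨[a], by simp, by simp, by simp at h3 ⊢; rw [← h3]⟩
    | cons b r =>
      by_cases hab : a = b
      · subst hab
        refine ⟨r, h1.tail, by simp at h2 ⊢; omega, ?_⟩
        simp only [List.map_cons, List.prod_cons] at h3 ⊢
        rw [← h3, ← mul_assoc, H.inv, one_mul]
      · refine ⟨a :: b :: r, by simp only [List.isChain_cons_cons]; exact ⟨hab, h1⟩,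
          by simp at h2 ⊢; omega, ?_⟩
        simp only [List.map_cons, List.prod_cons] at h3 ⊢
        rw [← h3]

theorem prod_reverse (l : List (Fin 3)) :
    (l.map H.s).prod * (l.reverse.map H.s).prod = 1 := by
  induction l with
  | nil => simp
  | cons a t ih =>
    simp only [List.map_cons, List.prod_cons, List.reverse_cons, List.map_append,
      List.prod_append, List.map_nil, List.prod_nil, mul_one]
    calc _ = H.s a * ((t.map H.s).prod * (t.reverse.map H.s).prod) * H.s a := by
          simp only [mul_assoc]
      _ = 1 := by rw [ih, mul_one, H.inv]

/-- The alternating words `1 2 1 2 ...`. -/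
def alt : ℕ → List (Fin 3)
  | 0 => []
  | k + 1 => 1 :: 2 :: alt k

theorem alt_length (k : ℕ) : (alt k).length = 2 * k := by
  induction k with
  | zero => rfl
  | succ k ih => simp [alt, ih]; omega

theorem alt_chain (k : ℕ) : (alt k).IsChain (· ≠ ·) := by
  induction k with
  | zero => simp [alt]
  | succ k ih =>
    cases k with
    | zero => simp [alt]
    | succ k =>
      simp only [alt, List.isChain_cons_cons] at ih ⊢
      exact ⟨by decide, by decide, ih⟩

theorem alt_add (j k : ℕ) : alt (j + k) = alt j ++ alt k := by
  induction j with
  | zero => simp [alt]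
  | succ j ih =>
    rw [show j + 1 + k = (j + k) + 1 by omega]
    simp [alt, ih]

/-- The marked position number `k`. -/
def pos (N k : ℕ) : Γ := ((alt (N * k)).map H.s).prod

theorem pos_far_aux (N j k : ℕ) (hN : 1 ≤ N) (hjk : j < k) (hL : 2 * (N * k) ≤ L)
    (l : List (Fin 3)) (hl : l.length < 2 * N) : H.pos N j * (l.map H.s).prod ≠ H.pos N k := by
  intro h
  obtain ⟨d, rfl⟩ := Nat.exists_eq_add_of_lt hjk
  have e : N * (j + d + 1) = N * j + N * (d + 1) := by ring
  unfold pos at h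
  rw [e, alt_add, List.map_append, List.prod_append] at h
  have h' := mul_left_cancel h
  obtain ⟨l', h1, h2, h3⟩ := H.exists_reduced l
  have hd : N ≤ N * (d + 1) := Nat.le_mul_of_pos_right _ (by omega)
  have h4 := H.inj l' (alt (N * (d + 1))) h1 (alt_chain _) (by omega)
    (by rw [alt_length]; omega) (h3.trans h')
  have := congrArg List.length h4
  rw [alt_length] at this
  omega

theorem pos_far (N j k : ℕ) (hN : 1 ≤ N) (hjk : j ≠ k) (hj : 2 * (N * j) ≤ L)
    (hk : 2 * (N * k) ≤ L)
    (l : List (Fin 3)) (hl : l.length < 2 * N) : H.pos N j * (l.map H.s).prod ≠ H.pos N k := by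
  rcases lt_or_gt_of_ne hjk with h | h
  · exact H.pos_far_aux N j k hN h hk l hl
  · intro e
    refine H.pos_far_aux N k j hN h hj l.reverse (by simpa using hl) ?_
    rw [← e, mul_assoc, H.prod_reverse, mul_one]

end Host

end words

/-! ### Part 2: small edge cuts in the Cayley graph of a host group -/

section cuts

open Finset

namespace Host

open scoped Classical in
/-- The number of edges leaving `A` in the Cayley graph. -/
noncomputable def ecut {L : ℕ} {Γ : Type} [Group Γ] (H : Host L Γ) (A : Finset Γ) : ℕ :=
  ∑ i, #{x ∈ A | x * H.s i ∉ A}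

open scoped Classical

variable {L : ℕ} {Γ : Type} [Group Γ] [Fintype Γ] (H : Host L Γ)

theorem ecut_compl (A : Finset Γ) : H.ecut Aᶜ = H.ecut A := by
  unfold ecut
  refine Finset.sum_congr rfl fun i _ => ?_
  refine Finset.card_bij (fun x _ => x * H.s i) ?_ ?_ ?_
  · intro x hx
    simp only [mem_filter, mem_compl, not_not] at hx ⊢
    exact ⟨hx.2, by rw [H.mul_cancel']; exact hx.1⟩
  · intro x _ y _ h
    exact mul_right_cancel h
  · intro y hy
    simp only [mem_filter, mem_compl, not_not] at hy ⊢
    exact ⟨y * H.s i, ⟨hy.2, by rw [H.mul_cancel']; exact hy.1⟩, H.mul_cancel' _ _⟩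

theorem ecut_submod (A B : Finset Γ) : H.ecut (A ∩ B) + H.ecut (A ∪ B) ≤ H.ecut A + H.ecut B := by
  unfold ecut
  rw [← Finset.sum_add_distrib, ← Finset.sum_add_distrib]
  refine Finset.sum_le_sum fun i _ => ?_
  have key : ∀ C : Finset Γ, #{x ∈ C | x * H.s i ∉ C} =
      ∑ x : Γ, if x ∈ C ∧ x * H.s i ∉ C then 1 else 0 := by
    intro C
    rw [Finset.card_eq_sum_ones, Finset.sum_filter, ← Finset.sum_filter_add_sum_filter_not univ (· ∈ C)]
    rw [Finset.sum_filter, Finset.sum_filter]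
    rw [← Finset.sum_add_distrib]
    rw [← Finset.sum_subset (Finset.subset_univ C)]
    · refine Finset.sum_congr rfl fun x hx => ?_
      simp [hx]
    · intro x _ hx
      simp [hx]
  rw [key, key, key, key, ← Finset.sum_add_distrib, ← Finset.sum_add_distrib]
  refine Finset.sum_le_sum fun x _ => ?_
  simp only [mem_inter, mem_union]
  by_cases h1 : x ∈ A <;> by_cases h2 : x ∈ B <;> by_cases h3 : x * H.s i ∈ A <;>
    by_cases h4 : x * H.s i ∈ B <;> simp [h1, h2, h3, h4]

theorem ecut_posi (A B : Finset Γ) : H.ecut (A \ B) + H.ecut (B \ A) ≤ H.ecut A + H.ecut B := by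
  have h := H.ecut_submod A Bᶜ
  have e : (B \ A) = (A ∪ Bᶜ)ᶜ := by ext x; simp [and_comm]
  rw [e, H.ecut_compl, Finset.sdiff_eq_inter_compl]
  rwa [H.ecut_compl B] at h

/-- left translate -/
noncomputable def tl (g : Γ) (A : Finset Γ) : Finset Γ := A.image (g * ·)

theorem mem_tl (g : Γ) (A : Finset Γ) (x : Γ) : g * x ∈ tl g A ↔ x ∈ A := by
  unfold tl
  simp

theorem card_tl (g : Γ) (A : Finset Γ) : #(tl g A) = #A :=
  Finset.card_image_of_injective _ (mul_right_injective g)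

theorem ecut_tl (g : Γ) (A : Finset Γ) : H.ecut (tl g A) = H.ecut A := by
  unfold ecut
  refine Finset.sum_congr rfl fun i _ => ?_
  symm
  refine Finset.card_bij (fun x _ => g * x) ?_ ?_ ?_
  · intro x hx
    simp only [mem_filter, mem_tl, mul_assoc] at hx ⊢
    exact hx
  · intro x _ y _ h
    exact mul_left_cancel h
  · intro y hy
    obtain ⟨x, rfl⟩ : ∃ x, g * x = y := ⟨g⁻¹ * y, by simp⟩
    simp only [mem_filter, mem_tl, mul_assoc] at hy
    exact ⟨x, by simpa using hy, rfl⟩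

theorem even_inner (hL : 1 ≤ L) (A : Finset Γ) (i : Fin 3) :
    Even #{x ∈ A | x * H.s i ∈ A} := by
  have : (∑ x ∈ A with x * H.s i ∈ A, (1 : ZMod 2)) = 0 := by
    refine Finset.sum_involution (fun x _ => x * H.s i) ?_ ?_ ?_ ?_
    · intros; decide
    · intro x _ _
      exact H.mul_s_ne hL x i
    · intro x hx
      simp only [mem_filter] at hx ⊢
      exact ⟨hx.2, by rw [H.mul_cancel']; exact hx.1⟩
    · intro x _
      exact H.mul_cancel' _ _
  rw [Finset.sum_const, nsmul_eq_mul, mul_one] at this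
  exact (ZMod.natCast_eq_zero_iff_even).1 this

theorem parity_i (hL : 1 ≤ L) (A : Finset Γ) (i : Fin 3) :
    #{x ∈ A | x * H.s i ∉ A} % 2 = #A % 2 := by
  have h := H.even_inner hL A i
  have h2 := Finset.card_filter_add_card_filter_not (s := A) (fun x => x * H.s i ∈ A)
  obtain ⟨k, hk⟩ := h
  omega

theorem ecut_parity (hL : 1 ≤ L) (A : Finset Γ) : H.ecut A % 2 = #A % 2 := by
  unfold ecut
  rw [Fin.sum_univ_three]
  have h0 := H.parity_i hL A 0
  have h1 := H.parity_i hL A 1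
  have h2 := H.parity_i hL A 2
  omega

theorem ecut_odd (hL : 1 ≤ L) (A : Finset Γ) (hA : #A % 2 = 1) : 3 ≤ H.ecut A := by
  unfold ecut
  rw [Fin.sum_univ_three]
  have h0 := H.parity_i hL A 0
  have h1 := H.parity_i hL A 1
  have h2 := H.parity_i hL A 2
  omega

theorem ecut_zero (A : Finset Γ) (h : H.ecut A = 0) (hA : A.Nonempty) : A = univ := by
  obtain ⟨x, hx⟩ := hA
  have hs : ∀ i, ∀ y ∈ A, y * H.s i ∈ A := by
    intro i y hy
    unfold ecut at h
    rw [Finset.sum_eq_zero_iff] at h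
    have := h i (mem_univ i)
    rw [Finset.card_eq_zero, Finset.filter_eq_empty_iff] at this
    simpa using this hy
  have key : ∀ g : Γ, g ∈ Subgroup.closure (Set.range H.s) → ∀ y ∈ A, y * g ∈ A := by
    intro g hg
    induction hg using Subgroup.closure_induction with
    | mem g hg => obtain ⟨i, rfl⟩ := hg; exact hs i
    | one => simp
    | mul a b _ _ ha hb => intro y hy; rw [← mul_assoc]; exact hb _ (ha y hy)
    | inv a _ ha =>
      intro y hy
      have hinj : Set.MapsTo (fun z => z * a) (A : Set Γ) A := fun z hz => ha z hz
      have hsurj := Finset.surj_on_of_inj_on_of_card_le (s := A) (t := A) (fun z _ => z * a)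
        (fun z hz => ha z hz) (fun z w _ _ e => mul_right_cancel e) le_rfl y hy
      obtain ⟨z, hz, e⟩ := hsurj
      rw [e]
      simpa using hz
  ext y
  simp only [mem_univ, iff_true]
  have := key (x⁻¹ * y) (by rw [H.gen]; trivial) x hx
  simpa using this

theorem ecut_ge_two (hL : 1 ≤ L) (A : Finset Γ) (hA : A.Nonempty) (hA' : A ≠ univ) :
    2 ≤ H.ecut A := by
  rcases Nat.mod_two_eq_zero_or_one #A with h | h
  · have := H.ecut_parity hL A
    have h0 : H.ecut A ≠ 0 := fun h0 => hA' (H.ecut_zero A h0 hA)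
    omega
  · have := H.ecut_odd hL A h
    omega

/-- a block: translates are equal or disjoint -/
theorem ecut_block (A : Finset Γ) (hA : A.Nonempty) (hA' : A ≠ univ)
    (hb : ∀ g : Γ, tl g A = A ∨ Disjoint (tl g A) A) :
    ∃ d, 1 ≤ d ∧ H.ecut A = #A * d ∧ ∀ x ∈ A, #{i | x * H.s i ∉ A} = d := by
  obtain ⟨x, hx⟩ := hA
  have hd : ∀ y ∈ A, #{i | y * H.s i ∉ A} = #{i | x * H.s i ∉ A} := by
    intro y hy
    have hg : tl (y * x⁻¹) A = A := by
      rcases hb (y * x⁻¹) with h | h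
      · exact h
      · exfalso
        have h3 := (mem_tl (y * x⁻¹) A x).2 hx
        rw [inv_mul_cancel_right] at h3
        exact Finset.disjoint_left.1 h h3 hy
    congr 1
    ext i
    simp only [mem_filter, mem_univ, true_and]
    have h2 := mem_tl (y * x⁻¹) A (x * H.s i)
    rw [hg] at h2
    rw [← h2]
    simp [mul_assoc]
  have he : H.ecut A = #A * #{i | x * H.s i ∉ A} := by
    unfold ecut
    have : ∀ i, #{x ∈ A | x * H.s i ∉ A} = ∑ x ∈ A, if x * H.s i ∉ A then 1 else 0 := by
      intro i; rw [Finset.card_filter]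
    simp_rw [this]
    rw [Finset.sum_comm]
    simp_rw [← Finset.card_filter]
    rw [Finset.sum_congr rfl hd]
    simp
  refine ⟨_, ?_, he, hd⟩
  by_contra h
  have : #{i | x * H.s i ∉ A} = 0 := by omega
  rw [this, mul_zero] at he
  exact hA' (H.ecut_zero A he ⟨x, hx⟩)

theorem card_out_ge (hL : 1 ≤ L) (A : Finset Γ) (x : Γ) (hx : x ∈ A) :
    4 ≤ #{i | x * H.s i ∉ A} + #A := by
  have h1 := Finset.card_filter_add_card_filter_not (s := (univ : Finset (Fin 3)))
    (fun i => x * H.s i ∈ A)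
  have h2 : #{i | x * H.s i ∈ A} ≤ #(A.erase x) := by
    refine Finset.card_le_card_of_injOn (fun i => x * H.s i) ?_ ?_
    · intro i hi
      simp at hi
      simp [hi, H.s_ne_one hL]
    · intro i _ j _ h
      exact H.s_inj hL (mul_left_cancel h)
  rw [Finset.card_erase_of_mem hx] at h2
  have : 0 < #A := Finset.card_pos.2 ⟨x, hx⟩
  simp at h1
  omega

theorem ecut_ge_three (hL : 1 ≤ L) (A : Finset Γ) (hA : A.Nonempty) (hA' : A ≠ univ) :
    3 ≤ H.ecut A := by
  by_contra hcon
  obtain ⟨B, hB, hmin⟩ := Finset.exists_min_image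
    (univ.filter fun B : Finset Γ => B.Nonempty ∧ B ≠ univ ∧ H.ecut B ≤ 2) card
    ⟨A, by simp; exact ⟨hA, hA', by omega⟩⟩
  simp only [mem_filter, mem_univ, true_and] at hB hmin
  obtain ⟨hB1, hB2, hB3⟩ := hB
  have hb : ∀ g : Γ, tl g B = B ∨ Disjoint (tl g B) B := by
    intro g
    by_contra! h
    obtain ⟨h1, h2⟩ := h
    have hc := card_tl g B
    have n1 : (B \ tl g B).Nonempty := by
      rw [Finset.sdiff_nonempty]
      intro hs
      exact h1 (Finset.eq_of_subset_of_card_le hs hc.le).symm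
    have n2 : (tl g B \ B).Nonempty := by
      rw [Finset.sdiff_nonempty]
      intro hs
      exact h1 (Finset.eq_of_subset_of_card_le hs hc.ge)
    have lt : #(B \ tl g B) < #B := by
      refine Finset.card_lt_card ⟨Finset.sdiff_subset, fun hs => h2 ?_⟩
      rw [Finset.disjoint_right]
      intro x hx
      exact (Finset.mem_sdiff.1 (hs hx)).2
    have p1 : tl g B \ B ≠ univ := by
      intro h
      obtain ⟨x, hx⟩ := hB1
      have := h ▸ mem_univ x
      simp [hx] at this
    have p2 : B \ tl g B ≠ univ := by
      intro h
      rw [h, Finset.card_univ] at lt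
      exact absurd (Finset.card_le_univ B) (by omega)
    have e1 := H.ecut_ge_two hL _ n2 p1
    have e2 := H.ecut_posi B (tl g B)
    rw [H.ecut_tl] at e2
    have := hmin (B \ tl g B) ⟨n1, p2, by omega⟩
    omega
  obtain ⟨d, hd1, hd2, hd3⟩ := H.ecut_block B hB1 hB2 hb
  obtain ⟨x, hx⟩ := hB1
  have h4 := H.card_out_ge hL B x hx
  rw [hd3 x hx] at h4
  have hpos : 0 < #B := Finset.card_pos.2 ⟨x, hx⟩
  have : #B * d ≤ 2 := by omega
  have : #B ≤ 2 := by nlinarith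
  have : d ≤ 2 := by nlinarith
  interval_cases d <;> interval_cases #B <;> omega

theorem ecut_ge_four (hL : 2 ≤ L) (A : Finset Γ) (hA : H.ecut A ≤ 3) : #A ≤ 1 ∨ #Aᶜ ≤ 1 := by
  have hL1 : 1 ≤ L := by omega
  by_contra! hcon
  obtain ⟨B, hB, hmin⟩ := Finset.exists_min_image
    (univ.filter fun B : Finset Γ => 1 < #B ∧ 1 < #Bᶜ ∧ H.ecut B ≤ 3) card
    ⟨A, by simp; exact ⟨hcon.1, by simpa using hcon.2, hA⟩⟩
  simp only [mem_filter, mem_univ, true_and] at hB hmin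
  obtain ⟨hB1, hB2, hB3⟩ := hB
  have hle : #B ≤ #Bᶜ := hmin Bᶜ ⟨hB2, by simpa using hB1, by rw [H.ecut_compl]; exact hB3⟩
  have hcard : #B + #Bᶜ = Fintype.card Γ := Finset.card_add_card_compl B
  have hBn : B.Nonempty := Finset.card_pos.1 (by omega)
  have hBu : B ≠ univ := by
    intro h
    rw [h] at hB2
    simp at hB2
  have heB : H.ecut B = 3 := le_antisymm hB3 (H.ecut_ge_three hL1 B hBn hBu)
  have hodd : #B % 2 = 1 := by
    have := H.ecut_parity hL1 B
    omega
  have hb : ∀ g : Γ, tl g B = B ∨ Disjoint (tl g B) B := by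
    intro g
    by_contra! h
    obtain ⟨h1, h2⟩ := h
    have hc := card_tl g B
    have n1 : (B \ tl g B).Nonempty := by
      rw [Finset.sdiff_nonempty]
      intro hs
      exact h1 (Finset.eq_of_subset_of_card_le hs hc.le).symm
    have n2 : (tl g B \ B).Nonempty := by
      rw [Finset.sdiff_nonempty]
      intro hs
      exact h1 (Finset.eq_of_subset_of_card_le hs hc.ge)
    have lt1 : ∀ C : Finset Γ, #C ≤ #B → C ≠ univ := by
      rintro C hC rfl
      rw [Finset.card_univ] at hC
      omega
    have l1 := Finset.card_sdiff_add_card_inter B (tl g B)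
    have l2 := Finset.card_sdiff_add_card_inter (tl g B) B
    have n3 : (B ∩ tl g B).Nonempty := by
      rw [← Finset.not_disjoint_iff_nonempty_inter]
      exact fun h => h2 h.symm
    have n3' := Finset.card_pos.2 n3
    have e1 := H.ecut_ge_three hL1 _ n1 (lt1 _ (by omega))
    have e2 := H.ecut_ge_three hL1 _ n2 (lt1 _ (by omega))
    have e3 := H.ecut_ge_three hL1 _ n3 (lt1 _ (by omega))
    have e4 := H.ecut_posi B (tl g B)
    have e5 := H.ecut_submod B (tl g B)
    rw [H.ecut_tl] at e4 e5
    have q1 := H.ecut_parity hL1 (B \ tl g B)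
    have q3 := H.ecut_parity hL1 (B ∩ tl g B)
    have hu : B ∪ tl g B = univ := by
      by_contra hu
      have := H.ecut_ge_three hL1 _ (hBn.mono Finset.subset_union_left) hu
      omega
    have l3 := Finset.card_union_add_card_inter B (tl g B)
    rw [hu, Finset.card_univ] at l3
    omega
  obtain ⟨d, hd1, hd2, hd3⟩ := H.ecut_block B hBn hBu hb
  have hB3' : #B ≤ 3 := by nlinarith
  have hB3 : #B = 3 := by omega
  have hd : d = 1 := by rw [hB3] at hd2; omega
  subst hd
  have hin : ∀ x ∈ B, #{i | x * H.s i ∈ B} = 2 := by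
    intro x hx
    have h1 := Finset.card_filter_add_card_filter_not (s := (univ : Finset (Fin 3)))
      (fun i => x * H.s i ∈ B)
    have h2 := hd3 x hx
    simp at h1
    omega
  obtain ⟨x, hx⟩ := hBn
  obtain ⟨i, j, hij, he⟩ := Finset.card_eq_two.1 (hin x hx)
  have hi : x * H.s i ∈ B := by
    have : i ∈ ({i | x * H.s i ∈ B} : Finset (Fin 3)) := by rw [he]; simp
    simpa using this
  have hj : x * H.s j ∈ B := by
    have : j ∈ ({i | x * H.s i ∈ B} : Finset (Fin 3)) := by rw [he]; simp
    simpa using this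
  obtain ⟨k, hk, hki⟩ : ∃ k, x * H.s i * H.s k ∈ B ∧ k ≠ i := by
    obtain ⟨k1, k2, hk12, hk⟩ := Finset.card_eq_two.1 (hin _ hi)
    have m1 : x * H.s i * H.s k1 ∈ B := by
      have : k1 ∈ ({k | x * H.s i * H.s k ∈ B} : Finset (Fin 3)) := by rw [hk]; simp
      simpa using this
    have m2 : x * H.s i * H.s k2 ∈ B := by
      have : k2 ∈ ({k | x * H.s i * H.s k ∈ B} : Finset (Fin 3)) := by rw [hk]; simp
      simpa using this
    by_cases h : k1 = i
    · exact ⟨k2, m2, fun h' => hk12 (h.trans h'.symm)⟩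
    · exact ⟨k1, m1, h⟩
  have hBeq : ({x, x * H.s i, x * H.s j} : Finset Γ) = B := by
    refine Finset.eq_of_subset_of_card_le ?_ ?_
    · intro y hy
      simp only [mem_insert, mem_singleton] at hy
      rcases hy with rfl | rfl | rfl <;> assumption
    · rw [hB3, Finset.card_eq_three.2]
      refine ⟨x, x * H.s i, x * H.s j, (H.mul_s_ne hL1 _ _).symm, (H.mul_s_ne hL1 _ _).symm,
        ?_, rfl⟩
      intro h
      exact hij (H.s_inj hL1 (mul_left_cancel h))
  rw [← hBeq] at hk
  simp only [mem_insert, mem_singleton] at hk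
  rcases hk with h | h | h
  · have : H.s i * H.s k = 1 := by rw [mul_assoc] at h; simpa using h
    have := H.inj [i, k] [] (by simpa using fun h => hki h.symm) (by simp) (by simpa)
      (by simp) (by simpa using this)
    simp at this
  · exact H.mul_s_ne hL1 _ _ h
  · rw [mul_assoc] at h
    have := H.inj [i, k] [j] (by simpa using fun h => hki h.symm) (by simp) (by simpa)
      (by simp; omega) (by simpa using mul_left_cancel h)
    simp at this

end Host

end cuts

/-! ### Part 3: the expanded graph -/

section build

open SimpleGraph

/-- Building data: trivial vertices `A`, marks `D`, blobs `Y`, and the host group `Γ`. -/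
structure Bld (A D Y Γ : Type) [Group Γ] (L R : ℕ) where
  nt : A → Fin 3 → A ⊕ D
  bt : D → A
  bl : D → Y
  nt_inj : ∀ t, Function.Injective (nt t)
  nt_symm : ∀ t k t', nt t k = Sum.inl t' → ∃ k', nt t' k' = Sum.inl t
  nt_ne : ∀ t k, nt t k ≠ Sum.inl t
  nt_bt : ∀ t δ, (∃ k, nt t k = Sum.inr δ) ↔ bt δ = t
  H : Host L Γ
  p : D → Γ
  hR : 2 ≤ R
  hRL : R ≤ L
  far : ∀ δ δ', δ ≠ δ' → ∀ l : List (Fin 3), l.length ≤ R → p δ * (l.map H.s).prod ≠ p δ'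

/-- The vertices of the expanded graph. -/
abbrev VX (A D Y Γ : Type) : Type := A ⊕ (D ⊕ (Y × Γ))

namespace Bld

variable {A D Y Γ : Type} [Group Γ] {L R : ℕ} (B : Bld A D Y Γ L R)

theorem hL1 (B : Bld A D Y Γ L R) : 1 ≤ L := le_trans (by have := B.hR; omega) B.hRL

/-- The mark `δ` sits at the vertex `(y,γ)`. -/
def Mk (δ : D) (y : Y) (γ : Γ) : Prop := B.bl δ = y ∧ (γ = B.p δ ∨ γ = B.p δ * B.H.s 0)

theorem Mk_unique {δ δ' : D} {y : Y} {γ : Γ} (h : B.Mk δ y γ) (h' : B.Mk δ' y γ) : δ = δ' := by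
  by_contra hne
  have hR := B.hR
  obtain ⟨_, h | h⟩ := h <;> obtain ⟨_, h' | h'⟩ := h'
  · exact B.far δ δ' hne [] (by simp) (by simp [← h, ← h'])
  · refine B.far δ δ' hne [0] (by simp; omega) ?_
    rw [← h, h']; simp [mul_assoc, B.H.inv]
  · refine B.far δ δ' hne [0] (by simp; omega) ?_
    rw [← h', h]; simp
  · exact B.far δ δ' hne [] (by simp) (by simpa using h.symm.trans h')

theorem Mk_mul {δ : D} {y : Y} {γ : Γ} (h : B.Mk δ y γ) : B.Mk δ y (γ * B.H.s 0) := by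
  obtain ⟨h1, h | h⟩ := h
  · exact ⟨h1, Or.inr (by rw [h])⟩
  · exact ⟨h1, Or.inl (by rw [h, B.H.mul_cancel'])⟩

/-- adjacency of the expanded graph -/
def adjR : VX A D Y Γ → VX A D Y Γ → Prop
  | Sum.inl t, Sum.inl t' => ∃ k, B.nt t k = Sum.inl t'
  | Sum.inl t, Sum.inr (Sum.inl δ) => B.bt δ = t
  | Sum.inr (Sum.inl δ), Sum.inl t => B.bt δ = t
  | Sum.inr (Sum.inl δ), Sum.inr (Sum.inr (y, γ)) => B.Mk δ y γ
  | Sum.inr (Sum.inr (y, γ)), Sum.inr (Sum.inl δ) => B.Mk δ y γ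
  | Sum.inr (Sum.inr (y, γ)), Sum.inr (Sum.inr (y', γ')) =>
      y = y' ∧ ∃ i, γ' = γ * B.H.s i ∧ (i = 0 → ∀ δ, ¬ B.Mk δ y γ)
  | _, _ => False

/-- The expanded graph. -/
def G : SimpleGraph (VX A D Y Γ) where
  Adj := B.adjR
  symm := ⟨by
    rintro (t | δ | ⟨y, γ⟩) (t' | δ' | ⟨y', γ'⟩) h
    · obtain ⟨k, hk⟩ := h
      exact B.nt_symm _ _ _ hk
    · exact h
    · exact h
    · exact h
    · exact h
    · exact h
    · exact h
    · exact h
    · obtain ⟨rfl, i, rfl, hi⟩ := h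
      refine ⟨rfl, i, (B.H.mul_cancel' _ _).symm, ?_⟩
      rintro rfl δ hδ
      have := B.Mk_mul hδ
      rw [B.H.mul_cancel'] at this
      exact hi rfl δ this⟩
  loopless := ⟨by
    rintro (t | δ | ⟨y, γ⟩) h
    · obtain ⟨k, hk⟩ := h
      exact B.nt_ne _ _ hk
    · exact h
    · obtain ⟨_, i, h, -⟩ := h
      exact B.H.mul_s_ne B.hL1 γ i h.symm⟩

theorem adj_tt (t t' : A) : B.G.Adj (Sum.inl t) (Sum.inl t') ↔ ∃ k, B.nt t k = Sum.inl t' := Iff.rfl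
theorem adj_tm (t : A) (δ : D) : B.G.Adj (Sum.inl t) (Sum.inr (Sum.inl δ)) ↔ B.bt δ = t := Iff.rfl
theorem adj_mt (t : A) (δ : D) : B.G.Adj (Sum.inr (Sum.inl δ)) (Sum.inl t) ↔ B.bt δ = t := Iff.rfl
theorem adj_mb (δ : D) (y : Y) (γ : Γ) :
    B.G.Adj (Sum.inr (Sum.inl δ)) (Sum.inr (Sum.inr (y, γ))) ↔ B.Mk δ y γ := Iff.rfl
theorem adj_bm (δ : D) (y : Y) (γ : Γ) :
    B.G.Adj (Sum.inr (Sum.inr (y, γ))) (Sum.inr (Sum.inl δ)) ↔ B.Mk δ y γ := Iff.rfl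
theorem adj_bb (y y' : Y) (γ γ' : Γ) :
    B.G.Adj (Sum.inr (Sum.inr (y, γ))) (Sum.inr (Sum.inr (y', γ'))) ↔
      y = y' ∧ ∃ i, γ' = γ * B.H.s i ∧ (i = 0 → ∀ δ, ¬ B.Mk δ y γ) := Iff.rfl
theorem not_adj_tb (t : A) (y : Y) (γ : Γ) :
    ¬ B.G.Adj (Sum.inl t) (Sum.inr (Sum.inr (y, γ))) := fun h => h
theorem not_adj_bt (t : A) (y : Y) (γ : Γ) :
    ¬ B.G.Adj (Sum.inr (Sum.inr (y, γ))) (Sum.inl t) := fun h => h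
theorem not_adj_mm (δ δ' : D) :
    ¬ B.G.Adj (Sum.inr (Sum.inl δ)) (Sum.inr (Sum.inl δ')) := fun h => h

open scoped Classical in
/-- The three neighbours of a vertex. -/
noncomputable def nbr : VX A D Y Γ → Fin 3 → VX A D Y Γ
  | Sum.inl t, k => Sum.elim Sum.inl (fun δ => Sum.inr (Sum.inl δ)) (B.nt t k)
  | Sum.inr (Sum.inl δ), k => ![Sum.inl (B.bt δ), Sum.inr (Sum.inr (B.bl δ, B.p δ)),
      Sum.inr (Sum.inr (B.bl δ, B.p δ * B.H.s 0))] k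
  | Sum.inr (Sum.inr (y, γ)), i =>
      if h : i = 0 ∧ ∃ δ, B.Mk δ y γ then Sum.inr (Sum.inl h.2.choose)
      else Sum.inr (Sum.inr (y, γ * B.H.s i))

open scoped Classical in
theorem nbr_b_def (y : Y) (γ : Γ) (i : Fin 3) : B.nbr (Sum.inr (Sum.inr (y, γ))) i =
      if h : i = 0 ∧ ∃ δ, B.Mk δ y γ then Sum.inr (Sum.inl h.2.choose)
      else Sum.inr (Sum.inr (y, γ * B.H.s i)) := rfl

theorem nbr_t_def (t : A) (k : Fin 3) : B.nbr (Sum.inl t) k =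
    Sum.elim Sum.inl (fun δ => Sum.inr (Sum.inl δ)) (B.nt t k) := rfl

theorem nbr_bm {δ : D} {y : Y} {γ : Γ} (h : B.Mk δ y γ) :
    B.nbr (Sum.inr (Sum.inr (y, γ))) 0 = Sum.inr (Sum.inl δ) := by
  have h' : (0 : Fin 3) = 0 ∧ ∃ δ, B.Mk δ y γ := ⟨rfl, δ, h⟩
  rw [nbr_b_def, dif_pos h']
  rw [B.Mk_unique h'.2.choose_spec h]

theorem nbr_b0 {y : Y} {γ : Γ} (h : ∀ δ, ¬ B.Mk δ y γ) (i : Fin 3) :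
    B.nbr (Sum.inr (Sum.inr (y, γ))) i = Sum.inr (Sum.inr (y, γ * B.H.s i)) := by
  rw [nbr_b_def, dif_neg]
  rintro ⟨-, δ, hδ⟩
  exact h δ hδ

theorem nbr_bi {y : Y} {γ : Γ} (i : Fin 3) (hi : i ≠ 0) :
    B.nbr (Sum.inr (Sum.inr (y, γ))) i = Sum.inr (Sum.inr (y, γ * B.H.s i)) := by
  rw [nbr_b_def, dif_neg]
  rintro ⟨h, -⟩
  exact hi h

theorem adj_iff_nbr (u v : VX A D Y Γ) : B.G.Adj u v ↔ ∃ k, B.nbr u k = v := by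
  rcases u with t | δ | ⟨y, γ⟩
  · rcases v with t' | δ' | ⟨y', γ'⟩
    · rw [adj_tt]
      refine exists_congr fun k => ?_
      rw [nbr_t_def]
      cases h : B.nt t k <;> simp
    · rw [adj_tm, ← B.nt_bt]
      refine exists_congr fun k => ?_
      rw [nbr_t_def]
      cases h : B.nt t k <;> simp
    · refine iff_of_false (B.not_adj_tb _ _ _) ?_
      rintro ⟨k, hk⟩
      rw [nbr_t_def] at hk
      cases h : B.nt t k <;> simp [h] at hk
  · rw [Fin.exists_fin_succ, Fin.exists_fin_two]
    rcases v with t' | δ' | ⟨y', γ'⟩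
    · rw [adj_mt]; simp [nbr]
    · refine iff_of_false (B.not_adj_mm _ _) (by simp [nbr])
    · rw [adj_mb]
      simp only [nbr, Mk]
      simp
      constructor
      · rintro ⟨h, h' | h'⟩
        · exact Or.inl ⟨h, h'.symm⟩
        · exact Or.inr ⟨h, h'.symm⟩
      · rintro (⟨h, h'⟩ | ⟨h, h'⟩)
        · exact ⟨h, Or.inl h'.symm⟩
        · exact ⟨h, Or.inr h'.symm⟩
  · rcases v with t' | δ' | ⟨y', γ'⟩
    · refine iff_of_false (B.not_adj_bt _ _ _) ?_
      rintro ⟨k, hk⟩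
      rw [nbr_b_def] at hk
      split_ifs at hk
    · rw [adj_bm]
      constructor
      · intro h
        exact ⟨0, B.nbr_bm h⟩
      · rintro ⟨k, hk⟩
        by_cases h : k = 0 ∧ ∃ δ, B.Mk δ y γ
        · obtain ⟨rfl, δ, h⟩ := h
          rw [B.nbr_bm h] at hk
          simp at hk
          rwa [← hk]
        · rw [nbr_b_def, dif_neg h] at hk
          simp at hk
    · rw [adj_bb]
      constructor
      · rintro ⟨rfl, i, rfl, hi⟩
        refine ⟨i, ?_⟩
        by_cases h : i = 0
        · exact B.nbr_b0 (hi h) i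
        · exact B.nbr_bi i h
      · rintro ⟨k, hk⟩
        by_cases h : k = 0 ∧ ∃ δ, B.Mk δ y γ
        · obtain ⟨rfl, δ, h⟩ := h
          rw [B.nbr_bm h] at hk
          simp at hk
        · have h2 := hk
          rw [nbr_b_def, dif_neg h] at h2
          simp at h2
          refine ⟨h2.1, k, h2.2.symm, ?_⟩
          rintro rfl δ hδ
          exact h ⟨rfl, δ, hδ⟩

theorem nbr_inj (u : VX A D Y Γ) : Function.Injective (B.nbr u) := by
  rcases u with t | δ | ⟨y, γ⟩
  · intro k k' h
    apply B.nt_inj t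
    rw [nbr_t_def, nbr_t_def] at h
    cases h1 : B.nt t k <;> cases h2 : B.nt t k' <;> simp [h1, h2] at h ⊢ <;> exact h
  · have := B.H.mul_s_ne B.hL1 (B.p δ) 0
    intro k k' h
    fin_cases k <;> fin_cases k' <;> simp [nbr] at h ⊢
    · exact B.H.s_ne_one B.hL1 0 h
    · exact B.H.s_ne_one B.hL1 0 h
  · intro k k' h
    by_cases hm : ∃ δ, B.Mk δ y γ
    · obtain ⟨δ, hδ⟩ := hm
      by_cases hk : k = 0 <;> by_cases hk' : k' = 0
      · rw [hk, hk']
      · rw [hk, B.nbr_bm hδ, B.nbr_bi k' hk'] at h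
        simp at h
      · rw [hk', B.nbr_bm hδ, B.nbr_bi k hk] at h
        simp at h
      · rw [B.nbr_bi k hk, B.nbr_bi k' hk'] at h
        simp at h
        exact B.H.s_inj B.hL1 h
    · push Not at hm
      rw [B.nbr_b0 hm, B.nbr_b0 hm] at h
      simp at h
      exact B.H.s_inj B.hL1 h

theorem cubic : IsCubic B.G := by
  intro v
  have : B.G.neighborSet v = Set.range (B.nbr v) := by
    ext u
    simp [B.adj_iff_nbr]
  rw [this, ← Set.image_univ, Set.ncard_image_of_injective _ (B.nbr_inj v), Set.ncard_univ]
  simp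

end Bld

end build

/-! ### Part 4: girth of the expanded graph -/

section girth

open SimpleGraph

namespace Bld

variable {A D Y Γ : Type} [Group Γ] {L R : ℕ} (B : Bld A D Y Γ L R)

theorem bwalk (x : ℕ → VX A D Y Γ) (hadj : ∀ j, B.G.Adj (x j) (x (j + 1)))
    (hnb : ∀ j, x (j + 2) ≠ x j) (a m : ℕ)
    (hb : ∀ r ≤ m, ∃ y γ, x (a + r) = Sum.inr (Sum.inr (y, γ))) :
    ∃ y γ γ', ∃ l : List (Fin 3), l.length = m ∧ x a = Sum.inr (Sum.inr (y, γ)) ∧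
      x (a + m) = Sum.inr (Sum.inr (y, γ')) ∧ γ' = γ * (l.map B.H.s).prod ∧
      l.IsChain (· ≠ ·) ∧ ((∃ δ, B.Mk δ y γ) → l.head? ≠ some 0) ∧
      (∀ i, l.getLast? = some i → ∃ n, m = n + 1 ∧
        x (a + n) = Sum.inr (Sum.inr (y, γ' * B.H.s i))) := by
  induction m with
  | zero =>
    obtain ⟨y, γ, h⟩ := hb 0 le_rfl
    exact ⟨y, γ, γ, [], rfl, h, h, by simp, by simp, by simp, by simp⟩
  | succ m ih =>
    obtain ⟨y, γ, γ', l, hl, h1, h2, h3, h4, h5, h6⟩ := ih (fun r hr => hb r (by omega))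
    obtain ⟨y', γ'', h7⟩ := hb (m + 1) le_rfl
    have h8 := hadj (a + m)
    rw [add_assoc, h2, h7, adj_bb] at h8
    obtain ⟨rfl, i, h8, h9⟩ := h8
    refine ⟨y, γ, γ'', l ++ [i], by simp [hl], h1, h7, ?_, ?_, ?_, ?_⟩
    · rw [h8, h3]; simp [mul_assoc]
    · rw [List.isChain_append]
      refine ⟨h4, by simp, ?_⟩
      intro i' hi' j hj
      simp at hj
      subst hj
      rintro rfl
      obtain ⟨n, rfl, h⟩ := h6 i' hi'
      apply hnb (a + n)
      rw [h, ← h8, ← h7]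
      rfl
    · intro hm
      rcases l with _ | ⟨c, l⟩
      · simp
        rintro rfl
        obtain ⟨δ, hδ⟩ := hm
        simp at h3
        subst h3
        exact h9 rfl δ hδ
      · simpa using h5 hm
    · intro j hj
      simp at hj
      subst hj
      refine ⟨m, rfl, ?_⟩
      rw [h2, h8, B.H.mul_cancel']

theorem no_short (h : A → ℕ)
    (hh : ∀ t k k' t' t'', B.nt t k = Sum.inl t' → B.nt t k' = Sum.inl t'' → h t' ≤ h t →
      h t'' ≤ h t → k = k')
    (x : ℕ → VX A D Y Γ) (hadj : ∀ j, B.G.Adj (x j) (x (j + 1)))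
    (hnb : ∀ j, x (j + 2) ≠ x j) (k : ℕ) (hk : 1 ≤ k) (hkR : k ≤ R)
    (hper : ∀ j, x (j + k) = x j) : False := by
  have hkL : k ≤ L := hkR.trans B.hRL
  have hperm : ∀ m j, x (j + m * k) = x j := by
    intro m j
    induction m with
    | zero => simp
    | succ m ih => rw [add_mul, one_mul, ← add_assoc, hper, ih]
  by_cases hmark : ∃ j δ, x j = Sum.inr (Sum.inl δ)
  · -- a mark is visited
    obtain ⟨j0, δ0, hj0⟩ := hmark
    have hblob : ∃ a, j0 < a ∧ ∃ y γ, x a = Sum.inr (Sum.inr (y, γ)) := by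
      have e : j0 + k - 1 + 1 = j0 + k := by omega
      have h1 := hadj (j0 + k)
      have h2 := hadj (j0 + k - 1)
      have h3 := hnb (j0 + k - 1)
      rw [e, hper, hj0] at h2
      rw [hper, hj0] at h1
      rw [show j0 + k - 1 + 2 = j0 + k + 1 by omega] at h3
      rcases h4 : x (j0 + k + 1) with t | δ | ⟨y, γ⟩
      · rcases h5 : x (j0 + k - 1) with t' | δ' | ⟨y', γ'⟩
        · rw [h4, adj_mt] at h1
          rw [h5, adj_tm] at h2
          exact absurd (by rw [h4, h5, ← h1, ← h2]) h3
        · rw [h5] at h2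
          exact absurd h2 (B.not_adj_mm _ _)
        · refine ⟨j0 + k - 1 + k, by omega, y', γ', ?_⟩
          rw [hper, h5]
      · rw [h4] at h1
        exact absurd h1 (B.not_adj_mm _ _)
      · exact ⟨j0 + k + 1, by omega, y, γ, h4⟩
    have hstart : ∃ j δ, x j = Sum.inr (Sum.inl δ) ∧ ∃ y γ, x (j + 1) = Sum.inr (Sum.inr (y, γ)) := by
      classical
      obtain ⟨h1, y, γ, h2⟩ := Nat.find_spec hblob
      have h3 : ∀ m < Nat.find hblob, _ := fun m hm => Nat.find_min hblob hm
      set a := Nat.find hblob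
      obtain ⟨j, hj⟩ : ∃ j, a = j + 1 := ⟨a - 1, by omega⟩
      rw [hj] at h2
      refine ⟨j, ?_⟩
      have h4 := hadj j
      rcases h5 : x j with t | δ | ⟨y', γ'⟩
      · rw [h5, h2] at h4
        exact absurd h4 (B.not_adj_tb _ _ _)
      · exact ⟨δ, rfl, y, γ, h2⟩
      · rcases Nat.lt_or_ge j0 j with h6 | h6
        · exact absurd ⟨h6, y', γ', h5⟩ (h3 j (by omega))
        · have : j = j0 := by omega
          rw [this, hj0] at h5
          simp at h5
    clear hblob hj0 δ0 j0
    obtain ⟨j, δ, hj, y0, γ0, hj1⟩ := hstart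
    have hend : ∃ m, ¬ ∃ y γ, x (j + 1 + m) = Sum.inr (Sum.inr (y, γ)) := by
      refine ⟨k - 1, ?_⟩
      rw [show j + 1 + (k - 1) = j + k by omega, hper, hj]
      simp
    classical
    have h1 := Nat.find_spec hend
    have h2 : ∀ m < Nat.find hend, _ := fun m hm => Nat.find_min hend hm
    have h2' : Nat.find hend ≤ k - 1 := by
      apply Nat.find_min' hend
      rw [show j + 1 + (k - 1) = j + k by omega, hper, hj]
      simp
    set m := Nat.find hend
    have hm0 : m ≠ 0 := by
      intro h0
      rw [h0, add_zero, hj1] at h1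
      simp at h1
    obtain ⟨n, hn⟩ : ∃ n, m = n + 1 := ⟨m - 1, by omega⟩
    clear_value m
    subst hn
    obtain ⟨y, γ, γ', l, hl, g1, g2, g3, g4, g5, g6⟩ := B.bwalk x hadj hnb (j + 1) n
      (fun r hr => by have := h2 r (by omega); push Not at this; exact this)
    have h3 := hadj j
    rw [hj, g1, adj_mb] at h3
    have h4 := hadj (j + 1 + n)
    rw [g2] at h4
    rcases h5 : x (j + 1 + (n + 1)) with t | δ' | ⟨y', γ''⟩
    · rw [add_assoc, h5] at h4
      exact B.not_adj_bt _ _ _ h4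
    · rw [add_assoc, h5, adj_bm] at h4
      by_cases hd : δ = δ'
      · subst hd
        have key : γ' = γ ∨ γ' = γ * B.H.s 0 := by
          obtain ⟨_, h3 | h3⟩ := h3 <;> obtain ⟨_, h4 | h4⟩ := h4
          · left; rw [h3, h4]
          · right; rw [h3, h4]
          · right; rw [h3, h4, B.H.mul_cancel']
          · left; rw [h3, h4]
        rcases key with key | key
        · have : (l.map B.H.s).prod = (([] : List (Fin 3)).map B.H.s).prod := by
            rw [key] at g3; simpa using g3
          have := B.H.inj l [] g4 (by simp) (by omega) (by simp) this
          subst this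
          simp at hl
          subst hl
          exact hnb j (h5.trans hj.symm)
        · have : (l.map B.H.s).prod = (([0] : List (Fin 3)).map B.H.s).prod := by
            rw [key] at g3; simpa using g3.symm
          have := B.H.inj l [0] g4 (by simp) (by omega) (by simpa using B.hL1) this
          subst this
          exact g5 ⟨δ, h3⟩ rfl
      · obtain ⟨_, h3 | h3⟩ := h3 <;> obtain ⟨_, h4 | h4⟩ := h4
        · refine B.far δ δ' hd l (by omega) ?_
          rw [← h3, ← h4, g3]
        · refine B.far δ δ' hd (l ++ [0]) (by simp; omega) ?_
          rw [← h3]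
          simp only [List.map_append, List.prod_append, List.map_cons, List.map_nil, List.prod_singleton]
          rw [← mul_assoc, ← g3, h4, B.H.mul_cancel']
        · refine B.far δ δ' hd (0 :: l) (by simp; omega) ?_
          simp only [List.map_cons, List.prod_cons]
          rw [← mul_assoc, ← h3, ← g3, h4]
        · refine B.far δ δ' hd (0 :: (l ++ [0])) (by simp; omega) ?_
          simp only [List.map_append, List.prod_append, List.map_cons, List.map_nil, List.prod_nil,
            List.prod_cons, mul_one]
          rw [← mul_assoc, ← h3, ← mul_assoc, ← g3, h4, B.H.mul_cancel']
    · exact h1 ⟨y', γ'', h5⟩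
  · push Not at hmark
    rcases h0 : x 0 with t | δ | ⟨y, γ⟩
    · -- all trivial
      have hall : ∀ j, ∃ t, x j = Sum.inl t := by
        intro j
        induction j with
        | zero => exact ⟨t, h0⟩
        | succ j ih =>
          obtain ⟨t, ht⟩ := ih
          have h1 := hadj j
          rcases h2 : x (j + 1) with t' | δ | ⟨y, γ⟩
          · exact ⟨t', rfl⟩
          · exact absurd h2 (hmark _ _)
          · rw [ht, h2] at h1
            exact absurd h1 (B.not_adj_tb _ _ _)
      choose t ht using hall
      obtain ⟨j0, _, hmax⟩ := Finset.exists_max_image (Finset.range k) (fun j => h (t j))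
        ⟨0, by simp; omega⟩
      have htper : ∀ j, t (j % k) = t j := by
        intro j
        have h1 := hperm (j / k) (j % k)
        rw [mul_comm, Nat.mod_add_div, ht, ht] at h1
        exact (Sum.inl.inj h1).symm
      have hmax' : ∀ j, h (t j) ≤ h (t j0) := by
        intro j
        rw [← htper j]
        exact hmax _ (by simpa using Nat.mod_lt _ (by omega))
      have e1 : t (j0 + k - 1 + 1) = t j0 := by
        have := hper j0
        rw [ht, ht] at this
        rw [show j0 + k - 1 + 1 = j0 + k by omega]
        exact Sum.inl.inj this
      have a1 := (hadj (j0 + k - 1)).symm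
      have a2 := hadj (j0 + k - 1 + 1)
      have a3 := hnb (j0 + k - 1)
      rw [ht, ht] at a1 a2 a3
      rw [adj_tt] at a1 a2
      obtain ⟨k1, a1⟩ := a1
      obtain ⟨k2, a2⟩ := a2
      have := hh _ k1 k2 _ _ a1 a2 (by rw [e1]; exact hmax' _) (by rw [e1]; exact hmax' _)
      subst this
      rw [a1] at a2
      exact a3 (by rw [Sum.inl.inj a2])
    · exact hmark _ _ h0
    · have hall : ∀ j, ∃ y γ, x j = Sum.inr (Sum.inr (y, γ)) := by
        intro j
        induction j with
        | zero => exact ⟨y, γ, h0⟩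
        | succ j ih =>
          obtain ⟨y, γ, ht⟩ := ih
          have h1 := hadj j
          rcases h2 : x (j + 1) with t' | δ | ⟨y', γ'⟩
          · rw [ht, h2] at h1
            exact absurd h1 (B.not_adj_bt _ _ _)
          · exact absurd h2 (hmark _ _)
          · exact ⟨y', γ', rfl⟩
      obtain ⟨y, γ, γ', l, hl, g1, g2, g3, g4, -, -⟩ := B.bwalk x hadj hnb 0 k (fun r _ => hall _)
      rw [hper, g1] at g2
      simp at g2
      subst g2
      have : (l.map B.H.s).prod = (([] : List (Fin 3)).map B.H.s).prod := by simpa using g3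
      have := B.H.inj l [] g4 (by simp) (by omega) (by simp) this
      subst this
      simp at hl
      omega

theorem cycle_long (h : A → ℕ)
    (hh : ∀ t k k' t' t'', B.nt t k = Sum.inl t' → B.nt t k' = Sum.inl t'' → h t' ≤ h t →
      h t'' ≤ h t → k = k') (u : VX A D Y Γ) (w : B.G.Walk u u) (hw : w.IsCycle) :
    R < w.length := by
  by_contra hlt
  have h3 := hw.three_le_length
  set k := w.length with hk
  have hsucc : ∀ j, w.getVert ((j + 1) % k) = w.getVert (j % k + 1) := by
    intro j
    rcases Nat.lt_or_ge (j % k + 1) k with h | h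
    · rw [Nat.add_mod, Nat.mod_eq_of_lt (show 1 < k by omega), Nat.mod_eq_of_lt h]
    · have h' : j % k + 1 = k := by have := Nat.mod_lt j (show 0 < k by omega); omega
      rw [Nat.add_mod, Nat.mod_eq_of_lt (show 1 < k by omega), h', Nat.mod_self]
      simp [hk]
  refine B.no_short h hh (fun j => w.getVert (j % k)) ?_ ?_ k (by omega) (by omega) ?_
  · intro j
    simp only [hsucc]
    exact w.adj_getVert_succ (Nat.mod_lt j (by omega))
  · intro j h
    have := hw.getVert_injOn' (show (j + 2) % k ∈ _ from ?_) (show j % k ∈ _ from ?_) h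
    · have h5 : (j + 2) ≡ j + 0 [MOD k] := this
      have := Nat.ModEq.add_left_cancel' j h5
      have := Nat.mod_eq_of_modEq this (by omega)
      rw [Nat.mod_eq_of_lt (by omega)] at this
      omega
    · have := Nat.mod_lt (j + 2) (show 0 < k by omega); simp; omega
    · have := Nat.mod_lt j (show 0 < k by omega); simp; omega
  · intro j
    simp

end Bld

end girth

/-! ### Part 5: cyclic connectivity of the expanded graph -/

section conn

open SimpleGraph

theorem cubic_not_acyclic {V : Type} [Finite V] [Nonempty V] {G : SimpleGraph V} (hG : IsCubic G) :
    ¬ G.IsAcyclic := by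
  intro hac
  have key : ∀ n : ℕ, ∃ (u v : V) (p : G.Walk u v), p.IsPath ∧ p.length = n := by
    intro n
    induction n with
    | zero =>
      obtain ⟨v⟩ := (inferInstance : Nonempty V)
      exact ⟨v, v, Walk.nil, by simp, rfl⟩
    | succ n ih =>
      obtain ⟨u, v, p, hp, hl⟩ := ih
      have h1 : ∃ w ∈ G.neighborSet v, w ≠ p.penultimate := by
        by_contra hcon
        push Not at hcon
        have h2 : G.neighborSet v ⊆ {p.penultimate} := fun w hw => hcon w hw
        have h3 := Set.ncard_le_ncard h2 (Set.toFinite _)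
        rw [hG v, Set.ncard_singleton] at h3
        omega
      obtain ⟨w, hw, hne⟩ := h1
      have hw' : G.Adj v w := hw
      refine ⟨u, w, p.concat hw', ?_, by simp [hl]⟩
      refine hp.concat ?_ hw'
      intro hmem
      exact hne (hac.eq_penultimate_of_adj_end hp hw' hmem)
  cases nonempty_fintype V
  obtain ⟨u, v, p, hp, hl⟩ := key (Fintype.card V)
  have := hp.length_lt
  omega

theorem girth_ge {V : Type} [Finite V] [Nonempty V] {G : SimpleGraph V} (hG : IsCubic G) (n : ℕ)
    (h : ∀ u (w : G.Walk u u), w.IsCycle → n ≤ w.length) : n ≤ G.girth := by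
  obtain ⟨a, w, hw, he⟩ := exists_girth_eq_length.2 (cubic_not_acyclic hG)
  rw [he]
  exact h a w hw

theorem cycle_length_le_s10 {V : Type} [Finite V] {G : SimpleGraph V} {u : V} (w : G.Walk u u)
    (hw : w.IsCycle) (T : Set V) (hT : ∀ v ∈ w.support, v ∈ T) : w.length ≤ T.ncard := by
  classical
  have h1 : w.support.tail.Nodup := hw.support_nodup
  have h2 : w.support.tail.length = w.length := by simp
  rw [← h2, ← List.toFinset_card_of_nodup h1, ← Set.ncard_coe_finset]
  apply Set.ncard_le_ncard _ (Set.toFinite _)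
  intro v hv
  simp at hv
  exact hT v (List.mem_of_mem_tail hv)

theorem hasCycle_induce {V : Type} [Finite V] {G : SimpleGraph V} {S : Set V}
    (h : HasCycle (G.induce S)) : ∃ u, ∃ w : G.Walk u u, w.IsCycle ∧ w.length ≤ S.ncard := by
  obtain ⟨u, w, hw⟩ := h
  let f : G.induce S →g G := (Embedding.induce (G := G) S).toHom
  have hf : Function.Injective f := (Embedding.induce (G := G) S).injective
  have hc : (w.map f).IsCycle := (Walk.isCycle_map_iff_of_injective hf).2 hw
  refine ⟨f u, w.map f, hc, ?_⟩
  apply cycle_length_le_s10 _ hc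
  intro v hv
  simp only [Walk.support_map, List.mem_map] at hv
  obtain ⟨a, _, rfl⟩ := hv
  exact a.2

theorem cutpairs {V : Type} [Finite V] (G : SimpleGraph V) (S : Set V) :
    {q : V × V | q.1 ∈ S ∧ q.2 ∉ S ∧ G.Adj q.1 q.2}.ncard ≤
      {e ∈ G.edgeSet | ∃ a ∈ S, ∃ b ∈ Sᶜ, e = s(a, b)}.ncard := by
  apply Set.ncard_le_ncard_of_injOn (fun q => s(q.1, q.2)) _ _ (Set.toFinite _)
  · rintro ⟨a, b⟩ ⟨ha, hb, hab⟩
    exact ⟨hab, a, ha, b, hb, rfl⟩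
  · rintro ⟨a, b⟩ ⟨ha, hb, -⟩ ⟨c, d⟩ ⟨hc, hd, -⟩ h
    simp only [Sym2.eq_iff] at h
    rcases h with ⟨rfl, rfl⟩ | ⟨rfl, rfl⟩
    · rfl
    · exact absurd ha hd

namespace Bld

variable {A D Y Γ : Type} [Group Γ] {L R : ℕ} (B : Bld A D Y Γ L R)

/-- A template edge crosses the cut given by `sA`, `sY`. -/
def Crosses (sA : A → Prop) (sY : Y → Prop) : Sym2 A ⊕ D → Prop
  | Sum.inl e => ∃ t t', e = s(t, t') ∧ (∃ k, B.nt t k = Sum.inl t') ∧ sA t ∧ ¬ sA t'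
  | Sum.inr δ => ¬ (sA (B.bt δ) ↔ sY (B.bl δ))

/-- The template has no small cut between blobs. -/
def Conn4 : Prop := ∀ (sA : A → Prop) (sY : Y → Prop) (y y' : Y), sY y → ¬ sY y' →
  ∃ f : Fin 4 → Sym2 A ⊕ D, Function.Injective f ∧ ∀ i, B.Crosses sA sY (f i)

theorem small_side [Finite A] [Finite D] [Finite Y] (S : Set (VX A D Y Γ))
    (h : ∀ y γ γ', Sum.inr (Sum.inr (y, γ)) ∈ S → Sum.inr (Sum.inr (y, γ')) ∈ S → γ = γ') :
    S.ncard ≤ Nat.card (A ⊕ (D ⊕ Y)) := by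
  rw [← Set.ncard_univ]
  apply Set.ncard_le_ncard_of_injOn (fun v => Sum.map id (Sum.map id Prod.fst) v) _ _ (Set.toFinite _)
  · intro _ _; trivial
  · rintro (t | δ | ⟨y, γ⟩) h1 (t' | δ' | ⟨y', γ'⟩) h2 h3 <;> simp at h3 ⊢
    · exact h3
    · exact h3
    · subst h3
      exact ⟨rfl, h _ _ _ h1 h2⟩

open scoped Classical in
theorem ecut_le [Fintype Γ] [Finite A] [Finite D] [Finite Y] (S : Set (VX A D Y Γ)) (y : Y) :
    B.H.ecut (Finset.univ.filter fun γ => Sum.inr (Sum.inr (y, γ)) ∈ S) ≤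
      {q : VX A D Y Γ × VX A D Y Γ | q.1 ∈ S ∧ q.2 ∉ S ∧ B.G.Adj q.1 q.2}.ncard := by
  unfold Host.ecut
  rw [← Finset.card_sigma, ← Set.ncard_coe_finset]
  have hv : ∀ i γ, B.nbr (Sum.inr (Sum.inr (y, γ))) i ∈ S →
      Sum.inr (Sum.inr (y, γ * B.H.s i)) ∉ S → i = 0 ∧ ∃ δ, B.Mk δ y γ ∧
        B.nbr (Sum.inr (Sum.inr (y, γ))) i = Sum.inr (Sum.inl δ) := by
    intro i γ h1 h2
    by_cases h : i = 0 ∧ ∃ δ, B.Mk δ y γ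
    · obtain ⟨rfl, δ, h⟩ := h
      exact ⟨rfl, δ, h, B.nbr_bm h⟩
    · rw [nbr_b_def, dif_neg h] at h1
      exact absurd h1 h2
  apply Set.ncard_le_ncard_of_injOn (fun q : (_ : Fin 3) × Γ =>
    if B.nbr (Sum.inr (Sum.inr (y, q.2))) q.1 ∈ S then
      (B.nbr (Sum.inr (Sum.inr (y, q.2))) q.1, Sum.inr (Sum.inr (y, q.2 * B.H.s q.1)))
    else (Sum.inr (Sum.inr (y, q.2)), B.nbr (Sum.inr (Sum.inr (y, q.2))) q.1)) _ _ (Set.toFinite _)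
  · rintro ⟨i, γ⟩ h
    simp at h
    obtain ⟨h1, h2⟩ := h
    simp only
    split_ifs with h3
    · refine ⟨h3, h2, ?_⟩
      obtain ⟨rfl, δ, h4, h5⟩ := hv i γ h3 h2
      simp only [h5]
      rw [adj_mb]
      exact B.Mk_mul h4
    · refine ⟨h1, h3, ?_⟩
      rw [adj_iff_nbr]
      exact ⟨i, rfl⟩
  · rintro ⟨i, γ⟩ h ⟨i', γ'⟩ h' he
    simp at h h'
    obtain ⟨h1, h2⟩ := h
    obtain ⟨h1', h2'⟩ := h'
    simp only at he
    split_ifs at he with h3 h3' h3'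
    · obtain ⟨rfl, δ, h4, h5⟩ := hv i γ h3 h2
      obtain ⟨rfl, δ', h4', h5'⟩ := hv i' γ' h3' h2'
      simp at he
      rw [he.2]
    · obtain ⟨rfl, δ, h4, h5⟩ := hv i γ h3 h2
      rw [h5] at he
      simp at he
    · obtain ⟨rfl, δ, h4, h5⟩ := hv i' γ' h3' h2'
      rw [h5] at he
      simp at he
    · simp at he
      obtain ⟨rfl, he⟩ := he
      rw [B.nbr_inj _ he]

theorem cyc_conn [Finite Γ] [Finite A] [Finite D] [Finite Y] (hC : B.Conn4)
    (hlong : ∀ u (w : B.G.Walk u u), w.IsCycle → Nat.card (A ⊕ (D ⊕ Y)) < w.length) :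
    CyclicallyEdgeConnected B.G 4 := by
  intro S hS hS'
  by_contra hlt
  have hP := cutpairs B.G S
  set P := {q : VX A D Y Γ × VX A D Y Γ | q.1 ∈ S ∧ q.2 ∉ S ∧ B.G.Adj q.1 q.2} with hPdef
  have hP3 : P.ncard ≤ 3 := by omega
  clear hlt hP
  cases nonempty_fintype Γ
  classical
  have hmaj : ∀ y, (∀ γ γ', Sum.inr (Sum.inr (y, γ)) ∈ S → Sum.inr (Sum.inr (y, γ')) ∈ S → γ = γ') ∨
      (∀ γ γ', Sum.inr (Sum.inr (y, γ)) ∉ S → Sum.inr (Sum.inr (y, γ')) ∉ S → γ = γ') := by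
    intro y
    have h1 := B.H.ecut_ge_four (B.hR.trans B.hRL) _ ((B.ecut_le S y).trans hP3)
    rw [Finset.card_le_one, Finset.card_le_one] at h1
    simp only [Finset.mem_filter, Finset.mem_univ, true_and, Finset.mem_compl] at h1
    exact h1.imp (fun h γ γ' h1 h2 => h γ h1 γ' h2) (fun h γ γ' h1 h2 => h γ h1 γ' h2)
  obtain ⟨sY, hsY⟩ : ∃ sY : Y → Prop, ∀ y,
      (¬ sY y → ∀ γ γ', Sum.inr (Sum.inr (y, γ)) ∈ S → Sum.inr (Sum.inr (y, γ')) ∈ S → γ = γ') ∧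
      (sY y → ∀ γ γ', Sum.inr (Sum.inr (y, γ)) ∉ S → Sum.inr (Sum.inr (y, γ')) ∉ S → γ = γ') := by
    refine ⟨fun y => ¬ ∀ γ γ', Sum.inr (Sum.inr (y, γ)) ∈ S → Sum.inr (Sum.inr (y, γ')) ∈ S → γ = γ',
      fun y => ⟨fun h => not_not.1 h, fun h => (hmaj y).resolve_left h⟩⟩
  by_cases hconst : ∃ y y', sY y ∧ ¬ sY y'
  · obtain ⟨y, y', hy, hy'⟩ := hconst
    obtain ⟨f, hf, hcr⟩ := hC (fun t => Sum.inl t ∈ S) sY y y' hy hy'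
    let T : Sym2 A ⊕ D → VX A D Y Γ × VX A D Y Γ → Prop := fun e q =>
      match e with
      | Sum.inl e => ∃ t t', q = (Sum.inl t, Sum.inl t') ∧ e = s(t, t')
      | Sum.inr δ => q.1 = Sum.inr (Sum.inl δ) ∨ q.2 = Sum.inr (Sum.inl δ)
    have hex : ∀ e, B.Crosses (fun t => Sum.inl t ∈ S) sY e → ∃ q ∈ P, T e q := by
      rintro (e | δ) he
      · obtain ⟨t, t', rfl, hadj, h1, h2⟩ := he
        exact ⟨(Sum.inl t, Sum.inl t'), ⟨h1, h2, hadj⟩, t, t', rfl, rfl⟩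
      · have hne := B.H.mul_s_ne B.hL1 (B.p δ) 0
        have hm1 : B.Mk δ (B.bl δ) (B.p δ) := ⟨rfl, Or.inl rfl⟩
        have hm2 : B.Mk δ (B.bl δ) (B.p δ * B.H.s 0) := ⟨rfl, Or.inr rfl⟩
        have hta : B.G.Adj (Sum.inl (B.bt δ)) (Sum.inr (Sum.inl δ)) := (B.adj_tm _ _).2 rfl
        by_cases hs : sY (B.bl δ)
        · have ht : Sum.inl (B.bt δ) ∉ S := fun h => he (iff_of_true h hs)
          have : ∃ γ, B.Mk δ (B.bl δ) γ ∧ Sum.inr (Sum.inr (B.bl δ, γ)) ∈ S := by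
            by_contra hcon
            push Not at hcon
            exact hne ((hsY _).2 hs _ _ (hcon _ hm2) (hcon _ hm1))
          obtain ⟨γ, hm, hγ⟩ := this
          by_cases hd : (Sum.inr (Sum.inl δ) : VX A D Y Γ) ∈ S
          · exact ⟨(Sum.inr (Sum.inl δ), Sum.inl (B.bt δ)), ⟨hd, ht, hta.symm⟩, Or.inl rfl⟩
          · exact ⟨(Sum.inr (Sum.inr (B.bl δ, γ)), Sum.inr (Sum.inl δ)),
              ⟨hγ, hd, (B.adj_bm _ _ _).2 hm⟩, Or.inr rfl⟩
        · have ht : Sum.inl (B.bt δ) ∈ S := by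
            by_contra h
            exact he (iff_of_false h hs)
          have : ∃ γ, B.Mk δ (B.bl δ) γ ∧ Sum.inr (Sum.inr (B.bl δ, γ)) ∉ S := by
            by_contra hcon
            push Not at hcon
            exact hne ((hsY _).1 hs _ _ (hcon _ hm2) (hcon _ hm1))
          obtain ⟨γ, hm, hγ⟩ := this
          by_cases hd : (Sum.inr (Sum.inl δ) : VX A D Y Γ) ∈ S
          · exact ⟨(Sum.inr (Sum.inl δ), Sum.inr (Sum.inr (B.bl δ, γ))),
              ⟨hd, hγ, (B.adj_mb _ _ _).2 hm⟩, Or.inl rfl⟩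
          · exact ⟨(Sum.inl (B.bt δ), Sum.inr (Sum.inl δ)), ⟨ht, hd, hta⟩, Or.inr rfl⟩
    choose q hqP hqT using fun i => hex (f i) (hcr i)
    have hqinj : Function.Injective q := by
      intro i j hij
      apply hf
      have h1 := hqT i
      have h2 := hqT j
      have h3 := hqP j
      rw [hij] at h1
      generalize f i = a at *
      generalize f j = b at *
      rcases a with e | δ <;> rcases b with e' | δ'
      · obtain ⟨t, t', h4, rfl⟩ := h1
        obtain ⟨u, u', h5, rfl⟩ := h2
        rw [h4] at h5
        simp at h5
        rw [h5.1, h5.2]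
      · obtain ⟨t, t', h4, rfl⟩ := h1
        simp [T, h4] at h2
      · obtain ⟨t, t', h4, rfl⟩ := h2
        simp [T, h4] at h1
      · have h4 := h3.2.2
        rcases h1 with h1 | h1 <;> rcases h2 with h2 | h2
        · rw [h1] at h2; simpa using h2
        · rw [h1, h2] at h4; exact absurd h4 (B.not_adj_mm _ _)
        · rw [h1, h2] at h4; exact absurd h4 (B.not_adj_mm _ _)
        · rw [h1] at h2; simpa using h2
    have : (Set.range q).ncard ≤ P.ncard := by
      apply Set.ncard_le_ncard _ (Set.toFinite _)
      rintro _ ⟨i, rfl⟩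
      exact hqP i
    rw [← Set.image_univ, Set.ncard_image_of_injective _ hqinj, Set.ncard_univ] at this
    simp at this
    omega
  · push Not at hconst
    by_cases hall : ∀ y, ¬ sY y
    · obtain ⟨u, w, hw, hl⟩ := hasCycle_induce hS
      have h1 := hlong u w hw
      have h2 := small_side S (fun y => (hsY y).1 (hall y))
      omega
    · push Not at hall
      obtain ⟨y0, hy0⟩ := hall
      obtain ⟨u, w, hw, hl⟩ := hasCycle_induce hS'
      have h1 := hlong u w hw
      have h2 := small_side Sᶜ (fun y => (hsY y).2 (hconst y0 y hy0))
      omega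

end Bld

end conn

/-! ### Part 6: flows with values in the Klein group -/

section flows

open SimpleGraph

/-- The Klein group. -/
abbrev KW : Type := ZMod 2 × ZMod 2

theorem KW.add_self (x : KW) : x + x = 0 := by revert x; decide

theorem KW.two : (2 : KW) = 0 := by decide

/-- three nonzero elements -/
def kcol : Fin 3 → KW := ![(1, 0), (0, 1), (1, 1)]

theorem kcol_ne (i : Fin 3) : kcol i ≠ 0 := by revert i; decide

theorem kcol_sum : ∀ i j k : Fin 3, i ≠ j → i ≠ k → j ≠ k → kcol i + kcol j + kcol k = 0 := by decide

theorem colour_flow {V : Type} {G : SimpleGraph V} (nb : V → Fin 3 → V)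
    (hadj : ∀ u v, G.Adj u v ↔ ∃ k, nb u k = v) (hinj : ∀ u, Function.Injective (nb u))
    (h : Is3EdgeColorable G) :
    ∃ c : Sym2 V → KW, (∀ e, c e ≠ 0) ∧ ∀ v, ∑ k, c s(v, nb v k) = 0 := by
  obtain ⟨c, hc⟩ := h
  refine ⟨fun e => kcol (c e), fun e => kcol_ne _, fun v => ?_⟩
  have key : ∀ i j, i ≠ j → c s(v, nb v i) ≠ c s(v, nb v j) := by
    intro i j hij
    apply hc
    · exact (hadj _ _).2 ⟨i, rfl⟩
    · exact (hadj _ _).2 ⟨j, rfl⟩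
    · intro he
      rw [Sym2.congr_right] at he
      exact hij (hinj v he)
    · exact ⟨v, by simp, by simp⟩
  rw [Fin.sum_univ_three]
  exact kcol_sum _ _ _ (key _ _ (by decide)) (key _ _ (by decide)) (key _ _ (by decide))

theorem inj_aux (k1 k2 a b : Fin 3) (F : Fin 3 → Fin 3) (hk : k1 ≠ k2) (hab : a ≠ b) (ha : a ≠ 2)
    (hb : b ≠ 2) (e1 : F k1 = a) (e2 : F k2 = b) (e3 : ∀ k, k ≠ k1 → k ≠ k2 → F k = 2) :
    Function.Injective F := by
  intro i j hij
  by_cases h1 : i = k1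
  · by_cases h2 : j = k1
    · rw [h1, h2]
    · by_cases h3 : j = k2
      · rw [h1, h3, e1, e2] at hij; exact absurd hij hab
      · rw [h1, e1, e3 j h2 h3] at hij; exact absurd hij ha
  · by_cases h1' : i = k2
    · by_cases h2 : j = k1
      · rw [h1', h2, e1, e2] at hij; exact absurd hij.symm hab
      · by_cases h3 : j = k2
        · rw [h1', h3]
        · rw [h1', e2, e3 j h2 h3] at hij; exact absurd hij hb
    · by_cases h2 : j = k1
      · rw [h2, e1, e3 i h1 h1'] at hij; exact absurd hij.symm ha
      · by_cases h3 : j = k2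
        · rw [h3, e2, e3 i h1 h1'] at hij; exact absurd hij.symm hb
        · clear hij e1 e2 e3 hab ha hb
          revert i j k1 k2; decide

theorem cycle_flow {V : Type} {G : SimpleGraph V} (nb : V → Fin 3 → V)
    (hadj : ∀ u v, G.Adj u v ↔ ∃ k, nb u k = v) (hinj : ∀ u, Function.Injective (nb u))
    {z : V} (w : G.Walk z z) (hw : w.IsCycle) :
    ∃ c : Sym2 V → KW, (∀ e, c e ≠ 0) ∧ ∀ v ∈ w.support, v ≠ z → ∑ k, c s(v, nb v k) = 0 := by
  classical
  set x : ℕ → V := w.getVert with hx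
  set n := w.length with hn
  let q : Sym2 V → Fin 3 := fun e =>
    if ∃ m < n, m % 2 = 0 ∧ s(x m, x (m + 1)) = e then 0
    else if ∃ m < n, m % 2 = 1 ∧ s(x m, x (m + 1)) = e then 1 else 2
  refine ⟨fun e => kcol (q e), fun e => kcol_ne _, ?_⟩
  intro v hv hvz
  rw [Walk.mem_support_iff_exists_getVert] at hv
  obtain ⟨j, hj, hjn⟩ := hv
  have hj0 : j ≠ 0 := by
    rintro rfl
    simp at hj
    exact hvz hj.symm
  have hjn' : j ≠ n := by
    rintro rfl
    simp [hn] at hj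
    exact hvz hj.symm
  have hjx : x j = v := hj
  have hlt : j < n := by omega
  have h1 : ∀ a b, a < n → b < n → x a = x b → a = b := by
    intro a b ha hb hab
    exact hw.getVert_injOn' (by simp; omega) (by simp; omega) hab
  have h2 : ∀ a b, 0 < a → a ≤ n → 0 < b → b ≤ n → x a = x b → a = b := by
    intro a b ha ha' hb hb' hab
    exact hw.getVert_injOn (by simp; omega) (by simp; omega) hab
  have h3 : ∀ u m, m < n → s(x m, x (m + 1)) = s(v, u) →
      (m = j ∧ u = x (j + 1)) ∨ (m + 1 = j ∧ u = x (j - 1)) := by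
    intro u m hm he
    rw [Sym2.eq_iff] at he
    rcases he with ⟨he, rfl⟩ | ⟨rfl, he⟩
    · have := h1 m j hm hlt (he.trans hjx.symm)
      subst this
      exact Or.inl ⟨rfl, rfl⟩
    · have := h2 (m + 1) j (by omega) (by omega) (by omega) (by omega) (he.trans hjx.symm)
      subst this
      exact Or.inr ⟨rfl, rfl⟩
  have hne : x (j + 1) ≠ x (j - 1) := by
    intro he
    have h3 := hw.three_le_length
    by_cases hj1 : j = 1
    · subst hj1
      have : x 0 = x n := by simp [hx, hn]
      rw [show 1 - 1 = 0 from rfl, this] at he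
      have := h2 _ _ (by omega) (by omega) (by omega) (by omega) he
      omega
    · have := h2 _ _ (by omega) (by omega) (by omega) (by omega) he
      omega
  have ha1 : G.Adj v (x (j + 1)) := by
    rw [← hjx]; exact w.adj_getVert_succ hlt
  have ha2 : G.Adj v (x (j - 1)) := by
    rw [← hjx]
    have := w.adj_getVert_succ (i := j - 1) (by omega)
    rw [show j - 1 + 1 = j by omega] at this
    exact this.symm
  have q1 : q s(v, x (j + 1)) = if j % 2 = 0 then 0 else 1 := by
    have key : ∀ r, (∃ m < n, m % 2 = r ∧ s(x m, x (m + 1)) = s(v, x (j + 1))) ↔ j % 2 = r := by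
      intro r
      constructor
      · rintro ⟨m, hm, hr, he⟩
        rcases h3 _ m hm he with ⟨rfl, -⟩ | ⟨-, he⟩
        · exact hr
        · exact absurd he hne
      · intro hr
        exact ⟨j, hlt, hr, by rw [hjx]⟩
    simp only [q, key]
    split_ifs <;> first | rfl | omega
  have q2 : q s(v, x (j - 1)) = if j % 2 = 0 then 1 else 0 := by
    have key : ∀ r, (∃ m < n, m % 2 = r ∧ s(x m, x (m + 1)) = s(v, x (j - 1))) ↔ (j - 1) % 2 = r := by
      intro r
      constructor
      · rintro ⟨m, hm, hr, he⟩
        rcases h3 _ m hm he with ⟨-, he⟩ | ⟨he, -⟩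
        · exact absurd he.symm hne
        · rw [← he]; exact hr
      · intro hr
        refine ⟨j - 1, by omega, hr, ?_⟩
        rw [show j - 1 + 1 = j by omega, hjx, Sym2.eq_swap]
    simp only [q, key]
    split_ifs <;> first | rfl | omega
  have q3 : ∀ u, u ≠ x (j + 1) → u ≠ x (j - 1) → q s(v, u) = 2 := by
    intro u hu hu'
    have key : ∀ r, ¬ (∃ m < n, m % 2 = r ∧ s(x m, x (m + 1)) = s(v, u)) := by
      rintro r ⟨m, hm, hr, he⟩
      rcases h3 _ m hm he with ⟨-, he⟩ | ⟨-, he⟩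
      · exact hu he
      · exact hu' he
    simp only [q, key, if_false]
  obtain ⟨k1, hk1⟩ := (hadj _ _).1 ha1
  obtain ⟨k2, hk2⟩ := (hadj _ _).1 ha2
  have hk12 : k1 ≠ k2 := by
    rintro rfl
    exact hne (hk1.symm.trans hk2)
  have hq : Function.Injective fun k => q s(v, nb v k) := by
    have e1 : q s(v, nb v k1) = if j % 2 = 0 then 0 else 1 := by rw [hk1]; exact q1
    have e2 : q s(v, nb v k2) = if j % 2 = 0 then 1 else 0 := by rw [hk2]; exact q2
    have e3 : ∀ k, k ≠ k1 → k ≠ k2 → q s(v, nb v k) = 2 := by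
      intro k h h'
      apply q3
      · rw [← hk1]; exact fun h'' => h (hinj v h'')
      · rw [← hk2]; exact fun h'' => h' (hinj v h'')
    obtain ⟨F, hF⟩ : ∃ F : Fin 3 → Fin 3, F = fun k => q s(v, nb v k) := ⟨_, rfl⟩
    rw [← hF]
    replace e1 : F k1 = if j % 2 = 0 then 0 else 1 := by rw [hF]; exact e1
    replace e2 : F k2 = if j % 2 = 0 then 1 else 0 := by rw [hF]; exact e2
    replace e3 : ∀ k, k ≠ k1 → k ≠ k2 → F k = 2 := by rw [hF]; exact e3
    clear hF
    clear * - e1 e2 e3 hk12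
    by_cases hp : j % 2 = 0
    · rw [if_pos hp] at e1 e2
      exact inj_aux k1 k2 _ _ F hk12 (by decide) (by decide) (by decide) e1 e2 e3
    · rw [if_neg hp] at e1 e2
      exact inj_aux k1 k2 _ _ F hk12 (by decide) (by decide) (by decide) e1 e2 e3
  rw [Fin.sum_univ_three]
  refine kcol_sum _ _ _ ?_ ?_ ?_ <;> exact fun h => absurd (hq h) (by decide)

namespace Bld

variable {A D Y Γ : Type} [Group Γ] {L R : ℕ} (B : Bld A D Y Γ L R)

open scoped Classical in
theorem blob_parity [Fintype Γ] [Fintype D] (y : Y) (c : Sym2 (VX A D Y Γ) → KW)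
    (hb : ∀ γ, ∑ k, c s(Sum.inr (Sum.inr (y, γ)), B.nbr (Sum.inr (Sum.inr (y, γ))) k) = 0)
    (hm : ∀ δ, B.bl δ = y → ∑ k, c s(Sum.inr (Sum.inl δ), B.nbr (Sum.inr (Sum.inl δ)) k) = 0) :
    ∑ δ with B.bl δ = y, c s(Sum.inl (B.bt δ), Sum.inr (Sum.inl δ)) = 0 := by
  have hi : ∀ i : Fin 3, i ≠ 0 →
      ∑ γ, c s(Sum.inr (Sum.inr (y, γ)), B.nbr (Sum.inr (Sum.inr (y, γ))) i) = 0 := by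
    intro i hi
    refine Finset.sum_involution (fun γ _ => γ * B.H.s i) ?_ ?_ (by simp) ?_
    · intro γ _
      rw [B.nbr_bi i hi, B.nbr_bi i hi, B.H.mul_cancel', Sym2.eq_swap]
      exact KW.add_self _
    · intro γ _ _
      exact B.H.mul_s_ne B.hL1 γ i
    · intro γ _
      exact B.H.mul_cancel' _ _
  have h0 : ∑ γ, c s(Sum.inr (Sum.inr (y, γ)), B.nbr (Sum.inr (Sum.inr (y, γ))) 0) = 0 := by
    have h1 : ∑ γ, ∑ k, c s(Sum.inr (Sum.inr (y, γ)), B.nbr (Sum.inr (Sum.inr (y, γ))) k) = 0 :=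
      Finset.sum_eq_zero fun γ _ => hb γ
    rw [Finset.sum_comm, Fin.sum_univ_three, hi 1 (by decide), hi 2 (by decide)] at h1
    simpa using h1
  set K : Γ → KW := fun γ => c s(Sum.inr (Sum.inr (y, γ)), B.nbr (Sum.inr (Sum.inr (y, γ))) 0) with hK
  set M : D → KW := fun δ => c s(Sum.inl (B.bt δ), Sum.inr (Sum.inl δ)) with hM
  have h2 : ∑ γ, (K γ + ∑ δ with B.bl δ = y, if γ = B.p δ then M δ else 0) = 0 := by
    refine Finset.sum_involution (fun γ _ => γ * B.H.s 0) ?_ ?_ (by simp) ?_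
    · intro γ _
      by_cases hmk : ∃ δ, B.Mk δ y γ
      · obtain ⟨δ, hδ⟩ := hmk
        have hd := hm δ hδ.1
        rw [Fin.sum_univ_three] at hd
        have hd' : M δ + K (B.p δ) + K (B.p δ * B.H.s 0) = 0 := by
          rw [← hd]
          have m1 : B.Mk δ y (B.p δ) := ⟨hδ.1, Or.inl rfl⟩
          have m2 := B.Mk_mul m1
          simp only [hK, hM, B.nbr_bm m1, B.nbr_bm m2]
          congr 1
          · congr 1
            · rw [Sym2.eq_swap]; rfl
            · rw [Sym2.eq_swap, ← hδ.1]; rfl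
          · rw [Sym2.eq_swap, ← hδ.1]; rfl
        have hs : ∀ γ', B.Mk δ y γ' → (∑ δ with B.bl δ = y, if γ' = B.p δ then M δ else 0) =
            if γ' = B.p δ then M δ else 0 := by
          intro γ' hγ'
          apply Finset.sum_eq_single δ
          · intro δ' h1 h2
            simp at h1
            rw [if_neg]
            intro h3
            exact h2 (B.Mk_unique ⟨h1, Or.inl h3⟩ hγ')
          · intro h1
            simp at h1
            exact absurd hδ.1 h1
        rw [hs _ hδ, hs _ (B.Mk_mul hδ)]
        have hne := B.H.mul_s_ne B.hL1 (B.p δ) 0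
        rcases hδ.2 with h3 | h3
        · rw [h3, if_pos rfl, if_neg hne]; refine Eq.trans ?_ hd'; abel
        · rw [h3, B.H.mul_cancel', if_pos rfl, if_neg hne]; refine Eq.trans ?_ hd'; abel
      · push Not at hmk
        have hmk' : ∀ δ, ¬ B.Mk δ y (γ * B.H.s 0) := by
          intro δ h
          have := B.Mk_mul h
          rw [B.H.mul_cancel'] at this
          exact hmk δ this
        have hs : ∀ γ', (∀ δ, ¬ B.Mk δ y γ') →
            (∑ δ with B.bl δ = y, if γ' = B.p δ then M δ else 0) = 0 := by
          intro γ' h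
          apply Finset.sum_eq_zero
          intro δ hδ
          simp at hδ
          rw [if_neg]
          intro h3
          exact h δ ⟨hδ, Or.inl h3⟩
        rw [hs _ hmk, hs _ hmk', add_zero, add_zero]
        simp only [hK]
        rw [B.nbr_b0 hmk, B.nbr_b0 hmk', B.H.mul_cancel', Sym2.eq_swap]
        exact KW.add_self _
    · intro γ _ _
      exact B.H.mul_s_ne B.hL1 γ 0
    · intro γ _
      exact B.H.mul_cancel' _ _
  rw [Finset.sum_add_distrib, h0, zero_add, Finset.sum_comm] at h2
  rw [← h2]
  apply Finset.sum_congr rfl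
  intro δ _
  simp

end Bld

end flows

/-! ### Part 7: the template of a petal -/

section template

namespace Tpl

/-- The three edges at each trivial vertex. -/
def inc : Fin 46 → Fin 3 → Fin 99 := ![
  ![0, 1, 2], ![0, 3, 4], ![1, 80, 84], ![2, 90, 94], ![3, 79, 89], ![4, 85, 95],
  ![5, 6, 7], ![5, 8, 9], ![6, 45, 49], ![7, 39, 55], ![8, 44, 54], ![9, 40, 50],
  ![10, 11, 12], ![10, 13, 14], ![11, 65, 69], ![12, 59, 75], ![13, 64, 74], ![14, 60, 70],
  ![15, 16, 17], ![15, 18, 96], ![16, 19, 46], ![17, 20, 41], ![18, 43, 48], ![19, 42, 98],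
  ![20, 47, 97], ![21, 22, 23], ![21, 24, 81], ![22, 25, 56], ![23, 26, 51], ![24, 53, 58],
  ![25, 52, 83], ![26, 57, 82], ![27, 28, 29], ![27, 30, 86], ![28, 31, 66], ![29, 32, 61],
  ![30, 63, 68], ![31, 62, 88], ![32, 67, 87], ![33, 34, 35], ![33, 36, 91], ![34, 37, 76],
  ![35, 38, 71], ![36, 73, 78], ![37, 72, 93], ![38, 77, 92]]

/-- Ends of the edges between trivial vertices. -/
def te : Fin 39 → Fin 46 × Fin 46 := ![
  (0, 1), (0, 2), (0, 3), (1, 4), (1, 5), (6, 7), (6, 8), (6, 9), (7, 10), (7, 11),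
  (12, 13), (12, 14), (12, 15), (13, 16), (13, 17), (18, 19), (18, 20), (18, 21), (19, 22), (20, 23),
  (21, 24), (25, 26), (25, 27), (25, 28), (26, 29), (27, 30), (28, 31), (32, 33), (32, 34), (32, 35),
  (33, 36), (34, 37), (35, 38), (39, 40), (39, 41), (39, 42), (40, 43), (41, 44), (42, 45)]

/-- Trivial ends of the darts. -/
def bt : Fin 60 → Fin 46 := ![
  9, 11, 21, 23, 22, 10, 8, 20, 24, 22, 8, 11, 28, 30, 29, 10, 9, 27, 31, 29,
  15, 17, 35, 37, 36, 16, 14, 34, 38, 36, 14, 17, 42, 44, 43, 16, 15, 41, 45, 43,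
  4, 2, 26, 31, 30, 2, 5, 33, 38, 37, 4, 3, 40, 45, 44, 3, 5, 19, 24, 23]

/-- Height in the forest of trivial vertices. -/
def ht : Fin 46 → ℕ := ![
  0, 1, 1, 1, 2, 2, 0, 1, 1, 1, 2, 2, 0, 1, 1, 1, 2, 2, 0, 1, 1, 1, 2,
  2, 2, 0, 1, 1, 1, 2, 2, 2, 0, 1, 1, 1, 2, 2, 2, 0, 1, 1, 1, 2, 2, 2]

/-- Decode an edge. -/
def ec (e : Fin 99) : Fin 39 ⊕ Fin 60 :=
  if h : e.1 < 39 then Sum.inl ⟨e.1, h⟩ else Sum.inr ⟨e.1 - 39, by omega⟩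

/-- Neighbours of trivial vertices. -/
def nt (t : Fin 46) (k : Fin 3) : Fin 46 ⊕ Fin 60 :=
  Sum.map (fun e => if (te e).1 = t then (te e).2 else (te e).1) id (ec (inc t k))

/-- Ends of an edge. -/
def ends (e : Fin 99) : (Fin 46 ⊕ Fin 12) × (Fin 46 ⊕ Fin 12) :=
  Sum.elim (fun e => (Sum.inl (te e).1, Sum.inl (te e).2))
    (fun d => (Sum.inl (bt d), Sum.inr ⟨d.1 / 5, by omega⟩)) (ec e)

/-- The list of edges is a walk from `u` to `v`. -/
def valid : (Fin 46 ⊕ Fin 12) → List (Fin 99) → (Fin 46 ⊕ Fin 12) → Bool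
  | u, [], v => decide (u = v)
  | u, e :: l, v => (decide ((ends e).1 = u) && valid (ends e).2 l v) ||
      (decide ((ends e).2 = u) && valid (ends e).1 l v)

/-- Four edge-disjoint paths from the central blob to each other blob. -/
def cert : Fin 11 → Fin 4 → List (Fin 99) := ![
  ![[98, 42],
    [97, 20, 41],
    [96, 18, 43],
    [95, 4, 3, 79, 83, 52, 50, 40]],
  ![[98, 19, 46],
    [97, 47],
    [96, 18, 48],
    [95, 4, 3, 79, 83, 52, 49, 45]],
  ![[98, 42, 40, 50],
    [97, 47, 45, 49],
    [96, 18, 43, 39, 55, 57, 26, 51],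
    [95, 4, 3, 79, 83, 52]],
  ![[98, 42, 40, 50, 52, 25, 56],
    [97, 47, 44, 54],
    [96, 18, 43, 39, 55],
    [95, 4, 3, 79, 82, 57]],
  ![[98, 42, 40, 50, 52, 83, 80, 84, 88, 62],
    [97, 47, 44, 54, 57, 82, 79, 89, 93, 72, 70, 60],
    [95, 85, 86, 30, 63],
    [94, 90, 92, 77, 75, 59]],
  ![[98, 42, 40, 50, 52, 83, 80, 84, 87, 67],
    [97, 47, 44, 54, 57, 82, 79, 89, 93, 72, 69, 65],
    [95, 85, 86, 30, 68],
    [94, 90, 92, 77, 74, 64]],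
  ![[98, 42, 40, 50, 52, 83, 80, 84, 88, 62, 60, 70],
    [97, 47, 44, 54, 57, 82, 79, 89, 93, 72],
    [95, 85, 87, 67, 65, 69],
    [94, 90, 91, 36, 73]],
  ![[98, 42, 40, 50, 52, 83, 80, 84, 88, 62, 59, 75],
    [97, 47, 44, 54, 57, 82, 79, 89, 92, 77],
    [95, 85, 87, 67, 64, 74],
    [94, 90, 91, 36, 78]],
  ![[98, 42, 40, 50, 52, 83],
    [97, 47, 44, 54, 57, 82],
    [96, 18, 43, 39, 55, 58, 24, 81],
    [95, 4, 3, 79]],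
  ![[98, 42, 40, 50, 52, 83, 80, 84],
    [97, 47, 44, 54, 57, 82, 79, 89, 93, 72, 70, 60, 62, 88],
    [95, 85],
    [94, 90, 92, 77, 74, 64, 67, 87]],
  ![[98, 42, 40, 50, 52, 83, 80, 84, 88, 62, 60, 70, 72, 93],
    [97, 47, 44, 54, 57, 82, 79, 89],
    [95, 85, 87, 67, 64, 74, 77, 92],
    [94, 90]]]

theorem nt_inj : ∀ t, Function.Injective (nt t) := by
  have : ∀ t k k', nt t k = nt t k' → k = k' := by decide +kernel
  exact fun t k k' h => this t k k' h

theorem nt_symm : ∀ t k t', nt t k = Sum.inl t' → ∃ k', nt t' k' = Sum.inl t := by decide +kernel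

theorem nt_ne : ∀ t k, nt t k ≠ Sum.inl t := by decide +kernel

theorem nt_bt : ∀ t d, (∃ k, nt t k = Sum.inr d) ↔ bt d = t := by decide +kernel

theorem ht_ok : ∀ t k k' t' t'', nt t k = Sum.inl t' → nt t k' = Sum.inl t'' → ht t' ≤ ht t →
    ht t'' ≤ ht t → k = k' := by
  have h : ∀ t k k', Sum.elim (fun t' => decide (ht t' ≤ ht t)) (fun _ => false) (nt t k) = true →
    Sum.elim (fun t' => decide (ht t' ≤ ht t)) (fun _ => false) (nt t k') = true → k = k' := by
    decide +kernel
  intro t k k' t' t'' h1 h2 h3 h4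
  apply h t k k'
  · rw [h1]; simpa using h3
  · rw [h2]; simpa using h4

theorem inc_surj : ∀ e, ∃ t k, inc t k = e := by decide +kernel

theorem te_adj : ∀ e, (∃ k, nt (te e).1 k = Sum.inl (te e).2) ∧ (∃ k, nt (te e).2 k = Sum.inl (te e).1) := by
  decide +kernel

theorem te_lt : ∀ e, (te e).1 < (te e).2 := by decide +kernel

theorem te_inj : ∀ e e', te e = te e' → e = e' := by decide +kernel

theorem inc_te : ∀ t k e, ec (inc t k) = Sum.inl e → (te e).1 = t ∨ (te e).2 = t := by decide +kernel

theorem inc_bt : ∀ t k d, ec (inc t k) = Sum.inr d → bt d = t := by decide +kernel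

theorem cert_valid : ∀ b i, valid (Sum.inr 11) (cert b i) (Sum.inr b.castSucc) = true := by
  decide +kernel

theorem cert_disj : ∀ b i j, i ≠ j → ∀ e ∈ cert b i, e ∉ cert b j := by
  decide +kernel

end Tpl

end template

/-! ### Part 8: the Petersen graph has no nowhere-zero Klein flow; neither has a petal -/

section petersen

set_option synthInstance.maxHeartbeats 400000 in
set_option synthInstance.maxSize 2000 in
set_option maxRecDepth 10000 in
theorem pet_aux : ∀ a : KW, a ≠ 0 → ∀ b : KW, b ≠ 0 → ∀ c : KW, c ≠ 0 → ∀ d : KW, d ≠ 0 →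
    ∀ e : KW, e ≠ 0 → ∀ f : KW, f ≠ 0 →
    a + b = 0 ∨ c + d = 0 ∨ e + f = 0 ∨ a + b + c + d + e = 0 ∨ b + c + e + f = 0 ∨ a + d + f = 0 ∨ a + b + c + d = 0 ∨ b + e + f = 0 ∨ d + f = 0 := by
  decide +kernel

theorem pet (e0 e1 e2 e3 e4 e5 e6 e7 e8 e9 e10 e11 e12 e13 e14 : KW)
    (h0 : e3 + e4 + e5 = 0)
    (h1 : e6 + e7 + e8 = 0)
    (h2 : e9 + e10 + e11 = 0)
    (h3 : e6 + e9 + e12 = 0)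
    (h4 : e3 + e10 + e13 = 0)
    (h5 : e4 + e7 + e14 = 0)
    (h6 : e0 + e11 + e14 = 0)
    (h7 : e1 + e8 + e13 = 0)
    (h8 : e2 + e5 + e12 = 0)
    : e0 = 0 ∨ e1 = 0 ∨ e2 = 0 ∨ e3 = 0 ∨ e4 = 0 ∨ e5 = 0 ∨ e6 = 0 ∨ e7 = 0 ∨ e8 = 0 ∨ e9 = 0 ∨ e10 = 0 ∨ e11 = 0 ∨ e12 = 0 ∨ e13 = 0 ∨ e14 = 0 := by
  by_contra hcon
  simp only [not_or] at hcon
  obtain ⟨n0, n1, n2, n3, n4, n5, n6, n7, n8, n9, n10, n11, n12, n13, n14⟩ := hcon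
  have d2 : e2 = e0 + e1 := by linear_combination h0 + h1 + h2 + h3 + h4 + h5 + h6 + h7 + h8 - (e0 + e1 + e10 + e11 + e12 + e13 + e14 + e3 + e4 + e5 + e6 + e7 + e8 + e9) * KW.two
  have d5 : e5 = e3 + e4 := by linear_combination h0 - (e3 + e4) * KW.two
  have d8 : e8 = e6 + e7 := by linear_combination h1 - (e6 + e7) * KW.two
  have d9 : e9 = e0 + e1 + e3 + e4 + e6 := by linear_combination h1 + h2 + h4 + h5 + h6 + h7 - (e0 + e1 + e10 + e11 + e13 + e14 + e3 + e4 + e6 + e7 + e8) * KW.two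
  have d10 : e10 = e1 + e3 + e6 + e7 := by linear_combination h1 + h4 + h7 - (e1 + e13 + e3 + e6 + e7 + e8) * KW.two
  have d11 : e11 = e0 + e4 + e7 := by linear_combination h5 + h6 - (e0 + e14 + e4 + e7) * KW.two
  have d12 : e12 = e0 + e1 + e3 + e4 := by linear_combination h1 + h2 + h3 + h4 + h5 + h6 + h7 - (e0 + e1 + e10 + e11 + e13 + e14 + e3 + e4 + e6 + e7 + e8 + e9) * KW.two
  have d13 : e13 = e1 + e6 + e7 := by linear_combination h1 + h7 - (e1 + e6 + e7 + e8) * KW.two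
  have d14 : e14 = e4 + e7 := by linear_combination h5 - (e4 + e7) * KW.two
  have := pet_aux e0 n0 e1 n1 e3 n3 e4 n4 e6 n6 e7 n7
  rcases this with h | h | h | h | h | h | h | h | h
  · exact n2 (d2.trans h)
  · exact n5 (d5.trans h)
  · exact n8 (d8.trans h)
  · exact n9 (d9.trans h)
  · exact n10 (d10.trans h)
  · exact n11 (d11.trans h)
  · exact n12 (d12.trans h)
  · exact n13 (d13.trans h)
  · exact n14 (d14.trans h)

theorem Tpl.petal (f : Fin 99 → KW) (hne : ∀ e, f e ≠ 0)
    (hz : ∀ t, f (Tpl.inc t 0) + f (Tpl.inc t 1) + f (Tpl.inc t 2) = 0)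
    (hb : ∀ b : Fin 11, f ⟨39 + 5 * b.1, by omega⟩ + f ⟨39 + 5 * b.1 + 1, by omega⟩ +
      f ⟨39 + 5 * b.1 + 2, by omega⟩ + f ⟨39 + 5 * b.1 + 3, by omega⟩ +
      f ⟨39 + 5 * b.1 + 4, by omega⟩ = 0) : False := by
  have t0 : f 0 + f 1 + f 2 = 0 := hz 0
  have t1 : f 0 + f 3 + f 4 = 0 := hz 1
  have t2 : f 1 + f 80 + f 84 = 0 := hz 2
  have t3 : f 2 + f 90 + f 94 = 0 := hz 3
  have t4 : f 3 + f 79 + f 89 = 0 := hz 4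
  have t5 : f 4 + f 85 + f 95 = 0 := hz 5
  have t6 : f 5 + f 6 + f 7 = 0 := hz 6
  have t7 : f 5 + f 8 + f 9 = 0 := hz 7
  have t8 : f 6 + f 45 + f 49 = 0 := hz 8
  have t9 : f 7 + f 39 + f 55 = 0 := hz 9
  have t10 : f 8 + f 44 + f 54 = 0 := hz 10
  have t11 : f 9 + f 40 + f 50 = 0 := hz 11
  have t12 : f 10 + f 11 + f 12 = 0 := hz 12
  have t13 : f 10 + f 13 + f 14 = 0 := hz 13
  have t14 : f 11 + f 65 + f 69 = 0 := hz 14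
  have t15 : f 12 + f 59 + f 75 = 0 := hz 15
  have t16 : f 13 + f 64 + f 74 = 0 := hz 16
  have t17 : f 14 + f 60 + f 70 = 0 := hz 17
  have t18 : f 15 + f 16 + f 17 = 0 := hz 18
  have t19 : f 15 + f 18 + f 96 = 0 := hz 19
  have t20 : f 16 + f 19 + f 46 = 0 := hz 20
  have t21 : f 17 + f 20 + f 41 = 0 := hz 21
  have t22 : f 18 + f 43 + f 48 = 0 := hz 22
  have t23 : f 19 + f 42 + f 98 = 0 := hz 23
  have t24 : f 20 + f 47 + f 97 = 0 := hz 24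
  have t25 : f 21 + f 22 + f 23 = 0 := hz 25
  have t26 : f 21 + f 24 + f 81 = 0 := hz 26
  have t27 : f 22 + f 25 + f 56 = 0 := hz 27
  have t28 : f 23 + f 26 + f 51 = 0 := hz 28
  have t29 : f 24 + f 53 + f 58 = 0 := hz 29
  have t30 : f 25 + f 52 + f 83 = 0 := hz 30
  have t31 : f 26 + f 57 + f 82 = 0 := hz 31
  have t32 : f 27 + f 28 + f 29 = 0 := hz 32
  have t33 : f 27 + f 30 + f 86 = 0 := hz 33
  have t34 : f 28 + f 31 + f 66 = 0 := hz 34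
  have t35 : f 29 + f 32 + f 61 = 0 := hz 35
  have t36 : f 30 + f 63 + f 68 = 0 := hz 36
  have t37 : f 31 + f 62 + f 88 = 0 := hz 37
  have t38 : f 32 + f 67 + f 87 = 0 := hz 38
  have t39 : f 33 + f 34 + f 35 = 0 := hz 39
  have t40 : f 33 + f 36 + f 91 = 0 := hz 40
  have t41 : f 34 + f 37 + f 76 = 0 := hz 41
  have t42 : f 35 + f 38 + f 71 = 0 := hz 42
  have t43 : f 36 + f 73 + f 78 = 0 := hz 43
  have t44 : f 37 + f 72 + f 93 = 0 := hz 44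
  have t45 : f 38 + f 77 + f 92 = 0 := hz 45
  have b0 : f 39 + f 40 + f 41 + f 42 + f 43 = 0 := hb 0
  have b1 : f 44 + f 45 + f 46 + f 47 + f 48 = 0 := hb 1
  have b2 : f 49 + f 50 + f 51 + f 52 + f 53 = 0 := hb 2
  have b3 : f 54 + f 55 + f 56 + f 57 + f 58 = 0 := hb 3
  have b4 : f 59 + f 60 + f 61 + f 62 + f 63 = 0 := hb 4
  have b5 : f 64 + f 65 + f 66 + f 67 + f 68 = 0 := hb 5
  have b6 : f 69 + f 70 + f 71 + f 72 + f 73 = 0 := hb 6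
  have b7 : f 74 + f 75 + f 76 + f 77 + f 78 = 0 := hb 7
  have b8 : f 79 + f 80 + f 81 + f 82 + f 83 = 0 := hb 8
  have b9 : f 84 + f 85 + f 86 + f 87 + f 88 = 0 := hb 9
  have b10 : f 89 + f 90 + f 91 + f 92 + f 93 = 0 := hb 10
  clear hz hb
  have s00 : (f 41 + f 42 + f 43) + (f 46 + f 47 + f 48) + (f 96 + f 97 + f 98) = 0 := by
    linear_combination t18 + t19 + t20 + t21 + t22 + t23 + t24 - (f 15 + f 16 + f 17 + f 18 + f 19 + f 20) * KW.two
  have s01 : (f 51 + f 52 + f 53) + (f 56 + f 57 + f 58) + (f 81 + f 82 + f 83) = 0 := by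
    linear_combination t25 + t26 + t27 + t28 + t29 + t30 + t31 - (f 21 + f 22 + f 23 + f 24 + f 25 + f 26) * KW.two
  have s10 : (f 61 + f 62 + f 63) + (f 66 + f 67 + f 68) + (f 86 + f 87 + f 88) = 0 := by
    linear_combination t32 + t33 + t34 + t35 + t36 + t37 + t38 - (f 27 + f 28 + f 29 + f 30 + f 31 + f 32) * KW.two
  have s11 : (f 71 + f 72 + f 73) + (f 76 + f 77 + f 78) + (f 91 + f 92 + f 93) = 0 := by
    linear_combination t39 + t40 + t41 + t42 + t43 + t44 + t45 - (f 33 + f 34 + f 35 + f 36 + f 37 + f 38) * KW.two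
  have m0 : (f 41 + f 42 + f 43) + (f 46 + f 47 + f 48) + ((f 51 + f 52 + f 53) + (f 56 + f 57 + f 58)) = 0 := by
    linear_combination t6 + t7 + t8 + t9 + t10 + t11 + b0 + b1 + b2 + b3 - (f 39 + f 40 + f 44 + f 45 + f 49 + f 5 + f 50 + f 54 + f 55 + f 6 + f 7 + f 8 + f 9) * KW.two
  have z0 : f 96 + f 97 + f 98 = f 81 + f 82 + f 83 := by
    linear_combination s00 + s01 - m0 - (f 81 + f 82 + f 83) * KW.two
  have m1 : (f 61 + f 62 + f 63) + (f 66 + f 67 + f 68) + ((f 71 + f 72 + f 73) + (f 76 + f 77 + f 78)) = 0 := by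
    linear_combination t12 + t13 + t14 + t15 + t16 + t17 + b4 + b5 + b6 + b7 - (f 10 + f 11 + f 12 + f 13 + f 14 + f 59 + f 60 + f 64 + f 65 + f 69 + f 70 + f 74 + f 75) * KW.two
  have z1 : f 86 + f 87 + f 88 = f 91 + f 92 + f 93 := by
    linear_combination s10 + s11 - m1 - (f 91 + f 92 + f 93) * KW.two
  have k0 : f 96 + f 97 + f 98 ≠ 0 := by
    intro hz0
    have hz1 := z0.symm.trans hz0
    have q0 : f 41 + f 42 + f 43 = f 46 + f 47 + f 48 := by
      linear_combination s00 - hz0 - (f 46 + f 47 + f 48) * KW.two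
    have q1 : f 51 + f 52 + f 53 = f 56 + f 57 + f 58 := by
      linear_combination s01 - hz1 - (f 56 + f 57 + f 58) * KW.two
    have r0 : f 41 + f 42 + f 43 ≠ 0 := by
      intro hx0
      have hy0 := q0.symm.trans hx0
      rcases pet (f 41) (f 42) (f 43) (f 46) (f 47) (f 48) (f 96) (f 97) (f 98) (f 15) (f 16) (f 17) (f 18) (f 19) (f 20)
            (by linear_combination hy0) (by linear_combination hz0) (by linear_combination t18) (by linear_combination t19) (by linear_combination t20) (by linear_combination t24) (by linear_combination t21) (by linear_combination t23) (by linear_combination t22) with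
        h | h | h | h | h | h | h | h | h | h | h | h | h | h | h <;> exact hne _ h
    have r1 : f 51 + f 52 + f 53 ≠ 0 := by
      intro hx0
      have hy0 := q1.symm.trans hx0
      rcases pet (f 51) (f 52) (f 53) (f 56) (f 57) (f 58) (f 81) (f 82) (f 83) (f 21) (f 22) (f 23) (f 24) (f 25) (f 26)
            (by linear_combination hy0) (by linear_combination hz1) (by linear_combination t25) (by linear_combination t26) (by linear_combination t27) (by linear_combination t31) (by linear_combination t28) (by linear_combination t30) (by linear_combination t29) with
        h | h | h | h | h | h | h | h | h | h | h | h | h | h | h <;> exact hne _ h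
    rcases pet (f 41 + f 42 + f 43) (f 39) (f 40) (f 51 + f 52 + f 53) (f 49) (f 50) (f 5) (f 6) (f 7) (f 8) (f 54) (f 44) (f 9) (f 55) (f 45)
            (by linear_combination b2) (by linear_combination t6) (by linear_combination t10) (by linear_combination t7) (by linear_combination b3 + q1) (by linear_combination t8) (by linear_combination b1 + q0) (by linear_combination t9) (by linear_combination t11) with
      h | h | h | h | h | h | h | h | h | h | h | h | h | h | h
    all_goals first | exact hne _ h | exact r0 h | exact r1 h
  have k1 : f 86 + f 87 + f 88 ≠ 0 := by
    intro hz0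
    have hz1 := z1.symm.trans hz0
    have q0 : f 61 + f 62 + f 63 = f 66 + f 67 + f 68 := by
      linear_combination s10 - hz0 - (f 66 + f 67 + f 68) * KW.two
    have q1 : f 71 + f 72 + f 73 = f 76 + f 77 + f 78 := by
      linear_combination s11 - hz1 - (f 76 + f 77 + f 78) * KW.two
    have r0 : f 61 + f 62 + f 63 ≠ 0 := by
      intro hx0
      have hy0 := q0.symm.trans hx0
      rcases pet (f 61) (f 62) (f 63) (f 66) (f 67) (f 68) (f 86) (f 87) (f 88) (f 27) (f 28) (f 29) (f 30) (f 31) (f 32)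
            (by linear_combination hy0) (by linear_combination hz0) (by linear_combination t32) (by linear_combination t33) (by linear_combination t34) (by linear_combination t38) (by linear_combination t35) (by linear_combination t37) (by linear_combination t36) with
        h | h | h | h | h | h | h | h | h | h | h | h | h | h | h <;> exact hne _ h
    have r1 : f 71 + f 72 + f 73 ≠ 0 := by
      intro hx0
      have hy0 := q1.symm.trans hx0
      rcases pet (f 71) (f 72) (f 73) (f 76) (f 77) (f 78) (f 91) (f 92) (f 93) (f 33) (f 34) (f 35) (f 36) (f 37) (f 38)
            (by linear_combination hy0) (by linear_combination hz1) (by linear_combination t39) (by linear_combination t40) (by linear_combination t41) (by linear_combination t45) (by linear_combination t42) (by linear_combination t44) (by linear_combination t43) with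
        h | h | h | h | h | h | h | h | h | h | h | h | h | h | h <;> exact hne _ h
    rcases pet (f 61 + f 62 + f 63) (f 59) (f 60) (f 71 + f 72 + f 73) (f 69) (f 70) (f 10) (f 11) (f 12) (f 13) (f 74) (f 64) (f 14) (f 75) (f 65)
            (by linear_combination b6) (by linear_combination t12) (by linear_combination t16) (by linear_combination t13) (by linear_combination b7 + q1) (by linear_combination t14) (by linear_combination b5 + q0) (by linear_combination t15) (by linear_combination t17) with
      h | h | h | h | h | h | h | h | h | h | h | h | h | h | h
    all_goals first | exact hne _ h | exact r0 h | exact r1 h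
  rcases pet (f 96 + f 97 + f 98) (f 94) (f 95) (f 86 + f 87 + f 88) (f 84) (f 85) (f 0) (f 1) (f 2) (f 3) (f 89) (f 79) (f 4) (f 90) (f 80)
            (by linear_combination b9) (by linear_combination t0) (by linear_combination t4) (by linear_combination t1) (by linear_combination b10 + z1) (by linear_combination t2) (by linear_combination b8 + z0) (by linear_combination t3) (by linear_combination t5) with
    h | h | h | h | h | h | h | h | h | h | h | h | h | h | h
  all_goals first | exact hne _ h | exact k0 h | exact k1 h

end petersen

/-! ### Part 9: assembly of the petals -/

section assembly

open SimpleGraph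

/-- The blob of a mark. -/
def pbl (n : ℕ) (δ : Fin n × Fin 60) : Option (Fin n × Fin 11) :=
  if h : δ.2.1 / 5 < 11 then some (δ.1, ⟨δ.2.1 / 5, h⟩) else none

/-- The flower with `n` petals. -/
def flower (n : ℕ) {Γ : Type} [Group Γ] {L : ℕ} (H : Host L Γ) (R : ℕ) (hR : 2 ≤ R) (hRL : R ≤ L)
    (hL : 2 * ((R + 1) * (60 * n)) ≤ L) :
    Bld (Fin n × Fin 46) (Fin n × Fin 60) (Option (Fin n × Fin 11)) Γ L R where
  nt t k := Sum.map (fun x => (t.1, x)) (fun x => (t.1, x)) (Tpl.nt t.2 k)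
  bt δ := (δ.1, Tpl.bt δ.2)
  bl := pbl n
  nt_inj := by
    rintro ⟨i, t⟩ k k' h
    refine Tpl.nt_inj t ?_
    refine Sum.map_injective.2 ⟨?_, ?_⟩ h <;> intro a b hab <;> exact (Prod.mk.inj hab).2
  nt_symm := by
    rintro ⟨i, t⟩ k ⟨j, t'⟩ h
    dsimp only at h ⊢
    rcases e : Tpl.nt t k with x | x
    · rw [e] at h
      simp only [Sum.map_inl, Sum.inl.injEq, Prod.mk.injEq] at h
      obtain ⟨rfl, rfl⟩ := h
      obtain ⟨k', hk'⟩ := Tpl.nt_symm t k x e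
      exact ⟨k', by rw [hk']; rfl⟩
    · rw [e] at h
      simp at h
  nt_ne := by
    rintro ⟨i, t⟩ k h
    dsimp only at h
    rcases e : Tpl.nt t k with x | x
    · rw [e] at h
      simp only [Sum.map_inl, Sum.inl.injEq, Prod.mk.injEq] at h
      exact Tpl.nt_ne t k (by rw [e, h.2])
    · rw [e] at h
      simp at h
  nt_bt := by
    rintro ⟨i, t⟩ ⟨j, d⟩
    dsimp only
    constructor
    · rintro ⟨k, h⟩
      rcases e : Tpl.nt t k with x | x
      · rw [e] at h
        simp at h
      · rw [e] at h
        simp only [Sum.map_inr, Sum.inr.injEq, Prod.mk.injEq] at h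
        obtain ⟨rfl, rfl⟩ := h
        rw [(Tpl.nt_bt t x).1 ⟨k, e⟩]
    · intro h
      simp only [Prod.mk.injEq] at h
      obtain ⟨rfl, h⟩ := h
      obtain ⟨k, hk⟩ := (Tpl.nt_bt t d).2 h
      exact ⟨k, by rw [hk]; rfl⟩
  H := H
  p δ := H.pos (R + 1) (60 * δ.1.1 + δ.2.1)
  hR := hR
  hRL := hRL
  far := by
    rintro ⟨i, d⟩ ⟨j, d'⟩ hne l hl
    have hb : ∀ (i : Fin n) (d : Fin 60), 2 * ((R + 1) * (60 * i.1 + d.1)) ≤ L := by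
      intro i d
      refine le_trans ?_ hL
      have : 60 * i.1 + d.1 ≤ 60 * n := by omega
      gcongr
    refine H.pos_far (R + 1) _ _ (by omega) ?_ (hb i d) (hb j d') l (by omega)
    intro h
    apply hne
    ext <;> dsimp only <;> omega

variable {n : ℕ} {Γ : Type} [Group Γ] {L : ℕ} (H : Host L Γ) (R : ℕ) (hR : 2 ≤ R) (hRL : R ≤ L)
    (hL : 2 * ((R + 1) * (60 * n)) ≤ L)

/-- Vertices of the flower. -/
abbrev VF (n : ℕ) (Γ : Type) : Type := VX (Fin n × Fin 46) (Fin n × Fin 60) (Option (Fin n × Fin 11)) Γ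

/-- Membership in a petal. -/
def inP (i : Fin n) : VF n Γ → Prop
  | Sum.inl t => t.1 = i
  | Sum.inr (Sum.inl δ) => δ.1 = i ∧ δ.2.1 < 55
  | Sum.inr (Sum.inr (some y, _)) => y.1 = i
  | Sum.inr (Sum.inr (none, _)) => False

theorem inP_unique {i j : Fin n} {v : VF n Γ} (h : inP i v) (h' : inP j v) : i = j := by
  rcases v with t | δ | ⟨_ | y, γ⟩
  · exact Eq.trans (Eq.symm h) h'
  · exact Eq.trans h.1.symm h'.1
  · exact h.elim
  · exact Eq.trans (Eq.symm h) h'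

theorem pbl_some {i : Fin n} {b : Fin 11} {δ : Fin n × Fin 60} :
    pbl n δ = some (i, b) ↔ δ.1 = i ∧ δ.2.1 / 5 = b.1 := by
  unfold pbl
  split_ifs with h
  · simp [Prod.ext_iff, Fin.ext_iff]
  · simp only [reduceCtorEq, false_iff, not_and]
    intro _ h'
    omega

/-- Values of a flow on the template. -/
def tval (i : Fin n) (c : Sym2 (VF n Γ) → KW) (e : Fin 99) : KW :=
  Sum.elim (fun e => c s(Sum.inl (i, (Tpl.te e).1), Sum.inl (i, (Tpl.te e).2)))
    (fun d => c s(Sum.inl (i, Tpl.bt d), Sum.inr (Sum.inl (i, d)))) (Tpl.ec e)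

theorem tval_inc (i : Fin n) (c : Sym2 (VF n Γ) → KW) (t : Fin 46) (k : Fin 3) :
    c s(Sum.inl (i, t), (flower n H R hR hRL hL).nbr (Sum.inl (i, t)) k) = tval i c (Tpl.inc t k) := by
  rw [Bld.nbr_t_def]
  change c s(Sum.inl (i, t), Sum.elim Sum.inl (fun δ => Sum.inr (Sum.inl δ))
    (Sum.map (fun x => (i, x)) (fun x => (i, x)) (Tpl.nt t k))) = _
  unfold Tpl.nt tval
  rcases e : Tpl.ec (Tpl.inc t k) with x | d
  · simp only [Sum.map_inl, Sum.elim_inl]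
    rcases Tpl.inc_te t k x e with h | h
    · rw [if_pos h, h]
    · have := Tpl.te_lt x
      rw [if_neg (by rw [← h]; exact this.ne), h, Sym2.eq_swap]
  · simp only [Sum.map_inr, Sum.elim_inr, id]
    rw [Tpl.inc_bt t k d e]

theorem tval_dart (i : Fin n) (c : Sym2 (VF n Γ) → KW) (d : Fin 60) (e : Fin 99)
    (h : e.1 = 39 + d.1) :
    tval i c e = c s(Sum.inl (i, Tpl.bt d), Sum.inr (Sum.inl (i, d))) := by
  have : Tpl.ec e = Sum.inr d := by
    unfold Tpl.ec
    rw [dif_neg (by omega)]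
    congr 1
    ext
    simp [h]
  simp [tval, this]

theorem petal_noflow [Finite Γ] (i : Fin n) (c : Sym2 (VF n Γ) → KW) (hc : ∀ e, c e ≠ 0)
    (hs : ∀ v, inP i v → ∑ k, c s(v, (flower n H R hR hRL hL).nbr v k) = 0) : False := by
  classical
  have := Fintype.ofFinite Γ
  refine Tpl.petal (tval i c) ?_ ?_ ?_
  · intro e
    unfold tval
    rcases Tpl.ec e with x | d
    · exact hc _
    · exact hc _
  · intro t
    have := hs (Sum.inl (i, t)) rfl
    rw [Fin.sum_univ_three, tval_inc H R hR hRL hL i c, tval_inc H R hR hRL hL i c,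
      tval_inc H R hR hRL hL i c] at this
    exact this
  · intro b
    have h := (flower n H R hR hRL hL).blob_parity (some (i, b)) c (fun γ => hs _ rfl) (by
      intro δ hδ
      refine hs _ ?_
      have := pbl_some.1 hδ
      refine ⟨this.1, ?_⟩
      have := this.2
      omega)
    have h2 : ∑ j : Fin 5, c s(Sum.inl (i, Tpl.bt ⟨5 * b.1 + j.1, by omega⟩),
        Sum.inr (Sum.inl (i, ⟨5 * b.1 + j.1, by omega⟩))) = 0 := by
      refine Eq.trans ?_ h
      refine Finset.sum_bij (fun j _ => (i, ⟨5 * b.1 + j.1, by omega⟩)) ?_ ?_ ?_ ?_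
      · intro j _
        simp only [Finset.mem_filter, Finset.mem_univ, true_and]
        refine pbl_some.2 ⟨rfl, ?_⟩
        dsimp only
        omega
      · intro j _ j' _ hj
        simp only [Prod.mk.injEq, Fin.mk.injEq, true_and] at hj
        omega
      · rintro ⟨i', d⟩ hd
        simp only [Finset.mem_filter, Finset.mem_univ, true_and] at hd
        obtain ⟨h1, h2⟩ := pbl_some.1 hd
        dsimp only at h1 h2
        refine ⟨⟨d.1 - 5 * b.1, by omega⟩, Finset.mem_univ _, ?_⟩
        ext
        · dsimp only
          rw [h1]
        · dsimp only
          omega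
      · intro j _
        rfl
    rw [Fin.sum_univ_five] at h2
    rw [tval_dart i c ⟨5 * b.1 + 0, by omega⟩ _ (by simp),
      tval_dart i c ⟨5 * b.1 + 1, by omega⟩ _ (by simp [add_assoc]),
      tval_dart i c ⟨5 * b.1 + 2, by omega⟩ _ (by simp [add_assoc]),
      tval_dart i c ⟨5 * b.1 + 3, by omega⟩ _ (by simp [add_assoc]),
      tval_dart i c ⟨5 * b.1 + 4, by omega⟩ _ (by simp [add_assoc])]
    exact h2

/-- A valid walk between different sides has a crossing edge. -/
theorem valid_cross (σ : Fin 46 ⊕ Fin 12 → Prop) : ∀ (l : List (Fin 99)) (u v : Fin 46 ⊕ Fin 12),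
    Tpl.valid u l v = true → ¬ (σ u ↔ σ v) → ∃ e ∈ l, ¬ (σ (Tpl.ends e).1 ↔ σ (Tpl.ends e).2) := by
  intro l
  induction l with
  | nil =>
    intro u v h hne
    simp only [Tpl.valid, decide_eq_true_eq] at h
    exact absurd (by rw [h]) hne
  | cons e l ih =>
    intro u v h hne
    by_cases he : (σ (Tpl.ends e).1 ↔ σ (Tpl.ends e).2)
    · simp only [Tpl.valid, Bool.or_eq_true, Bool.and_eq_true, decide_eq_true_eq] at h
      rcases h with ⟨rfl, h⟩ | ⟨rfl, h⟩
      · obtain ⟨e', h1, h2⟩ := ih _ _ h (by rwa [he] at hne)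
        exact ⟨e', List.mem_cons_of_mem _ h1, h2⟩
      · obtain ⟨e', h1, h2⟩ := ih _ _ h (by rwa [← he] at hne)
        exact ⟨e', List.mem_cons_of_mem _ h1, h2⟩
    · exact ⟨e, List.mem_cons_self, he⟩

theorem ec_inj : Function.Injective Tpl.ec := by
  intro e e' h
  unfold Tpl.ec at h
  split_ifs at h with h1 h2 h2
  · simp only [Sum.inl.injEq, Fin.mk.injEq] at h
    exact Fin.ext h
  · simp only [Sum.inr.injEq, Fin.mk.injEq] at h
    apply Fin.ext
    omega

/-- Template edges as edges of the flower. -/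
def tedge (i : Fin n) (e : Fin 99) : Sym2 (Fin n × Fin 46) ⊕ (Fin n × Fin 60) :=
  Sum.map (fun e => s((i, (Tpl.te e).1), (i, (Tpl.te e).2))) (fun d => (i, d)) (Tpl.ec e)

theorem tedge_inj (i : Fin n) : Function.Injective (tedge i) := by
  refine Function.Injective.comp (Sum.map_injective.2 ⟨?_, ?_⟩) ec_inj
  · intro e e' h
    have h1 := Tpl.te_lt e
    have h2 := Tpl.te_lt e'
    simp only [Sym2.eq_iff, Prod.mk.injEq, true_and] at h
    rcases h with ⟨h3, h4⟩ | ⟨h3, h4⟩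
    · exact Tpl.te_inj _ _ (Prod.ext h3 h4)
    · rw [h3, h4] at h1
      exact absurd h1 h2.asymm
  · intro d d' h
    exact (Prod.mk.inj h).2

theorem flower_conn : (flower n H R hR hRL hL).Conn4 := by
  intro sA sY y y' hy hy'
  obtain ⟨i, b, hib⟩ : ∃ i b, ¬ (sY none ↔ sY (some (i, b))) := by
    by_contra hcon
    push Not at hcon
    have : ∀ y, sY none ↔ sY y := by
      rintro (_ | ⟨i, b⟩)
      · exact Iff.rfl
      · exact hcon i b
    exact hy' ((this y').1 ((this y).2 hy))
  let σ : Fin 46 ⊕ Fin 12 → Prop := Sum.elim (fun t => sA (i, t))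
    (fun b => sY (if h : b.1 < 11 then some (i, ⟨b.1, h⟩) else none))
  have key : ∀ j, ∃ e ∈ Tpl.cert b j, ¬ (σ (Tpl.ends e).1 ↔ σ (Tpl.ends e).2) := by
    intro j
    refine valid_cross σ _ _ _ (Tpl.cert_valid b j) ?_
    have h1 : σ (Sum.inr 11) = sY none := rfl
    have h2 : σ (Sum.inr b.castSucc) = sY (some (i, b)) := by
      simp [σ]
    rw [h1, h2]
    exact hib
  choose e he hc using key
  refine ⟨fun j => tedge i (e j), ?_, ?_⟩
  · refine (tedge_inj i).comp ?_
    intro j j' h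
    by_contra hne
    have := Tpl.cert_disj b j j' hne (e j) (he j)
    rw [h] at this
    exact this (he j')
  · intro j
    have := hc j
    unfold Tpl.ends at this
    change (flower n H R hR hRL hL).Crosses sA sY (Sum.map _ _ (Tpl.ec (e j)))
    rcases hx : Tpl.ec (e j) with x | d
    · rw [hx] at this
      rw [Sum.map_inl]
      change ¬ (sA (i, (Tpl.te x).1) ↔ sA (i, (Tpl.te x).2)) at this
      obtain ⟨⟨k, hk⟩, ⟨k', hk'⟩⟩ := Tpl.te_adj x
      by_cases h1 : sA (i, (Tpl.te x).1)
      · refine ⟨(i, (Tpl.te x).1), (i, (Tpl.te x).2), rfl, ⟨k, ?_⟩, h1, ?_⟩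
        · change Sum.map _ _ (Tpl.nt _ k) = _
          rw [hk]; rfl
        · tauto
      · refine ⟨(i, (Tpl.te x).2), (i, (Tpl.te x).1), Sym2.eq_swap, ⟨k', ?_⟩, by tauto, h1⟩
        change Sum.map _ _ (Tpl.nt _ k') = _
        rw [hk']; rfl
    · rw [hx] at this
      rw [Sum.map_inr]
      exact this

theorem flower_long (u : VF n Γ) (w : (flower n H R hR hRL hL).G.Walk u u) (hw : w.IsCycle) :
    R < w.length := by
  refine (flower n H R hR hRL hL).cycle_long (fun t => Tpl.ht t.2) ?_ u w hw
  rintro ⟨i, t⟩ k k' ⟨j, t'⟩ ⟨j', t''⟩ h1 h2 h3 h4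
  change Sum.map _ _ (Tpl.nt t k) = _ at h1
  change Sum.map _ _ (Tpl.nt t k') = _ at h2
  refine Tpl.ht_ok t k k' t' t'' ?_ ?_ h3 h4
  · rcases e : Tpl.nt t k with x | x
    · rw [e] at h1
      simp only [Sum.map_inl, Sum.inl.injEq, Prod.mk.injEq] at h1
      rw [h1.2]
    · rw [e] at h1
      simp at h1
  · rcases e : Tpl.nt t k' with x | x
    · rw [e] at h2
      simp only [Sum.map_inl, Sum.inl.injEq, Prod.mk.injEq] at h2
      rw [h2.2]
    · rw [e] at h2
      simp at h2

theorem flower_miss [Finite Γ] {u : VF n Γ} (w : (flower n H R hR hRL hL).G.Walk u u)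
    (hw : w.IsCycle) (i : Fin n) (z : VF n Γ) (hz : z ∈ w.support) (hzi : ¬ inP i z) :
    ∃ v, inP i v ∧ v ∉ w.support := by
  classical
  by_contra hcon
  push Not at hcon
  obtain ⟨c, hc, hs⟩ := cycle_flow (flower n H R hR hRL hL).nbr (flower n H R hR hRL hL).adj_iff_nbr
    (flower n H R hR hRL hL).nbr_inj (w.rotate z hz) (hw.rotate hz)
  refine petal_noflow H R hR hRL hL i c hc fun v hv => hs v ?_ ?_
  · rw [Walk.mem_support_rotate_iff]
    exact hcon v hv
  · rintro rfl
    exact hzi hv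

theorem flower_deficit [Finite Γ] {g : ℕ} (hn : n = g + 1) {u : VF n Γ}
    (w : (flower n H R hR hRL hL).G.Walk u u) (hw : w.IsCycle) :
    w.length + g ≤ Nat.card (VF n Γ) := by
  classical
  have h1 : ∃ i₀ : Fin n, ∀ i, i ≠ i₀ → ∃ v, inP i v ∧ v ∉ w.support := by
    by_cases h : ∃ i : Fin n, inP i u
    · obtain ⟨i₀, hi₀⟩ := h
      refine ⟨i₀, fun i hi => flower_miss H R hR hRL hL w hw i u w.start_mem_support ?_⟩
      intro h
      exact hi (inP_unique h hi₀)
    · push Not at h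
      exact ⟨⟨0, by omega⟩, fun i _ =>
        flower_miss H R hR hRL hL w hw i u w.start_mem_support (h i)⟩
  obtain ⟨i₀, h1⟩ := h1
  choose v hv hv' using fun i : {i : Fin n // i ≠ i₀} => h1 i.1 i.2
  have hinj : Function.Injective v := by
    intro i j hij
    apply Subtype.ext
    exact inP_unique (hv i) (hij ▸ hv j)
  have h2 : g ≤ (Set.range v).ncard := by
    rw [← Set.image_univ, Set.ncard_image_of_injective _ hinj, Set.ncard_univ, Nat.card_eq_fintype_card]
    simp [Fintype.card_subtype_compl, hn]
  have h3 := cycle_length_le_s10 w hw (Set.range v)ᶜ (by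
    rintro x hx ⟨i, rfl⟩
    exact hv' i hx)
  have h4 := Set.ncard_add_ncard_compl (Set.range v)
  omega

end assembly

/-- For every g ≥ 5 there is a snark (cyclically 4-edge-connected, girth ≥ 5, cubic,
not 3-edge-colourable) with girth at least g and circumference deficit at least g. -/
theorem stmt_10 (g : ℕ) (hg : 5 ≤ g) :
    ∃ (V : Type) (_ : Fintype V) (G : SimpleGraph V),
      IsCubic G ∧ CyclicallyEdgeConnected G 4 ∧ ¬ Is3EdgeColorable G ∧
      (g : ℕ∞) ≤ G.girth ∧ g ≤ Fintype.card V - circumference G := by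
  classical
  obtain ⟨n, hn⟩ : ∃ n, n = g + 1 := ⟨_, rfl⟩
  obtain ⟨R, hRdef⟩ : ∃ R, R = g +
    Nat.card ((Fin n × Fin 46) ⊕ ((Fin n × Fin 60) ⊕ Option (Fin n × Fin 11))) := ⟨_, rfl⟩
  obtain ⟨L, hLdef⟩ : ∃ L, L = R + 2 * ((R + 1) * (60 * n)) := ⟨_, rfl⟩
  obtain ⟨Γ, hΓ, hfin, ⟨H⟩⟩ := exists_host L
  have hR : 2 ≤ R := by omega
  have hRL : R ≤ L := by omega
  have hL : 2 * ((R + 1) * (60 * n)) ≤ L := by omega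
  have i0 : Fin n := ⟨0, by omega⟩
  have hfV : Fintype (VF n Γ) := Fintype.ofFinite _
  have hne : Nonempty (VF n Γ) := ⟨Sum.inl (i0, 0)⟩
  refine ⟨VF n Γ, hfV, (flower n H R hR hRL hL).G, Bld.cubic _, ?_, ?_, ?_, ?_⟩
  · refine Bld.cyc_conn _ (flower_conn H R hR hRL hL) ?_
    intro u w hw
    have := flower_long H R hR hRL hL u w hw
    omega
  · intro h
    obtain ⟨c, hc, hs⟩ := colour_flow (flower n H R hR hRL hL).nbr
      (flower n H R hR hRL hL).adj_iff_nbr (flower n H R hR hRL hL).nbr_inj h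
    exact petal_noflow H R hR hRL hL i0 c hc fun v _ => hs v
  · have := girth_ge (Bld.cubic (flower n H R hR hRL hL)) g (by
      intro u w hw
      have := flower_long H R hR hRL hL u w hw
      omega)
    exact_mod_cast this
  · have h1 : circumference (flower n H R hR hRL hL).G ≤ Fintype.card (VF n Γ) - g := by
      refine csSup_le' ?_
      rintro m ⟨u, w, hw, rfl⟩
      have := flower_deficit H R hR hRL hL hn w hw
      rw [Nat.card_eq_fintype_card] at this
      exact Nat.le_sub_of_add_le this
    have h2 : g ≤ Fintype.card (VF n Γ) := by
      have h3 := Fintype.card_le_of_injective (fun i : Fin n => (Sum.inl (i, 0) : VF n Γ))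
        (fun i j h => by simpa using h)
      rw [Fintype.card_fin] at h3
      exact le_trans (by omega) h3
    omega
end

section
/- Let G be a bridgeless cubic graph containing m pairwise vertex-disjoint subgraphs H_1, ..., H_m, each of resistance at least k, such that no cycle of G is contained in more than one H_i, and suppose m ≥ 2. Then every cycle of G either is contained in a single H_i or misses at least k vertices of each H_i; consequently, the circumference of G is at most |V(G)| − k(m−1). -/
open SimpleGraph

noncomputable def resistance {V : Type*} (G : SimpleGraph V) : ℕ :=
  sInf {n | ∃ F : Finset (Sym2 V), ↑F ⊆ G.edgeSet ∧ F.card = n ∧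
    Is3EdgeColorable (G.deleteEdges ↑F)}

/-- A cycle (walk) of G is contained in the subgraph H. -/
def CycleInSubgraph {V : Type*} {G : SimpleGraph V} (H : G.Subgraph)
    {u : V} (w : G.Walk u u) : Prop :=
  (∀ e ∈ w.edges, e ∈ H.edgeSet) ∧ ∀ v ∈ w.support, v ∈ H.verts

/-- Proper colouring, phrased at vertices. -/
def PCol {V : Type*} (L : SimpleGraph V) (c : Sym2 V → Fin 3) : Prop :=
  ∀ u a b, L.Adj u a → L.Adj u b → a ≠ b → c s(u, a) ≠ c s(u, b)

theorem pcol_imp {V : Type*} {L : SimpleGraph V} {c : Sym2 V → Fin 3} (h : PCol L c) :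
    IsProper3EdgeColoring L c := by
  intro e₁ h₁ e₂ h₂ hne ⟨v, hv₁, hv₂⟩
  obtain ⟨a, rfl⟩ := hv₁
  obtain ⟨b, rfl⟩ := hv₂
  exact h v a b h₁ h₂ (by rintro rfl; exact hne rfl)

/-- Remove all edges touching R. -/
def offR {V : Type*} (L : SimpleGraph V) (R : Set V) : SimpleGraph V where
  Adj a b := L.Adj a b ∧ a ∉ R ∧ b ∉ R
  symm := ⟨fun _ _ h => ⟨h.1.symm, h.2.2, h.2.1⟩⟩
  loopless := ⟨fun _ h => h.1.ne rfl⟩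

/-- Extending a colouring over a vertex. -/
theorem extend_col {V : Type*} (M : SimpleGraph V) (v : V) (c : Sym2 V → Fin 3)
    (hc : PCol (offR M {v}) c) (f : V → Fin 3)
    (hmiss : ∀ w, M.Adj v w → ∀ t, (offR M {v}).Adj w t → c s(w, t) ≠ f w)
    (hinj : ∀ a b, M.Adj v a → M.Adj v b → a ≠ b → f a ≠ f b) :
    ∃ c', PCol M c' := by
  classical
  let c' : Sym2 V → Fin 3 := fun e => if h : v ∈ e then f (Sym2.Mem.other h) else c e
  have h1 : ∀ w, c' s(v, w) = f w := by
    intro w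
    have h : v ∈ s(v, w) := Sym2.mem_mk_left v w
    have h2 : Sym2.Mem.other h = w := Sym2.congr_right.1 (Sym2.other_spec h)
    simp only [c', dif_pos h, h2]
  have h2 : ∀ u w, u ≠ v → w ≠ v → c' s(u, w) = c s(u, w) := by
    intro u w hu hw
    have : v ∉ s(u, w) := by simp [hu.symm, hw.symm]
    simp only [c', dif_neg this]
  refine ⟨c', fun u a b ha hb hab => ?_⟩
  by_cases hu : u = v
  · subst hu
    rw [h1, h1]
    exact hinj a b ha hb hab
  · by_cases hav : a = v
    · subst hav
      rw [Sym2.eq_swap, h1, h2 u b hu (Ne.symm hab)]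
      exact (hmiss u ha.symm b ⟨hb, hu, Ne.symm hab⟩).symm
    · by_cases hbv : b = v
      · subst hbv
        rw [h2 u a hu hav, Sym2.eq_swap (a := u) (b := b), h1]
        exact hmiss u hb.symm a ⟨ha, hu, hav⟩
      · rw [h2 u a hu hav, h2 u b hu hbv]
        exact hc u a b ⟨ha, hu, hav⟩ ⟨hb, hu, hbv⟩ hab

theorem no_three_ends {V : Type*} [Fintype V] (K : SimpleGraph V)
    (h2 : ∀ u, (K.neighborSet u).ncard ≤ 2) (x y z : V) (hxy : x ≠ y) (hxz : x ≠ z)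
    (hyz : y ≠ z) (hx : (K.neighborSet x).ncard ≤ 1) (hy : (K.neighborSet y).ncard ≤ 1)
    (hz : (K.neighborSet z).ncard ≤ 1) (hry : K.Reachable x y) (hrz : K.Reachable x z) :
    False := by
  classical
  let C := K.connectedComponentMk x
  have hconn := C.connected_toSimpleGraph
  have hcard := hconn.card_vert_le_card_edgeSet_add_one
  have hdeg : ∀ u : C, C.toSimpleGraph.degree u ≤ (K.neighborSet u).ncard := by
    intro u
    rw [← SimpleGraph.card_neighborFinset_eq_degree, ← Set.ncard_coe_finset]
    rw [← Set.ncard_image_of_injective _ Subtype.val_injective]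
    apply Set.ncard_le_ncard _ (Set.toFinite _)
    rintro _ ⟨t, ht, rfl⟩
    have ht' : C.toSimpleGraph.Adj u t := by simpa using ht
    exact ht'
  have hsum := C.toSimpleGraph.sum_degrees_eq_twice_card_edges
  have hx' : x ∈ C := by
    show x ∈ C.supp
    simp [C]
  have hy' : y ∈ C := by
    show y ∈ C.supp
    simpa [C] using hry.symm
  have hz' : z ∈ C := by
    show z ∈ C.supp
    simpa [C] using hrz.symm
  let T : Finset C := {⟨x, hx'⟩, ⟨y, hy'⟩, ⟨z, hz'⟩}
  have hT : T.card = 3 := by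
    rw [Finset.card_eq_three]
    exact ⟨_, _, _, by simpa using hxy, by simpa using hxz, by simpa using hyz, rfl⟩
  have hle : ∑ u, C.toSimpleGraph.degree u + ∑ u : C, (if u ∈ T then 1 else 0) ≤
      ∑ u : C, 2 := by
    rw [← Finset.sum_add_distrib]
    apply Finset.sum_le_sum
    intro u _
    split_ifs with hu
    · simp only [T, Finset.mem_insert, Finset.mem_singleton] at hu
      have := hdeg u
      rcases hu with rfl | rfl | rfl <;> simp at this ⊢ <;> omega
    · have := hdeg u
      have := h2 u
      omega
  simp only [Finset.sum_ite_mem, Finset.univ_inter, Finset.sum_const, Finset.card_univ, hT,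
    smul_eq_mul] at hle
  rw [Nat.card_eq_fintype_card, Nat.card_eq_fintype_card, ← SimpleGraph.edgeFinset_card] at hcard
  omega

/-- Kempe swap: if y is not in the (a,b)-chain of x, then v can be coloured after deleting vz. -/
theorem kempe_swap {V : Type*} (L : SimpleGraph V) (v x y z : V) (c : Sym2 V → Fin 3)
    (hc : PCol (offR L {v}) c) (hxy : x ≠ y)
    (hN : ∀ w, L.Adj v w → w = x ∨ w = y ∨ w = z) (a b : Fin 3) (hab : a ≠ b)
    (hx : ∀ t, (offR L {v}).Adj x t → c s(x, t) ≠ a)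
    (hy : ∀ t, (offR L {v}).Adj y t → c s(y, t) ≠ a)
    (K : SimpleGraph V)
    (hK : ∀ u w, K.Adj u w ↔ (offR L {v}).Adj u w ∧ (c s(u, w) = a ∨ c s(u, w) = b))
    (hr : ¬ K.Reachable x y) :
    ∃ c', PCol (L.deleteEdges {s(v, z)}) c' := by
  classical
  let c' : Sym2 V → Fin 3 := fun e =>
    if ∃ u ∈ e, K.Reachable x u then Equiv.swap a b (c e) else c e
  have hc' : ∀ u w, (offR L {v}).Adj u w →
      c' s(u, w) = if K.Reachable x u then Equiv.swap a b (c s(u, w)) else c s(u, w) := by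
    intro u w huw
    by_cases h : c s(u, w) = a ∨ c s(u, w) = b
    · have hk : K.Adj u w := (hK u w).2 ⟨huw, h⟩
      have hiff : (∃ t ∈ s(u, w), K.Reachable x t) ↔ K.Reachable x u := by
        constructor
        · rintro ⟨t, ht, hxt⟩
          rcases Sym2.mem_iff.1 ht with rfl | rfl
          · exact hxt
          · exact hxt.trans hk.symm.reachable
        · intro hu
          exact ⟨u, Sym2.mem_mk_left _ _, hu⟩
      simp only [c', hiff]
    · push Not at h
      have : Equiv.swap a b (c s(u, w)) = c s(u, w) := Equiv.swap_apply_of_ne_of_ne h.1 h.2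
      simp only [c', this, ite_self]
  have hle : ∀ u w, (offR (L.deleteEdges {s(v, z)}) {v}).Adj u w → (offR L {v}).Adj u w := by
    intro u w h
    exact ⟨(SimpleGraph.deleteEdges_le _) h.1, h.2⟩
  refine extend_col _ v c' ?_ (fun w => if w = x then b else a) ?_ ?_
  · intro u s t hs ht hst
    rw [hc' u s (hle _ _ hs), hc' u t (hle _ _ ht)]
    have := hc u s t (hle _ _ hs) (hle _ _ ht) hst
    split_ifs
    · exact fun h => this ((Equiv.swap a b).injective h)
    · exact this
  · intro w hw t ht
    have hw' := SimpleGraph.deleteEdges_adj.1 hw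
    have ht' := hle _ _ ht
    rw [hc' w t ht']
    rcases hN w hw'.1 with rfl | rfl | rfl
    · have h1 := hx t ht'
      simp only [SimpleGraph.Reachable.refl, if_true]
      intro h
      rw [Equiv.swap_apply_eq_iff, Equiv.swap_apply_right] at h
      exact h1 h
    · simp only [if_neg hr, if_neg hxy.symm]
      exact hy t ht'
    · exact absurd rfl hw'.2
  · intro s t hs ht hst
    have hs' := SimpleGraph.deleteEdges_adj.1 hs
    have ht' := SimpleGraph.deleteEdges_adj.1 ht
    have hsz : s ≠ z := by rintro rfl; exact hs'.2 rfl
    have htz : t ≠ z := by rintro rfl; exact ht'.2 rfl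
    rcases hN s hs'.1 with rfl | rfl | rfl
    · rcases hN t ht'.1 with rfl | rfl | rfl
      · exact absurd rfl hst
      · simpa [hxy.symm] using hab.symm
      · exact absurd rfl htz
    · rcases hN t ht'.1 with rfl | rfl | rfl
      · simpa [hxy.symm] using hab
      · exact absurd rfl hst
      · exact absurd rfl htz
    · exact absurd rfl hsz

theorem ncard_le_of_col {V : Type*} [Fintype V] (S : Set V) (g : V → Fin 3) (T : Finset (Fin 3))
    (h : ∀ u ∈ S, g u ∈ T) (hinj : ∀ u ∈ S, ∀ w ∈ S, g u = g w → u = w) : S.ncard ≤ T.card := by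
  rw [← Set.ncard_coe_finset]
  exact Set.ncard_le_ncard_of_injOn g h (fun u hu w hw => hinj u hu w hw) (Set.toFinite _)

/-- Adding a vertex costs at most one edge. -/
theorem add_vertex {V : Type*} [Fintype V] (L : SimpleGraph V)
    (hL : ∀ u, (L.neighborSet u).ncard ≤ 3) (v : V) (c : Sym2 V → Fin 3)
    (hc : PCol (offR L {v}) c) :
    ∃ z, ∃ c', PCol (L.deleteEdges {s(v, z)}) c' := by
  classical
  have hmiss : ∀ w, ∃ t : Fin 3, L.Adj v w → ∀ u, (offR L {v}).Adj w u → c s(w, u) ≠ t := by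
    intro w
    by_cases hw : L.Adj v w
    · by_contra hcon
      push Not at hcon
      choose hcon1 g hg hgt using hcon
      have hv : v ∉ Set.range g := by
        rintro ⟨i, hi⟩
        have := (hg i).2.2
        exact this hi
      have hginj : Function.Injective g := by
        intro i j hij
        rw [← hgt i, ← hgt j, hij]
      have h1 : (insert v (Set.range g)).ncard = 4 := by
        rw [Set.ncard_insert_of_notMem hv (Set.toFinite _), ← Set.image_univ,
          Set.ncard_image_of_injective _ hginj]
        simp
      have h2 : insert v (Set.range g) ⊆ L.neighborSet w := by
        rintro t (rfl | ⟨i, rfl⟩)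
        · exact hw.symm
        · exact (hg i).1
      have := Set.ncard_le_ncard h2 (Set.toFinite _)
      have := hL w
      omega
    · exact ⟨0, fun h => absurd h hw⟩
  choose f hf using hmiss
  have hle : ∀ z u w, (offR (L.deleteEdges {s(v, z)}) {v}).Adj u w → (offR L {v}).Adj u w := by
    intro z u w h
    exact ⟨(SimpleGraph.deleteEdges_le _) h.1, h.2⟩
  have base : ∀ z, (∀ s t, L.Adj v s → L.Adj v t → s ≠ t → s ≠ z → t ≠ z → f s ≠ f t) →
      ∃ c', PCol (L.deleteEdges {s(v, z)}) c' := by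
    intro z hz
    refine extend_col _ v c ?_ f ?_ ?_
    · intro u s t hs ht hst
      exact hc u s t (hle z _ _ hs) (hle z _ _ ht) hst
    · intro w hw t ht
      exact hf w (SimpleGraph.deleteEdges_le _ hw) t (hle z _ _ ht)
    · intro s t hs ht hst
      have hs' := SimpleGraph.deleteEdges_adj.1 hs
      have ht' := SimpleGraph.deleteEdges_adj.1 ht
      exact hz s t hs'.1 ht'.1 hst (by rintro rfl; exact hs'.2 rfl) (by rintro rfl; exact ht'.2 rfl)
  rcases lt_or_eq_of_le (hL v) with hlt | heq
  · by_cases hne : ∃ z, L.Adj v z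
    · obtain ⟨z, hz⟩ := hne
      refine ⟨z, base z ?_⟩
      intro s t hs ht hst hsz htz
      exfalso
      have h1 : ({s, t, z} : Set V).ncard = 3 := Set.ncard_eq_three.2 ⟨s, t, z, hst, hsz, htz, rfl⟩
      have h2 : ({s, t, z} : Set V) ⊆ L.neighborSet v := by
        rintro w (rfl | rfl | rfl) <;> assumption
      have := Set.ncard_le_ncard h2 (Set.toFinite _)
      omega
    · exact ⟨v, base v fun s t hs => absurd ⟨s, hs⟩ hne⟩
  · obtain ⟨x, y, z, hxy, hxz, hyz, hN⟩ := Set.ncard_eq_three.1 heq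
    have hN' : ∀ w, L.Adj v w ↔ w = x ∨ w = y ∨ w = z := by
      intro w
      have : w ∈ L.neighborSet v ↔ w ∈ ({x, y, z} : Set V) := by rw [hN]
      simpa using this
    have hvx := (hN' x).2 (by simp)
    have hvy := (hN' y).2 (by simp)
    have hvz := (hN' z).2 (by simp)
    by_cases e1 : f x = f y
    · by_cases e2 : f x = f z
      · obtain ⟨b, hb⟩ : ∃ b, f x ≠ b := by
          obtain ⟨b, hb⟩ := exists_ne (f x)
          exact ⟨b, hb.symm⟩
        let K : SimpleGraph V :=
          { Adj := fun u w => (offR L {v}).Adj u w ∧ (c s(u, w) = f x ∨ c s(u, w) = b)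
            symm := ⟨fun u w h => ⟨h.1.symm, by rw [Sym2.eq_swap]; exact h.2⟩⟩
            loopless := ⟨fun u h => h.1.ne rfl⟩ }
        have hK : ∀ u w, K.Adj u w ↔
            (offR L {v}).Adj u w ∧ (c s(u, w) = f x ∨ c s(u, w) = b) := fun u w => Iff.rfl
        have hinj : ∀ u, ∀ s ∈ K.neighborSet u, ∀ t ∈ K.neighborSet u,
            c s(u, s) = c s(u, t) → s = t := by
          intro u s hs t ht hst
          by_contra hne
          exact hc u s t hs.1 ht.1 hne hst
        have h2 : ∀ u, (K.neighborSet u).ncard ≤ 2 := by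
          intro u
          have := ncard_le_of_col (K.neighborSet u) (fun w => c s(u, w)) {f x, b}
            (fun w hw => by simpa using hw.2) (hinj u)
          rwa [Finset.card_pair hb] at this
        have h1 : ∀ u, L.Adj v u → f u = f x → (K.neighborSet u).ncard ≤ 1 := by
          intro u hu hfu
          have := ncard_le_of_col (K.neighborSet u) (fun w => c s(u, w)) {b}
            (fun w hw => by
              have h3 := hf u hu w hw.1
              rw [hfu] at h3
              simpa [h3] using hw.2) (hinj u)
          simpa using this
        by_cases hr : K.Reachable x y
        · have hr' : ¬ K.Reachable x z := fun hr' =>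
            no_three_ends K h2 x y z hxy hxz hyz (h1 x hvx rfl) (h1 y hvy e1.symm)
              (h1 z hvz e2.symm) hr hr'
          refine ⟨y, kempe_swap L v x z y c hc hxz ?_ (f x) b hb (hf x hvx) ?_ K hK hr'⟩
          · intro w hw
            have := (hN' w).1 hw
            tauto
          · rw [e2]; exact hf z hvz
        · refine ⟨z, kempe_swap L v x y z c hc hxy (fun w hw => (hN' w).1 hw) (f x) b hb
            (hf x hvx) ?_ K hK hr⟩
          rw [e1]; exact hf y hvy
      · refine ⟨y, base y ?_⟩
        intro s t hs ht hst hsz htz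
        rw [hN'] at hs ht
        rcases hs with rfl | rfl | rfl <;> rcases ht with rfl | rfl | rfl <;>
          first
          | exact absurd rfl hst
          | exact absurd rfl hsz
          | exact absurd rfl htz
          | exact e2
          | exact Ne.symm e2
    · refine ⟨z, base z ?_⟩
      intro s t hs ht hst hsz htz
      rw [hN'] at hs ht
      rcases hs with rfl | rfl | rfl <;> rcases ht with rfl | rfl | rfl <;>
        first
        | exact absurd rfl hst
        | exact absurd rfl hsz
        | exact absurd rfl htz
        | exact e1
        | exact Ne.symm e1

/-- Adding r vertices costs at most r edges. -/
theorem add_vertices {V : Type*} [Fintype V] [DecidableEq V] (R : Finset V) :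
    ∀ (L : SimpleGraph V), (∀ u, (L.neighborSet u).ncard ≤ 3) →
    (∃ c, PCol (offR L R) c) →
    ∃ F : Finset (Sym2 V), F.card ≤ R.card ∧ ∃ c, PCol (L.deleteEdges F) c := by
  induction R using Finset.induction_on with
  | empty =>
    rintro L hL ⟨c, hc⟩
    refine ⟨∅, le_rfl, c, fun u a b ha hb => hc u a b ?_ ?_⟩
    · exact ⟨SimpleGraph.deleteEdges_le _ ha, by simp, by simp⟩
    · exact ⟨SimpleGraph.deleteEdges_le _ hb, by simp, by simp⟩
  | insert v R hv ih =>
    rintro L hL ⟨c, hc⟩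
    obtain ⟨F, hF, c1, hc1⟩ := ih (offR L {v}) (fun u => le_trans
      (Set.ncard_le_ncard (fun w hw => hw.1) (Set.toFinite _)) (hL u)) ⟨c, by
        have key : ∀ u a, (offR (offR L {v}) R).Adj u a →
            (offR L ((insert v R : Finset V) : Set V)).Adj u a := by
          rintro u a ⟨⟨h1, h2, h3⟩, h4, h5⟩
          refine ⟨h1, ?_, ?_⟩ <;> simp_all
        exact fun u a b ha hb => hc u a b (key u a ha) (key u b hb)⟩
    obtain ⟨z, c2, hc2⟩ := add_vertex (L.deleteEdges F) (fun u => le_trans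
      (Set.ncard_le_ncard (fun w hw => SimpleGraph.deleteEdges_le _ hw) (Set.toFinite _)) (hL u))
      v c1 (by
        have key : ∀ u a, (offR (L.deleteEdges F) {v}).Adj u a →
            ((offR L {v}).deleteEdges F).Adj u a := by
          rintro u a ⟨h1, h2⟩
          rw [SimpleGraph.deleteEdges_adj] at h1 ⊢
          exact ⟨⟨h1.1, h2⟩, h1.2⟩
        exact fun u a b ha hb => hc1 u a b (key u a ha) (key u b hb))
    refine ⟨insert s(v, z) F, ?_, c2, ?_⟩
    · rw [Finset.card_insert_of_notMem hv]
      exact (Finset.card_insert_le _ _).trans (by omega)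
    · have key : ∀ u a, (L.deleteEdges ((insert s(v, z) F : Finset (Sym2 V)) : Set (Sym2 V))).Adj u a →
            ((L.deleteEdges F).deleteEdges {s(v, z)}).Adj u a := by
        intro u a h
        simp only [SimpleGraph.deleteEdges_adj, Finset.coe_insert, Set.mem_insert_iff,
          Set.mem_singleton_iff, not_or] at h ⊢
        tauto
      exact fun u a b ha hb => hc2 u a b (key u a ha) (key u b hb)

theorem cycle_pos {V : Type*} {G : SimpleGraph V} {u : V} (w : G.Walk u u) (hw : w.IsCycle)
    (e : Sym2 V) (he : e ∈ w.edges) :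
    ∃ pos : V → ℕ, (∀ a ∈ w.support, ∀ b ∈ w.support, pos a = pos b → a = b) ∧
      ∀ a b, s(a, b) ∈ w.edges → s(a, b) ≠ e → pos a = pos b + 1 ∨ pos b = pos a + 1 := by
  classical
  have hinj := hw.getVert_injOn
  let g := Function.invFunOn w.getVert {i | 1 ≤ i ∧ i ≤ w.length}
  have hg : ∀ i, 1 ≤ i → i ≤ w.length → g (w.getVert i) = i := by
    intro i h1 h2
    exact hinj.leftInvOn_invFunOn ⟨h1, h2⟩
  have hlen : 1 ≤ w.length := by have := hw.three_le_length; omega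
  have h0 : w.getVert 0 = w.getVert w.length := by simp
  have hg0 : g (w.getVert 0) = w.length := by rw [h0]; exact hg _ hlen le_rfl
  have hsup : ∀ a ∈ w.support, w.getVert (g a) = a ∧ 1 ≤ g a ∧ g a ≤ w.length := by
    intro a ha
    obtain ⟨i, rfl, hi⟩ := SimpleGraph.Walk.mem_support_iff_exists_getVert.1 ha
    rcases Nat.eq_zero_or_pos i with rfl | hpos
    · rw [hg0]; exact ⟨h0.symm, hlen, le_rfl⟩
    · rw [hg i hpos hi]; exact ⟨rfl, hpos, hi⟩
  induction e using Sym2.ind with | _ p q =>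
  obtain ⟨i0, hi0, hi0e⟩ := (w.mk_mem_edges_iff_exists).1 he
  refine ⟨fun v => if i0 < g v then g v else g v + w.length, ?_, ?_⟩
  · intro a ha b hb hab
    obtain ⟨a1, a2, a3⟩ := hsup a ha
    obtain ⟨b1, b2, b3⟩ := hsup b hb
    have : g a = g b := by
      dsimp only at hab
      split_ifs at hab <;> omega
    rw [← a1, ← b1, this]
  · have key : ∀ i < w.length, i ≠ i0 → ∀ a b, w.getVert i = a → w.getVert (i + 1) = b →
        (if i0 < g b then g b else g b + w.length) =
          (if i0 < g a then g a else g a + w.length) + 1 := by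
      rintro i hi hne a b rfl rfl
      rw [hg (i + 1) (by omega) (by omega)]
      rcases Nat.eq_zero_or_pos i with rfl | hpos
      · rw [hg0]; split_ifs <;> omega
      · rw [hg i hpos hi.le]; split_ifs <;> omega
    intro a b hab hne
    obtain ⟨i, hi, hie⟩ := (w.mk_mem_edges_iff_exists).1 hab
    have hii : i ≠ i0 := by
      rintro rfl
      exact hne (hie.symm.trans hi0e)
    rcases Sym2.eq_iff.1 hie with ⟨h1, h2⟩ | ⟨h1, h2⟩
    · right; exact key i hi hii a b h1 h2
    · left; exact key i hi hii b a h1 h2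

theorem missed {V : Type*} [Fintype V] (G : SimpleGraph V)
    (hcubic : ∀ v, (G.neighborSet v).ncard = 3) (H : G.Subgraph)
    (u : V) (w : G.Walk u u) (hw : w.IsCycle) (hn : ¬ CycleInSubgraph H w) :
    resistance H.coe ≤ (H.verts \ {v | v ∈ w.support}).ncard := by
  classical
  obtain ⟨e, he, heH⟩ : ∃ e ∈ w.edges, e ∉ H.edgeSet := by
    by_contra hcon
    push Not at hcon
    refine hn ⟨hcon, fun v hv => ?_⟩
    obtain ⟨e, he, hve⟩ :=
      (SimpleGraph.Walk.mem_support_iff_exists_mem_edges_of_not_nil hw.not_nil).1 hv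
    exact H.mem_verts_of_mem_edge (hcon e he) hve
  obtain ⟨pos, hpinj, hpos⟩ := cycle_pos w hw e he
  set R : Finset V := (H.verts \ {v | v ∈ w.support}).toFinset with hR
  have hLG : ∀ a b, H.spanningCoe.Adj a b → G.Adj a b := fun a b h => H.adj_sub h
  have hdeg : ∀ u, (H.spanningCoe.neighborSet u).ncard ≤ 3 := fun v => by
    rw [← hcubic v]
    exact Set.ncard_le_ncard (fun t ht => hLG v t ht) (Set.toFinite _)
  let sm : Sym2 V → ℕ := Sym2.lift ⟨fun a b => pos a + pos b, fun a b => add_comm _ _⟩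
  let col : Sym2 V → Fin 3 := fun e =>
    if e ∈ w.edges then ⟨(sm e / 2) % 2, by omega⟩ else 2
  have hcol : PCol (offR H.spanningCoe R) col := by
    intro v a b ha hb hab
    have hvw : v ∈ w.support := by
      by_contra hcon
      apply ha.2.1
      simp only [hR, Set.coe_toFinset]
      exact ⟨H.edge_vert ha.1, hcon⟩
    have hne : ∀ t, H.Adj v t → s(v, t) ≠ e := by
      rintro t ht rfl
      exact heH ht
    by_cases h1 : s(v, a) ∈ w.edges
    · by_cases h2 : s(v, b) ∈ w.edges
      · have p1 := hpos v a h1 (hne a ha.1)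
        have p2 := hpos v b h2 (hne b hb.1)
        have p3 : pos a ≠ pos b := fun h => hab (hpinj a (w.snd_mem_support_of_mem_edges h1) b
          (w.snd_mem_support_of_mem_edges h2) h)
        simp only [col, if_pos h1, if_pos h2, ne_eq, Fin.mk.injEq, sm, Sym2.lift_mk]
        omega
      · simp only [col, if_pos h1, if_neg h2, ne_eq, Fin.ext_iff]
        change ¬ _ = 2
        omega
    · by_cases h2 : s(v, b) ∈ w.edges
      · simp only [col, if_neg h1, if_pos h2, ne_eq, Fin.ext_iff]
        change ¬ 2 = _
        omega
      · exfalso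
        have c2 := hw.ncard_neighborSet_toSubgraph_eq_two hvw
        have c3 : (insert a (insert b (w.toSubgraph.neighborSet v))).ncard = 4 := by
          have hb' : b ∉ w.toSubgraph.neighborSet v := fun h =>
            h2 (SimpleGraph.Walk.adj_toSubgraph_iff_mem_edges.1 h)
          have ha' : a ∉ w.toSubgraph.neighborSet v := fun h =>
            h1 (SimpleGraph.Walk.adj_toSubgraph_iff_mem_edges.1 h)
          rw [Set.ncard_insert_of_notMem (by simp only [Set.mem_insert_iff]; tauto) (Set.toFinite _),
            Set.ncard_insert_of_notMem hb' (Set.toFinite _), c2]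
        have c4 : insert a (insert b (w.toSubgraph.neighborSet v)) ⊆ G.neighborSet v := by
          rintro t (rfl | rfl | ht)
          · exact hLG _ _ ha.1
          · exact hLG _ _ hb.1
          · exact w.toSubgraph.adj_sub ht
        have := Set.ncard_le_ncard c4 (Set.toFinite _)
        rw [hcubic v] at this
        omega
  obtain ⟨F, hF, c, hc⟩ := add_vertices R H.spanningCoe hdeg ⟨col, hcol⟩
  have hRc : R.card = (H.verts \ {v | v ∈ w.support}).ncard := by
    rw [Set.ncard_eq_toFinset_card']
  rw [← hRc]
  refine le_trans ?_ hF
  let φ : Sym2 H.verts → Sym2 V := Sym2.map Subtype.val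
  have hφ : Function.Injective φ := Sym2.map.injective Subtype.val_injective
  let F' : Finset (Sym2 H.verts) := {e | e ∈ H.coe.edgeSet ∧ φ e ∈ F}
  have hF' : F'.card ≤ F.card :=
    Finset.card_le_card_of_injOn φ (fun e he => by
      simp only [F', Finset.coe_filter, Set.mem_setOf_eq] at he
      exact he.2.2) hφ.injOn
  refine le_trans (Nat.sInf_le ?_) hF'
  refine ⟨F', fun e he => ?_, rfl, c ∘ φ, pcol_imp ?_⟩
  · simp only [F', Finset.coe_filter, Set.mem_setOf_eq] at he
    exact he.2.1
  · have key : ∀ a b, (H.coe.deleteEdges F').Adj a b →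
        (H.spanningCoe.deleteEdges F).Adj a.1 b.1 := by
      intro a b h
      rw [SimpleGraph.deleteEdges_adj] at h ⊢
      refine ⟨h.1, fun hm => h.2 ?_⟩
      simp only [F', Finset.coe_filter, Set.mem_setOf_eq]
      exact ⟨Finset.mem_univ _, h.1, hm⟩
    intro v a b ha hb hab
    exact hc v a b (key _ _ ha) (key _ _ hb) (fun h => hab (Subtype.ext h))

/-- If a bridgeless cubic graph G contains m ≥ 2 pairwise vertex-disjoint subgraphs of
resistance at least k such that no cycle is contained in more than one of them, then
every cycle of G is contained in one of them or misses at least k vertices of each of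
them, and consequently the circumference of G is at most |V(G)| − k(m−1). -/
theorem stmt_14 {V : Type*} [Fintype V] (G : SimpleGraph V)
    (hcubic : ∀ v, (G.neighborSet v).ncard = 3)
    (hbridgeless : ∀ e ∈ G.edgeSet, ¬ G.IsBridge e)
    (m k : ℕ) (hm : 2 ≤ m) (H : Fin m → G.Subgraph)
    (hdisj : ∀ i j, i ≠ j → Disjoint (H i).verts (H j).verts)
    (hres : ∀ i, k ≤ resistance (H i).coe)
    (honce : ∀ (u : V) (w : G.Walk u u), w.IsCycle →
      ∀ i j, CycleInSubgraph (H i) w → CycleInSubgraph (H j) w → i = j) :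
    (∀ (u : V) (w : G.Walk u u), w.IsCycle →
      (∃ i, CycleInSubgraph (H i) w) ∨
        ∀ i, k ≤ ((H i).verts \ {v | v ∈ w.support}).ncard) ∧
    circumference G ≤ Fintype.card V - k * (m - 1) := by
  classical
  have hmain : ∀ (u : V) (w : G.Walk u u), w.IsCycle → ∀ i, ¬ CycleInSubgraph (H i) w →
      k ≤ ((H i).verts \ {v | v ∈ w.support}).ncard := fun u w hw i hi =>
    (hres i).trans (missed G hcubic (H i) u w hw hi)
  refine ⟨fun u w hw => ?_, ?_⟩
  · by_cases h : ∃ i, CycleInSubgraph (H i) w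
    · exact Or.inl h
    · exact Or.inr fun i => hmain u w hw i fun hi => h ⟨i, hi⟩
  · apply csSup_le'
    rintro n ⟨u, w, hw, rfl⟩
    obtain ⟨i0, hi0⟩ : ∃ i0, ∀ i, i ≠ i0 → ¬ CycleInSubgraph (H i) w := by
      by_cases h : ∃ i, CycleInSubgraph (H i) w
      · obtain ⟨i0, hi0⟩ := h
        exact ⟨i0, fun i hi hc => hi (honce u w hw i i0 hc hi0)⟩
      · exact ⟨⟨0, by omega⟩, fun i _ hc => h ⟨i, hc⟩⟩
    let M : Fin m → Finset V := fun i => ((H i).verts \ {v | v ∈ w.support}).toFinset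
    have hM : ∀ i ∈ Finset.univ.erase i0, k ≤ (M i).card := by
      intro i hi
      have := hmain u w hw i (hi0 i (Finset.ne_of_mem_erase hi))
      rwa [Set.ncard_eq_toFinset_card'] at this
    have hsum := Finset.card_nsmul_le_sum _ _ _ hM
    rw [← Finset.card_biUnion] at hsum
    · rw [Finset.card_erase_of_mem (Finset.mem_univ _), Finset.card_univ, Fintype.card_fin,
        smul_eq_mul, mul_comm] at hsum
      have hdis : Disjoint ((Finset.univ.erase i0).biUnion M) w.support.tail.toFinset := by
        rw [Finset.disjoint_left]
        intro v hv hv'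
        simp only [Finset.mem_biUnion, M, Set.mem_toFinset] at hv
        obtain ⟨i, _, hvi⟩ := hv
        exact hvi.2 (List.mem_of_mem_tail (List.mem_toFinset.1 hv'))
      have h1 := Finset.card_le_univ ((Finset.univ.erase i0).biUnion M ∪ w.support.tail.toFinset)
      rw [Finset.card_union_of_disjoint hdis, List.toFinset_card_of_nodup hw.support_nodup] at h1
      simp only [List.length_tail, SimpleGraph.Walk.length_support] at h1
      omega
    · intro i _ j _ hij
      rw [Function.onFun, Finset.disjoint_left]
      intro v hv hv'
      simp only [M, Set.mem_toFinset] at hv hv'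
      exact Set.disjoint_left.1 (hdisj i j hij) hv.1 hv'.1
end
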